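/- arXiv:2009.06362 — 2 statements merged into one kernel-verified Lean document; each statement's English description precedes it below -/
import Mathlib

section
/- Interior Hessian estimate for the positive σ_k-Yamabe equation (a priori form of Theorem 1.1). Let n ≥ 3, let Ω ⊆ ℝⁿ be a domain, let 2 ≤ k ≤ n and p > kn/2, and let f : Ω×(0,∞)×ℝⁿ → ℝ be positive and C¹ with locally Lipschitz first derivatives. Fix concentric open balls B_R ⊂ B_{2R} with closure(B_{2R}) ⊂ Ω and a constant M > 0. Then there exists a constant C, depending only on n, k, p, R, f and M, such that every positive u ∈ C²(Ω) satisfying σ_k(A_u(x)) = f(x,u(x),∇u(x))^k and λ(A_u(x)) ∈ Γ_k^+ for every x ∈ Ω, together with ‖ln u‖_{W^{2,p}(B_{2R})} ≤ M, obeys sup_{x ∈ B_R} |∇²u(x)| ≤ C. -/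
open MeasureTheory Metric Set Matrix

noncomputable section

/-- The `k`-th elementary symmetric polynomial of the eigenvalues of an `n × n` real
matrix, defined via the coefficients of the characteristic polynomial. -/
def esymmMat {n : ℕ} (k : ℕ) (A : Matrix (Fin n) (Fin n) ℝ) : ℝ :=
  (-1 : ℝ) ^ k * A.charpoly.coeff (n - k)

/-- `λ(A) ∈ Γ_k^+`, i.e. `σ_j(A) > 0` for all `1 ≤ j ≤ k`. -/
def GammaPlus {n : ℕ} (k : ℕ) (A : Matrix (Fin n) (Fin n) ℝ) : Prop :=
  ∀ j : ℕ, 1 ≤ j → j ≤ k → 0 < esymmMat j A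

/-- The Newton tensors `T_0(A) = I`, `T_j(A) = σ_j(A) I - T_{j-1}(A) A`. -/
def newtonT {n : ℕ} : ℕ → Matrix (Fin n) (Fin n) ℝ → Matrix (Fin n) (Fin n) ℝ
  | 0, _ => 1
  | (j + 1), A => esymmMat (j + 1) A • (1 : Matrix (Fin n) (Fin n) ℝ) - newtonT j A * A

/-- `i`-th partial derivative. -/
def pd {n : ℕ} (i : Fin n) (w : (Fin n → ℝ) → ℝ) (x : Fin n → ℝ) : ℝ :=
  fderiv ℝ w x (Pi.single i 1)

/-- Gradient as a vector. -/
def grad {n : ℕ} (w : (Fin n → ℝ) → ℝ) (x : Fin n → ℝ) : Fin n → ℝ :=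
  fun i => pd i w x

/-- Hessian matrix. -/
def hess {n : ℕ} (w : (Fin n → ℝ) → ℝ) (x : Fin n → ℝ) : Matrix (Fin n) (Fin n) ℝ :=
  Matrix.of fun i j => pd i (pd j w) x

/-- Squared Euclidean norm of a vector. -/
def normSq {n : ℕ} (ξ : Fin n → ℝ) : ℝ := ∑ i, ξ i ^ 2

/-- Euclidean norm of a vector. -/
def vnorm {n : ℕ} (ξ : Fin n → ℝ) : ℝ := Real.sqrt (∑ i, ξ i ^ 2)

/-- Operator norm of a matrix, viewed as a linear map between Euclidean spaces. -/
def matNorm {n : ℕ} (M : Matrix (Fin n) (Fin n) ℝ) : ℝ :=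
  ‖LinearMap.toContinuousLinearMap (Matrix.toEuclideanLin M)‖

/-- Laplacian. -/
def lapl {n : ℕ} (w : (Fin n → ℝ) → ℝ) (x : Fin n → ℝ) : ℝ := ∑ l, pd l (pd l w) x

/-- `W^{2,p}` norm (with classical derivatives) on a set. -/
def W2pNorm {n : ℕ} (p : ℝ) (w : (Fin n → ℝ) → ℝ) (B : Set (Fin n → ℝ)) : ℝ :=
  (∫ x in B, (|w x| ^ p + vnorm (grad w x) ^ p + matNorm (hess w x) ^ p)) ^ (1 / p)

/-- `C^{1,1}_loc` on a set: continuously differentiable with locally Lipschitz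
first derivatives. -/
def C11On {E F : Type*} [NormedAddCommGroup E] [NormedSpace ℝ E]
    [NormedAddCommGroup F] [NormedSpace ℝ F] (f : E → F) (s : Set E) : Prop :=
  ContDiffOn ℝ 1 f s ∧
    ∀ x ∈ s, ∃ (K : NNReal) (t : Set E), t ∈ nhdsWithin x s ∧
      LipschitzOnWith K (fderivWithin ℝ f s) t

/-- First order difference quotient `∇_l^h`. -/
def dq {n : ℕ} (l : Fin n) (h : ℝ) (w : (Fin n → ℝ) → ℝ) (x : Fin n → ℝ) : ℝ :=
  (w (x + h • (Pi.single l 1 : Fin n → ℝ)) - w x) / h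

/-- Second order difference quotient `Δ_{ll}^h`. -/
def ddq {n : ℕ} (l : Fin n) (h : ℝ) (w : (Fin n → ℝ) → ℝ) (x : Fin n → ℝ) : ℝ :=
  (w (x + h • (Pi.single l 1 : Fin n → ℝ)) - 2 * w x + w (x - h • (Pi.single l 1 : Fin n → ℝ))) / h ^ 2

/-- `L^s` seminorm (as an extended real number) of a function on a set. -/
def lpN {n : ℕ} (s : ℝ) (w : (Fin n → ℝ) → ℝ) (S : Set (Fin n → ℝ)) : ENNReal :=
  (∫⁻ x in S, ENNReal.ofReal (|w x| ^ s)) ^ (1 / s)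

end

/-!
Write `A = A_u`, `τ` for the trace of its Newton tensor `T`, and `Δ_h` for the discrete Laplacian
with step `h`. Since `n < p`, Morrey's inequality turns the `W^{2,p}` bound on `log u` into
`C¹` bounds on `u`. As `u` is only `C²`, the equation is differenced rather than differentiated:
Gårding's inequality, which encodes the concavity of `σ_k^{1/k}`, bounds `k f^{k-1} Δ_h f` by
`tr (T Δ_h A)`. At a maximum of `η² Δ_h u`, with `η` a cutoff function, the second derivative test
controls `tr (T ∇² Δ_h u)`, while the convexity of `(s, a) ↦ a² / (2s)` makes the term
`τ Δ_h (|∇u|² / (2u))` at least a multiple of `τ |∇²u|²`. The differenced right-hand side costs only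
a multiple of `|∇²u|²`, so either `τ` is large and `|∇²u|²` is absorbed, or `τ` is bounded; in the
latter case Maclaurin-type inequalities and the lower bound on `f` already bound `tr A`. Either way
`η² Δ_h u` is bounded independently of `h`, hence so is `Δu`, and in `Γ_2^+` the trace of `A` bounds
all its entries.
-/

/-! ### Elementary symmetric functions and Gårding's inequality -/

/-- The `j`-th elementary symmetric function `e_j` of the values of `x` on `S`. The finite set is
kept as an argument because the Newton tensor of a diagonal matrix involves `S.erase i`. -/
def esymmOn {ι R : Type*} [CommSemiring R] (S : Finset ι) (j : ℕ) (x : ι → R) : R :=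
  (S.val.map x).esymm j

/-- The derivative of `e_j` at `x` in the direction `b`. -/
def esymmDeriv {ι R : Type*} [DecidableEq ι] [CommSemiring R] (S : Finset ι) :
    ℕ → (ι → R) → (ι → R) → R
  | 0, _, _ => 0
  | j + 1, x, b => ∑ i ∈ S, b i * esymmOn (S.erase i) j x

section EsymmSemiring

variable {ι R : Type*} [CommSemiring R]

theorem esymmOn_zero (S : Finset ι) (x : ι → R) : esymmOn S 0 x = 1 := by
  simp [esymmOn, Multiset.esymm]

theorem esymmOn_empty_succ (j : ℕ) (x : ι → R) : esymmOn ∅ (j + 1) x = 0 := by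
  simp [esymmOn, Multiset.esymm, Multiset.powersetCard_zero_right]

theorem esymmOn_comp_perm [Fintype ι] (j : ℕ) (x : ι → R) (s : Equiv.Perm ι) :
    esymmOn Finset.univ j (x ∘ s) = esymmOn Finset.univ j x := by
  rw [esymmOn, esymmOn, ← Multiset.map_map, Multiset.map_univ_val_equiv]

variable [DecidableEq ι]

theorem esymmOn_insert {S : Finset ι} {i : ι} (hi : i ∉ S) (j : ℕ) (x : ι → R) :
    esymmOn (insert i S) (j + 1) x = esymmOn S (j + 1) x + x i * esymmOn S j x := by
  simp only [esymmOn, Finset.insert_val_of_notMem hi, Multiset.map_cons, Multiset.esymm,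
    Multiset.powersetCard_cons, Multiset.map_add, Multiset.sum_add, Multiset.map_map,
    Function.comp_def, Multiset.prod_cons, Multiset.sum_map_mul_left]

theorem esymmOn_eq_add_erase {S : Finset ι} {i : ι} (hi : i ∈ S) (j : ℕ) (x : ι → R) :
    esymmOn S (j + 1) x = esymmOn (S.erase i) (j + 1) x + x i * esymmOn (S.erase i) j x := by
  rw [← esymmOn_insert (Finset.notMem_erase i S), Finset.insert_erase hi]

theorem esymmDeriv_eq_add_erase {S : Finset ι} {i : ι} (hi : i ∈ S) (j : ℕ) (x b : ι → R) :
    esymmDeriv S (j + 1) x b = esymmDeriv (S.erase i) (j + 1) x b + b i * esymmOn (S.erase i) j x +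
      x i * esymmDeriv (S.erase i) j x b := by
  have hsplit : esymmDeriv S (j + 1) x b = b i * esymmOn (S.erase i) j x +
      ∑ l ∈ S.erase i, b l * esymmOn (S.erase l) j x :=
    (Finset.add_sum_erase S _ hi).symm
  rcases j with _ | j
  · rw [hsplit, add_comm (b i * _)]
    simp only [esymmDeriv, esymmOn_zero, mul_zero, mul_one, add_zero]
  have herase : ∀ l ∈ S.erase i, b l * esymmOn (S.erase l) (j + 1) x =
      b l * esymmOn ((S.erase i).erase l) (j + 1) x +
        x i * (b l * esymmOn ((S.erase i).erase l) j x) := fun l hl => by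
    have hil : i ∈ S.erase l := Finset.mem_erase.2 ⟨(Finset.ne_of_mem_erase hl).symm, hi⟩
    rw [esymmOn_eq_add_erase hil, Finset.erase_right_comm]
    ring
  rw [hsplit, Finset.sum_congr rfl herase, Finset.sum_add_distrib, ← Finset.mul_sum, esymmDeriv,
    esymmDeriv]
  ring

theorem succ_mul_esymmOn_succ (S : Finset ι) (x : ι → R) (j : ℕ) :
    ((j : R) + 1) * esymmOn S (j + 1) x = ∑ i ∈ S, x i * esymmOn (S.erase i) j x := by
  induction S using Finset.induction_on generalizing j with
  | empty => simp [esymmOn_empty_succ]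
  | insert i S hi ih =>
    have hmem := Finset.mem_insert_self i S
    change _ = esymmDeriv (insert i S) (j + 1) x x
    rw [esymmDeriv_eq_add_erase hmem, Finset.erase_insert hi, esymmOn_insert hi]
    rcases j with _ | j
    · have hsum := ih 0
      simp only [esymmOn_zero, Nat.cast_zero, zero_add, one_mul, mul_one] at hsum
      simp [esymmDeriv, esymmOn_zero, hsum]
    · simp only [esymmDeriv, ← ih]
      push_cast
      ring

theorem add_two_mul_esymmOn (S : Finset ι) (x : ι → R) (j : ℕ) :
    ((j : R) + 2) * esymmOn S (j + 2) x = ∑ i ∈ S, x i * esymmOn (S.erase i) (j + 1) x := by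
  rw [← succ_mul_esymmOn_succ]
  push_cast
  ring

omit [DecidableEq ι] in
theorem esymmOn_one (S : Finset ι) (x : ι → R) : esymmOn S 1 x = ∑ i ∈ S, x i := by
  classical
  simpa [esymmOn_zero] using succ_mul_esymmOn_succ S x 0

-- This is the derivative of Euler's identity `add_two_mul_esymmOn` in the direction `b`.
theorem add_two_mul_esymmDeriv (S : Finset ι) (x b : ι → R) (j : ℕ) :
    ((j : R) + 2) * esymmDeriv S (j + 2) x b =
      ∑ i ∈ S, (b i * esymmOn (S.erase i) (j + 1) x +
        x i * esymmDeriv (S.erase i) (j + 1) x b) := by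
  have hswap : ((j : R) + 1) * esymmDeriv S (j + 2) x b =
      ∑ i ∈ S, x i * esymmDeriv (S.erase i) (j + 1) x b := by
    simp only [esymmDeriv, Finset.mul_sum]
    rw [Finset.sum_comm' (t' := S) (s' := fun l => S.erase l)
      (fun i l => by simp only [Finset.mem_erase]; tauto)]
    refine Finset.sum_congr rfl fun l _ => ?_
    rw [mul_left_comm, succ_mul_esymmOn_succ, Finset.mul_sum]
    refine Finset.sum_congr rfl fun i _ => ?_
    rw [Finset.erase_right_comm]
    ring
  rw [Finset.sum_add_distrib, ← hswap, esymmDeriv]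
  ring

end EsymmSemiring

section EsymmRing

variable {ι R : Type*} [CommRing R] [DecidableEq ι]

omit [DecidableEq ι] in
theorem two_mul_esymmOn_two (S : Finset ι) (x : ι → R) :
    2 * esymmOn S 2 x = esymmOn S 1 x ^ 2 - ∑ i ∈ S, x i ^ 2 := by
  classical
  have herase : ∀ i ∈ S, x i * esymmOn (S.erase i) 1 x = x i * esymmOn S 1 x - x i ^ 2 :=
    fun i hi => by rw [esymmOn_eq_add_erase hi, esymmOn_zero]; ring
  have heuler := add_two_mul_esymmOn S x 0
  rw [zero_add, Finset.sum_congr rfl herase, Finset.sum_sub_distrib, ← Finset.sum_mul,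
    ← esymmOn_one] at heuler
  rw [sq, ← heuler]
  simp

theorem sum_esymmOn_erase (S : Finset ι) (x : ι → R) (j : ℕ) :
    ∑ i ∈ S, esymmOn (S.erase i) j x = ((S.card : R) - j) * esymmOn S j x := by
  rcases j with _ | j
  · simp [esymmOn_zero]
  have herase : ∀ i ∈ S, esymmOn (S.erase i) (j + 1) x =
      esymmOn S (j + 1) x - x i * esymmOn (S.erase i) j x :=
    fun i hi => by rw [esymmOn_eq_add_erase hi]; ring
  rw [Finset.sum_congr rfl herase, Finset.sum_sub_distrib, ← succ_mul_esymmOn_succ]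
  simp only [Finset.sum_const, nsmul_eq_mul]
  push_cast
  ring

theorem add_two_mul_esymmDeriv_sub (S : Finset ι) (x b : ι → R) (k : ℕ) :
    ((k : R) + 2) * (esymmDeriv S (k + 2) x b * esymmOn S (k + 1) x -
        esymmOn S (k + 2) x * esymmDeriv S (k + 1) x b) =
      ∑ i ∈ S, (b i * esymmOn (S.erase i) (k + 1) x ^ 2 +
        x i ^ 2 * (esymmDeriv (S.erase i) (k + 1) x b * esymmOn (S.erase i) k x -
          esymmOn (S.erase i) (k + 1) x * esymmDeriv (S.erase i) k x b)) := by
  rw [mul_sub, ← mul_assoc, ← mul_assoc, add_two_mul_esymmDeriv, add_two_mul_esymmOn,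
    Finset.sum_mul, Finset.sum_mul, ← Finset.sum_sub_distrib]
  refine Finset.sum_congr rfl fun i hi => ?_
  rw [esymmOn_eq_add_erase hi, esymmDeriv_eq_add_erase hi]
  ring

end EsymmRing

/-- The values of `x` on `S` lie in the Gårding cone `Γ_k`; the condition at `j = 0` is void. -/
def InGardingCone {ι R : Type*} [CommSemiring R] [LT R] (S : Finset ι) (k : ℕ) (x : ι → R) :
    Prop :=
  ∀ j ≤ k, 0 < esymmOn S j x

theorem InGardingCone.mono {ι R : Type*} [CommSemiring R] [LT R] {S : Finset ι} {k l : ℕ}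
    {x : ι → R} (hx : InGardingCone S k x) (hl : l ≤ k) : InGardingCone S l x :=
  fun j hj => hx j (hj.trans hl)

theorem InGardingCone.prod_quotient {ι R : Type*} [Field R] [Preorder R] {S : Finset ι} {k : ℕ}
    {x : ι → R} (hx : InGardingCone S k x) :
    ∏ j ∈ Finset.range k, esymmOn S (j + 1) x / esymmOn S j x = esymmOn S k x := by
  induction k with
  | zero => simp [esymmOn_zero]
  | succ k ih =>
    rw [Finset.prod_range_succ, ih (hx.mono k.le_succ), mul_div_cancel₀ _ (hx k k.le_succ).ne']

section GardingCone

variable {ι R : Type*} [DecidableEq ι] [Field R] [LinearOrder R] [IsStrictOrderedRing R]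
  {S : Finset ι} {k : ℕ} {x a b : ι → R}

omit [DecidableEq ι] in
theorem esymmOn_mul_esymmOn_le_sq (S : Finset ι) (x : ι → R) (j : ℕ) :
    esymmOn S j x * esymmOn S (j + 2) x ≤ esymmOn S (j + 1) x ^ 2 := by
  classical
  induction j generalizing S with
  | zero =>
    have hsum : 0 ≤ ∑ i ∈ S, x i ^ 2 := Finset.sum_nonneg fun i _ => sq_nonneg _
    rw [esymmOn_zero, one_mul, zero_add, zero_add]
    nlinarith [two_mul_esymmOn_two S x, sq_nonneg (esymmOn S 1 x)]
  | succ j ih =>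
    set p := esymmOn S (j + 1) x * esymmOn S (j + 3) x
    have hdiff : ((j : R) + 2) * esymmOn S (j + 2) x ^ 2 - ((j : R) + 3) * p =
        ∑ i ∈ S, x i ^ 2 * (esymmOn (S.erase i) (j + 1) x ^ 2
          - esymmOn (S.erase i) j x * esymmOn (S.erase i) (j + 2) x) := by
      have heuler : ((j : R) + 3) * esymmOn S (j + 3) x =
          ∑ i ∈ S, x i * esymmOn (S.erase i) (j + 2) x := by
        rw [← add_two_mul_esymmOn]; push_cast; ring
      calc ((j : R) + 2) * esymmOn S (j + 2) x ^ 2 - ((j : R) + 3) * p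
          = ((j : R) + 2) * esymmOn S (j + 2) x * esymmOn S (j + 2) x
            - ((j : R) + 3) * esymmOn S (j + 3) x * esymmOn S (j + 1) x := by ring
        _ = _ := by
          rw [heuler, add_two_mul_esymmOn, Finset.sum_mul, Finset.sum_mul,
            ← Finset.sum_sub_distrib]
          refine Finset.sum_congr rfl fun i hi => ?_
          rw [esymmOn_eq_add_erase hi (j + 1), esymmOn_eq_add_erase hi j]
          ring
    have hnonneg : 0 ≤ ((j : R) + 2) * esymmOn S (j + 2) x ^ 2 - ((j : R) + 3) * p := by
      rw [hdiff]
      exact Finset.sum_nonneg fun i _ => mul_nonneg (sq_nonneg _) (sub_nonneg.2 (ih _))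
    by_contra! hlt
    change esymmOn S (j + 2) x ^ 2 < p at hlt
    nlinarith [sq_nonneg (esymmOn S (j + 2) x)]

theorem InGardingCone.erase (hx : InGardingCone S (k + 1) x) {i : ι} (hi : i ∈ S) :
    InGardingCone (S.erase i) k x := by
  intro j hj
  induction j with
  | zero => rw [esymmOn_zero]; exact one_pos
  | succ j ih =>
    have hprev := ih (by omega)
    have hpos₁ := hx (j + 1) (by omega)
    have hpos₂ := hx (j + 2) (by omega)
    rw [esymmOn_eq_add_erase hi] at hpos₁ hpos₂
    have hnewton := esymmOn_mul_esymmOn_le_sq (S.erase i) x j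
    by_contra! hnonpos
    nlinarith [mul_pos hpos₂ hprev, mul_nonneg (neg_nonneg.2 hnonpos) hpos₁.le]

-- Iterating Newton's inequality in the form `e_{k+1} e_{k+3} ≤ e_{k+2}²`.
omit [DecidableEq ι] in
theorem InGardingCone.esymmOn_one_mul_pow_le (hx : InGardingCone S (k + 2) x) :
    esymmOn S 1 x * esymmOn S (k + 2) x ^ k ≤ esymmOn S (k + 1) x ^ (k + 1) := by
  classical
  induction k with
  | zero => simp
  | succ k ih =>
    have hprev := ih (hx.mono (by omega))
    have hnewton := esymmOn_mul_esymmOn_le_sq S x (k + 1)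
    have hpos₀ := hx 1 (by omega)
    have hpos₁ := hx (k + 1) (by omega)
    have hpos₂ := hx (k + 2) (by omega)
    have hpos₃ := hx (k + 3) le_rfl
    change esymmOn S 1 x * esymmOn S (k + 3) x ^ (k + 1) ≤ esymmOn S (k + 2) x ^ (k + 2)
    set e₁ := esymmOn S 1 x
    set r := esymmOn S (k + 1) x
    set s := esymmOn S (k + 2) x
    set t := esymmOn S (k + 3) x
    have hpow : (r * t) ^ (k + 1) ≤ (s ^ 2) ^ (k + 1) := pow_le_pow_left₀ (by positivity) hnewton _
    refine le_of_mul_le_mul_left ?_ (show 0 < s ^ k * r ^ (k + 1) by positivity)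
    calc s ^ k * r ^ (k + 1) * (e₁ * t ^ (k + 1)) = e₁ * s ^ k * (r * t) ^ (k + 1) := by ring
      _ ≤ r ^ (k + 1) * (s ^ 2) ^ (k + 1) := by gcongr
      _ = s ^ k * r ^ (k + 1) * s ^ (k + 2) := by ring

-- The infinitesimal form of the superadditivity of `e_{k+1} / e_k` on `Γ_k`. In the induction
-- step, Cauchy–Schwarz reduces to `(b e - r x)² ≥ 0`.
theorem InGardingCone.esymmDeriv_quotient (ha : InGardingCone S k a) (hb : InGardingCone S k b) :
    esymmOn S (k + 1) b / esymmOn S k b * esymmOn S k a ^ 2 ≤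
      esymmDeriv S (k + 1) a b * esymmOn S k a - esymmOn S (k + 1) a * esymmDeriv S k a b := by
  induction k generalizing S with
  | zero => simp [esymmDeriv, esymmOn_zero, esymmOn_one]
  | succ k ih =>
    have hterm : ∀ i ∈ S, b i * esymmOn (S.erase i) (k + 1) b / esymmOn S (k + 1) b *
        esymmOn S (k + 1) a ^ 2 ≤ b i * esymmOn (S.erase i) (k + 1) a ^ 2 +
          a i ^ 2 * (esymmDeriv (S.erase i) (k + 1) a b * esymmOn (S.erase i) k a -
            esymmOn (S.erase i) (k + 1) a * esymmDeriv (S.erase i) k a b) := fun i hi => by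
      have hIH := ih (ha.erase hi) (hb.erase hi)
      have hpos := hb (k + 1) le_rfl
      have hpos' := hb.erase hi k le_rfl
      rw [esymmOn_eq_add_erase hi] at hpos ⊢
      rw [esymmOn_eq_add_erase hi k a]
      set e := esymmOn (S.erase i) (k + 1) a
      set e' := esymmOn (S.erase i) k a
      set r := esymmOn (S.erase i) (k + 1) b
      set r' := esymmOn (S.erase i) k b
      refine le_trans ?_ (add_le_add_right (mul_le_mul_of_nonneg_left hIH (sq_nonneg (a i))) _)
      rw [← sub_nonneg]
      have hsquare : b i * e ^ 2 + a i ^ 2 * (r / r' * e' ^ 2) -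
          b i * r / (r + b i * r') * (e + a i * e') ^ 2 =
          (b i * r' * e - r * a i * e') ^ 2 / (r' * (r + b i * r')) := by
        field_simp
        ring
      rw [hsquare]
      positivity
    have hk : (0 : R) < (k : R) + 2 := by positivity
    refine le_of_mul_le_mul_left ?_ hk
    rw [add_two_mul_esymmDeriv_sub, ← mul_assoc, ← mul_div_assoc, add_two_mul_esymmOn,
      Finset.sum_div, Finset.sum_mul]
    exact Finset.sum_le_sum hterm

theorem InGardingCone.sum_quotient_le (ha : InGardingCone S k a) (hb : InGardingCone S k b) :
    ∑ j ∈ Finset.range k, (esymmOn S (j + 1) b / esymmOn S j b) /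
        (esymmOn S (j + 1) a / esymmOn S j a) ≤ esymmDeriv S k a b / esymmOn S k a := by
  induction k with
  | zero => simp [esymmDeriv]
  | succ k ih =>
    have hquot := (ha.mono k.le_succ).esymmDeriv_quotient (hb.mono k.le_succ)
    have hpos := ha k k.le_succ
    have hpos' := ha (k + 1) le_rfl
    rw [Finset.sum_range_succ]
    calc _ ≤ esymmDeriv S k a b / esymmOn S k a + (esymmOn S (k + 1) b / esymmOn S k b) /
          (esymmOn S (k + 1) a / esymmOn S k a) := by
          gcongr
          exact ih (ha.mono k.le_succ) (hb.mono k.le_succ)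
      _ = (esymmOn S (k + 1) b / esymmOn S k b * esymmOn S k a ^ 2 +
          esymmOn S (k + 1) a * esymmDeriv S k a b) / (esymmOn S k a * esymmOn S (k + 1) a) := by
          field_simp
          ring
      _ ≤ (esymmDeriv S (k + 1) a b * esymmOn S k a) / (esymmOn S k a * esymmOn S (k + 1) a) := by
          gcongr
          linarith
      _ = _ := by field_simp

end GardingCone

theorem card_mul_le_sum_of_pow_card_le_prod {ι : Type*} (s : Finset ι) (z : ι → ℝ) {c : ℝ}
    (hz : ∀ i ∈ s, 0 ≤ z i) (hc : 0 ≤ c) (hprod : c ^ s.card ≤ ∏ i ∈ s, z i) :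
    s.card * c ≤ ∑ i ∈ s, z i := by
  rcases s.eq_empty_or_nonempty with rfl | hs
  · simp
  have hcard : (0 : ℝ) < s.card := by exact_mod_cast hs.card_pos
  have hamgm := Real.geom_mean_le_arith_mean s (fun _ => 1) z (fun _ _ => zero_le_one)
    (by simpa using hs) hz
  simp only [Real.rpow_one, Finset.sum_const, nsmul_eq_mul, mul_one, one_mul] at hamgm
  have hroot : c ≤ (∏ i ∈ s, z i) ^ ((s.card : ℝ)⁻¹) := by
    rw [← Real.pow_rpow_inv_natCast hc hs.card_pos.ne']
    gcongr
  rw [← le_div_iff₀' hcard]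
  exact hroot.trans hamgm

theorem InGardingCone.garding {ι : Type*} [DecidableEq ι] {S : Finset ι} {k : ℕ} {a b : ι → ℝ}
    (ha : InGardingCone S (k + 1) a) (hb : InGardingCone S (k + 1) b) {α β : ℝ} (hα : 0 < α)
    (hβ : 0 ≤ β) (hαa : esymmOn S (k + 1) a = α ^ (k + 1))
    (hβb : β ^ (k + 1) ≤ esymmOn S (k + 1) b) :
    ((k : ℝ) + 1) * α ^ k * β ≤ ∑ i ∈ S, b i * esymmOn (S.erase i) k a := by
  have hquot : ∀ {x : ι → ℝ}, InGardingCone S (k + 1) x → ∀ j ∈ Finset.range (k + 1),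
      0 < esymmOn S (j + 1) x / esymmOn S j x := fun hx j hj =>
    have hj' := Finset.mem_range.1 hj
    div_pos (hx _ hj') (hx _ hj'.le)
  have hmean := card_mul_le_sum_of_pow_card_le_prod (Finset.range (k + 1))
    (fun j => (esymmOn S (j + 1) b / esymmOn S j b) / (esymmOn S (j + 1) a / esymmOn S j a))
    (c := β / α) (fun j hj => (div_pos (hquot hb j hj) (hquot ha j hj)).le) (by positivity) (by
      rw [Finset.prod_div_distrib, ha.prod_quotient, hb.prod_quotient, Finset.card_range, hαa,
        div_pow]
      gcongr)
  have hderiv := hmean.trans (ha.sum_quotient_le hb)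
  rw [hαa, Finset.card_range, Nat.cast_succ, le_div_iff₀ (by positivity)] at hderiv
  refine le_trans (le_of_eq ?_) hderiv
  field_simp
  ring

/-! ### Newton tensors of symmetric matrices -/

section FiniteMatrix

variable {ι : Type*} [Fintype ι] [DecidableEq ι] {A T : Matrix ι ι ℝ}

theorem exists_orthogonal_diagonalization (hA : A.IsHermitian) :
    ∃ U : Matrix ι ι ℝ, Uᵀ * U = 1 ∧ U * Uᵀ = 1 ∧ A = U * diagonal hA.eigenvalues * Uᵀ := by
  refine ⟨hA.eigenvectorUnitary, ?_, ?_, ?_⟩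
  · simpa [star_eq_conjTranspose] using Unitary.coe_star_mul_self hA.eigenvectorUnitary
  · simpa [star_eq_conjTranspose] using Unitary.coe_mul_star_self hA.eigenvectorUnitary
  · simpa [Unitary.conjStarAlgAut_apply, star_eq_conjTranspose, Function.comp_def]
      using hA.spectral_theorem

theorem le_of_mem_doublyStochastic (L : Matrix ι ι ℝ →ₗ[ℝ] ℝ) {c : ℝ}
    (hL : ∀ s : Equiv.Perm ι, c ≤ L (s.permMatrix ℝ)) {P : Matrix ι ι ℝ}
    (hP : P ∈ doublyStochastic ℝ ι) : c ≤ L P := by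
  have hhull : P ∈ convexHull ℝ {s.permMatrix ℝ | s : Equiv.Perm ι} :=
    doublyStochastic_eq_convexHull_permMatrix (R := ℝ) (n := ι) ▸ hP
  refine convexHull_min (t := {Q | c ≤ L Q}) ?_ (convex_halfSpace_ge L.isLinear c) hhull
  rintro _ ⟨s, rfl⟩
  exact hL s

theorem sq_entries_mem_doublyStochastic {W : Matrix ι ι ℝ} (hW : Wᵀ * W = 1) (hW' : W * Wᵀ = 1) :
    (of fun i j => W i j ^ 2) ∈ doublyStochastic ℝ ι := by
  refine mem_doublyStochastic_iff_sum.2 ⟨fun i j => sq_nonneg _, fun i => ?_, fun j => ?_⟩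
  · simpa [mul_apply, sq] using congr_fun₂ hW' i i
  · simpa [mul_apply, sq] using congr_fun₂ hW j j

theorem trace_diagonal_mul_conj_diagonal (W : Matrix ι ι ℝ) (w b : ι → ℝ) :
    (diagonal w * (W * diagonal b * Wᵀ)).trace = ∑ i, w i * ∑ j, W i j ^ 2 * b j := by
  refine Finset.sum_congr rfl fun i _ => ?_
  rw [diag_apply, diagonal_mul, mul_apply]
  refine congr_arg _ (Finset.sum_congr rfl fun j _ => ?_)
  rw [mul_diagonal, transpose_apply]
  ring

-- By Birkhoff's theorem it suffices to test permutation matrices `UᵀV`.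
theorem le_trace_conj_diagonal_mul_conj_diagonal {U V : Matrix ι ι ℝ} (hU : Uᵀ * U = 1)
    (hU' : U * Uᵀ = 1) (hV : Vᵀ * V = 1) (hV' : V * Vᵀ = 1) {w b : ι → ℝ} {c : ℝ}
    (h : ∀ s : Equiv.Perm ι, c ≤ ∑ i, w i * b (s i)) :
    c ≤ (U * diagonal w * Uᵀ * (V * diagonal b * Vᵀ)).trace := by
  set W := Uᵀ * V with hWdef
  have hW : Wᵀ * W = 1 := by
    rw [hWdef, transpose_mul, transpose_transpose, Matrix.mul_assoc, ← Matrix.mul_assoc U, hU',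
      Matrix.one_mul, hV]
  have hW' : W * Wᵀ = 1 := by
    rw [hWdef, transpose_mul, transpose_transpose, Matrix.mul_assoc, ← Matrix.mul_assoc V, hV',
      Matrix.one_mul, hU]
  have htrace : (U * diagonal w * Uᵀ * (V * diagonal b * Vᵀ)).trace =
      ∑ i, w i * ∑ j, W i j ^ 2 * b j := by
    rw [← trace_diagonal_mul_conj_diagonal, Matrix.mul_assoc, Matrix.mul_assoc, trace_mul_comm]
    simp only [hWdef, transpose_mul, transpose_transpose, Matrix.mul_assoc]
  let L : Matrix ι ι ℝ →ₗ[ℝ] ℝ :=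
    { toFun := fun P => ∑ i, w i * ∑ j, P i j * b j
      map_add' := fun P Q => by simp [add_mul, mul_add, Finset.sum_add_distrib]
      map_smul' := fun c P => by
        simp only [Matrix.smul_apply, smul_eq_mul, RingHom.id_apply, Finset.mul_sum]
        exact Finset.sum_congr rfl fun i _ => Finset.sum_congr rfl fun j _ => by ring }
  rw [htrace]
  refine le_of_mem_doublyStochastic L (fun s => (h s).trans_eq ?_)
    (sq_entries_mem_doublyStochastic hW hW')
  refine Finset.sum_congr rfl fun i _ => ?_
  simp [PEquiv.toMatrix_apply, Equiv.toPEquiv_apply]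

open scoped MatrixOrder in
omit [DecidableEq ι] in
theorem trace_mul_le_of_posSemidef (hT : T.PosSemidef) {B : Matrix ι ι ℝ} {b : ℝ}
    (hB : ∀ e : ι → ℝ, e ⬝ᵥ B *ᵥ e ≤ b * (e ⬝ᵥ e)) : (T * B).trace ≤ b * T.trace := by
  classical
  obtain ⟨V, rfl⟩ := CStarAlgebra.nonneg_iff_eq_star_mul_self.mp hT.nonneg
  rw [star_eq_conjTranspose, Matrix.mul_assoc, trace_mul_comm Vᴴ, trace_mul_comm Vᴴ, trace, trace,
    Finset.mul_sum]
  refine Finset.sum_le_sum fun i _ => le_trans (le_of_eq ?_) ((hB (V i)).trans_eq ?_)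
  · rw [diag_apply, Matrix.mul_assoc, mul_apply]
    rfl
  · rw [diag_apply, mul_apply]
    rfl

end FiniteMatrix

section NewtonTensor

variable {n k : ℕ} {A B : Matrix (Fin n) (Fin n) ℝ}

theorem esymmMat_eq_esymmOn_eigenvalues (hA : A.IsHermitian) (hk : k ≤ n) :
    esymmMat k A = esymmOn Finset.univ k hA.eigenvalues := by
  have hchar : A.charpoly = ((Finset.univ.val.map hA.eigenvalues).map
      fun t => Polynomial.X - Polynomial.C t).prod := by
    rw [hA.charpoly_eq, Multiset.map_map]
    rfl
  rw [esymmMat, hchar, Multiset.prod_X_sub_C_coeff _ (by simp)]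
  simp only [Multiset.card_map, Finset.card_val, Finset.card_univ, Fintype.card_fin]
  rw [Nat.sub_sub_self hk, esymmOn, ← mul_assoc, ← mul_pow]
  simp

theorem GammaPlus.inGardingCone (hG : GammaPlus k A) (hA : A.IsHermitian) (hk : k ≤ n) :
    InGardingCone Finset.univ k hA.eigenvalues := by
  intro j hj
  rcases Nat.eq_zero_or_pos j with rfl | hpos
  · rw [esymmOn_zero]
    exact one_pos
  · rw [← esymmMat_eq_esymmOn_eigenvalues hA (hj.trans hk)]
    exact hG j hpos hj

theorem newtonT_eq_conj_diagonal (hA : A.IsHermitian) {U : Matrix (Fin n) (Fin n) ℝ}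
    (hU : Uᵀ * U = 1) (hU' : U * Uᵀ = 1) (hAU : A = U * diagonal hA.eigenvalues * Uᵀ)
    (hk : k ≤ n) :
    newtonT k A =
      U * diagonal (fun i => esymmOn (Finset.univ.erase i) k hA.eigenvalues) * Uᵀ := by
  induction k with
  | zero => simp [newtonT, esymmOn_zero, hU']
  | succ k ih =>
    set a := hA.eigenvalues
    have hdiag : (diagonal fun i => esymmOn (Finset.univ.erase i) (k + 1) a) =
        esymmOn Finset.univ (k + 1) a • (1 : Matrix (Fin n) (Fin n) ℝ) -
          diagonal (fun i => esymmOn (Finset.univ.erase i) k a) * diagonal a := by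
      rw [smul_one_eq_diagonal, diagonal_mul_diagonal, diagonal_sub]
      congr 1
      funext i
      rw [esymmOn_eq_add_erase (Finset.mem_univ i)]
      ring
    calc newtonT (k + 1) A = esymmMat (k + 1) A • 1 -
          U * diagonal (fun i => esymmOn (Finset.univ.erase i) k a) * Uᵀ *
            (U * diagonal a * Uᵀ) := by
          rw [newtonT, ih (by omega), ← hAU]
      _ = esymmMat (k + 1) A • (U * Uᵀ) -
          U * diagonal (fun i => esymmOn (Finset.univ.erase i) k a) * (Uᵀ * U) *
            diagonal a * Uᵀ := by
          simp only [hU', Matrix.mul_assoc]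
      _ = _ := by
          rw [hU, hdiag, esymmMat_eq_esymmOn_eigenvalues hA hk]
          simp only [Matrix.mul_assoc, Matrix.mul_sub, Matrix.sub_mul, Matrix.smul_mul,
            Matrix.mul_smul, Matrix.one_mul, a]

theorem posSemidef_newtonT (hA : A.IsHermitian) (hk : k + 1 ≤ n) (hG : GammaPlus (k + 1) A) :
    (newtonT k A).PosSemidef := by
  obtain ⟨U, hU, hU', hAU⟩ := exists_orthogonal_diagonalization hA
  rw [newtonT_eq_conj_diagonal hA hU hU' hAU (by omega)]
  refine (posSemidef_diagonal_iff.2 fun i => ?_).mul_mul_conjTranspose_same U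
  exact ((hG.inGardingCone hA hk).erase (Finset.mem_univ i) k le_rfl).le

theorem trace_newtonT (hA : A.IsHermitian) (hk : k ≤ n) :
    (newtonT k A).trace = ((n : ℝ) - k) * esymmMat k A := by
  obtain ⟨U, hU, hU', hAU⟩ := exists_orthogonal_diagonalization hA
  rw [newtonT_eq_conj_diagonal hA hU hU' hAU hk, trace_mul_comm, ← Matrix.mul_assoc, hU,
    Matrix.one_mul, trace_diagonal, sum_esymmOn_erase, esymmMat_eq_esymmOn_eigenvalues hA hk,
    Finset.card_univ, Fintype.card_fin]

theorem trace_newtonT_mul_self (hA : A.IsHermitian) (hk : k + 1 ≤ n) :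
    (newtonT k A * A).trace = ((k : ℝ) + 1) * esymmMat (k + 1) A := by
  have htrace := trace_newtonT hA hk
  rw [newtonT, trace_sub, trace_smul, trace_one, Fintype.card_fin, smul_eq_mul] at htrace
  push_cast at htrace
  linarith

theorem trace_eq_esymmMat_one (hA : A.IsHermitian) (hn : 1 ≤ n) : A.trace = esymmMat 1 A := by
  simpa [newtonT] using trace_newtonT_mul_self (k := 0) hA hn

theorem trace_mul_self_eq (hA : A.IsHermitian) (hn : 2 ≤ n) :
    (A * A).trace = A.trace ^ 2 - 2 * esymmMat 2 A := by
  have htrace := trace_newtonT_mul_self (k := 1) hA hn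
  simp only [newtonT, zero_add, Matrix.one_mul, Matrix.sub_mul, Matrix.smul_mul, trace_sub,
    trace_smul, smul_eq_mul, ← trace_eq_esymmMat_one hA (by omega : 1 ≤ n)] at htrace
  push_cast at htrace
  linarith

theorem sq_apply_le_trace_mul_self {ι : Type*} [Fintype ι] {A : Matrix ι ι ℝ}
    (hA : A.IsHermitian) (i j : ι) : A i j ^ 2 ≤ (A * A).trace := by
  have hentry : ∀ l m, A l m * A m l = A l m ^ 2 := fun l m => by
    rw [← hA.apply m l, star_trivial, sq]
  simp only [trace, diag_apply, mul_apply, hentry]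
  refine le_trans ?_ (Finset.single_le_sum (f := fun l => ∑ m, A l m ^ 2)
    (fun l _ => Finset.sum_nonneg fun m _ => sq_nonneg _) (Finset.mem_univ i))
  exact Finset.single_le_sum (f := fun m => A i m ^ 2) (fun m _ => sq_nonneg _)
    (Finset.mem_univ j)

theorem abs_apply_le_trace (hA : A.IsHermitian) (hn : 2 ≤ n) (hG : GammaPlus 2 A) (i j : Fin n) :
    |A i j| ≤ A.trace := by
  have htrace : 0 < A.trace := by
    rw [trace_eq_esymmMat_one hA (by omega)]
    exact hG 1 le_rfl one_le_two
  refine abs_le_of_sq_le_sq ?_ htrace.le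
  linarith [sq_apply_le_trace_mul_self hA i j, trace_mul_self_eq hA hn, hG 2 one_le_two le_rfl]

theorem trace_mul_pow_le_trace_newtonT_pow (hA : A.IsHermitian) (hk : k + 2 ≤ n)
    (hG : GammaPlus (k + 2) A) :
    A.trace * esymmMat (k + 2) A ^ k ≤ (newtonT (k + 1) A).trace ^ (k + 1) := by
  have hcone := hG.inGardingCone hA hk
  have hpos := (hcone (k + 1) (by omega)).le
  have hn : (1 : ℝ) ≤ n - (k + 1 : ℕ) := by
    have : ((k + 2 : ℕ) : ℝ) ≤ n := by exact_mod_cast hk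
    push_cast at this ⊢
    linarith
  rw [trace_newtonT hA (by omega), trace_eq_esymmMat_one hA (by omega),
    esymmMat_eq_esymmOn_eigenvalues hA (by omega), esymmMat_eq_esymmOn_eigenvalues hA hk,
    esymmMat_eq_esymmOn_eigenvalues hA (by omega)]
  exact hcone.esymmOn_one_mul_pow_le.trans
    (pow_le_pow_left₀ hpos (le_mul_of_one_le_left hpos hn) _)

theorem garding_trace_newtonT_mul (hk : k + 1 ≤ n) (hA : A.IsHermitian)
    (hGA : GammaPlus (k + 1) A) (hB : B.IsHermitian) (hGB : GammaPlus (k + 1) B) {α β : ℝ}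
    (hα : 0 < α) (hβ : 0 ≤ β) (hαA : esymmMat (k + 1) A = α ^ (k + 1))
    (hβB : esymmMat (k + 1) B = β ^ (k + 1)) :
    ((k : ℝ) + 1) * α ^ k * β ≤ (newtonT k A * B).trace := by
  obtain ⟨U, hU, hU', hAU⟩ := exists_orthogonal_diagonalization hA
  obtain ⟨V, hV, hV', hBV⟩ := exists_orthogonal_diagonalization hB
  rw [newtonT_eq_conj_diagonal hA hU hU' hAU (by omega), hBV]
  refine le_trace_conj_diagonal_mul_conj_diagonal hU hU' hV hV' fun s => ?_
  have hcone : InGardingCone Finset.univ (k + 1) (hB.eigenvalues ∘ s) := fun j hj => by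
    rw [esymmOn_comp_perm]
    exact hGB.inGardingCone hB hk j hj
  refine ((hGA.inGardingCone hA hk).garding hcone hα hβ ?_ ?_).trans_eq ?_
  · rw [← esymmMat_eq_esymmOn_eigenvalues hA hk, hαA]
  · rw [esymmOn_comp_perm, ← esymmMat_eq_esymmOn_eigenvalues hB hk, hβB]
  · exact Finset.sum_congr rfl fun i _ => mul_comm _ _

end NewtonTensor
/-! ### Morrey's sup bound -/

section Morrey

open AffineMap Module

variable {E : Type*} [NormedAddCommGroup E] [NormedSpace ℝ E]
  {F : Type*} [NormedAddCommGroup F]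

theorem enorm_sub_le_mul_lintegral_enorm_fderiv [NormedSpace ℝ F] [CompleteSpace F]
    {s : Set E} (hs : Convex ℝ s) {g : E → F} (hg : ∀ z ∈ s, DifferentiableAt ℝ g z)
    (hg' : ContinuousOn (fderiv ℝ g) s) {x y : E} (hx : x ∈ s) (hy : y ∈ s) :
    ‖g y - g x‖ₑ ≤ ‖y - x‖ₑ * ∫⁻ t in Ioc (0 : ℝ) 1, ‖fderiv ℝ g (homothety x t y)‖ₑ := by
  have hline : ∀ t : ℝ, HasDerivAt (fun t : ℝ => homothety x t y) (y - x) t := fun t => by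
    simpa [homothety_apply] using ((hasDerivAt_id t).smul_const (y - x)).add_const x
  have hmem : ∀ t ∈ uIcc (0 : ℝ) 1, homothety x t y ∈ s := fun t ht =>
    homothety_eq_lineMap x t y ▸ hs.lineMap_mem hx hy (uIcc_of_le (zero_le_one' ℝ) ▸ ht)
  have hderiv : ∀ t ∈ uIcc (0 : ℝ) 1, HasDerivAt (fun t : ℝ => g (homothety x t y))
      (fderiv ℝ g (homothety x t y) (y - x)) t := fun t ht =>
    (hg _ (hmem t ht)).hasFDerivAt.comp_hasDerivAt t (hline t)
  have hcont : ContinuousOn (fun t : ℝ => fderiv ℝ g (homothety x t y) (y - x)) (uIcc 0 1) :=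
    (hg'.comp (fun t _ => (hline t).continuousAt.continuousWithinAt) hmem).clm_apply
      continuousOn_const
  have hFTC := intervalIntegral.integral_eq_sub_of_hasDerivAt hderiv hcont.intervalIntegrable
  rw [homothety_one, homothety_zero, AffineMap.id_apply, AffineMap.const_apply,
    intervalIntegral.integral_of_le zero_le_one] at hFTC
  calc ‖g y - g x‖ₑ
      ≤ ∫⁻ t in Ioc (0 : ℝ) 1, ‖fderiv ℝ g (homothety x t y) (y - x)‖ₑ :=
        hFTC ▸ enorm_integral_le_lintegral_enorm _
    _ ≤ ∫⁻ t in Ioc (0 : ℝ) 1, ‖y - x‖ₑ * ‖fderiv ℝ g (homothety x t y)‖ₑ :=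
        lintegral_mono fun t => mul_comm ‖y - x‖ₑ _ ▸ ContinuousLinearMap.le_opENorm _ _
    _ = _ := lintegral_const_mul' _ _ enorm_ne_top

variable [FiniteDimensional ℝ E] [MeasurableSpace E] [BorelSpace E] {μ : Measure E}
  [μ.IsAddHaarMeasure]

theorem map_homothety_restrict_le {x : E} {t : ℝ} (ht : t ≠ 0) {s : Set E}
    (hs : MeasurableSet s) (hmaps : MapsTo (homothety x t) s s) :
    (μ.restrict s).map (homothety x t) ≤
      ENNReal.ofReal |(t ^ finrank ℝ E)⁻¹| • μ.restrict s := by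
  have hmeas : Measurable (homothety x t) := (homothety_continuous x t).measurable
  have hmap : μ.map (homothety x t) = ENNReal.ofReal |(t ^ finrank ℝ E)⁻¹| • μ := by
    ext u hu
    have hpre : homothety x t ⁻¹' u = homothety x t⁻¹ '' u :=
      ((AffineEquiv.homothetyUnitsMulHom x (Units.mk0 t ht)).toEquiv.image_symm_eq_preimage u).symm
    rw [Measure.map_apply hmeas hu, Measure.smul_apply, smul_eq_mul, hpre,
      Measure.addHaar_image_homothety, inv_pow]
  calc (μ.restrict s).map (homothety x t)
      ≤ (μ.restrict (homothety x t ⁻¹' s)).map (homothety x t) :=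
        Measure.map_mono (Measure.restrict_mono hmaps le_rfl) hmeas
    _ = ENNReal.ofReal |(t ^ finrank ℝ E)⁻¹| • μ.restrict s := by
        rw [← Measure.restrict_map hmeas hs, hmap, Measure.restrict_smul]

theorem eLpNorm_comp_homothety_le {x : E} {t : ℝ} (ht : t ≠ 0) {s : Set E}
    (hs : MeasurableSet s) (hmaps : MapsTo (homothety x t) s s) {G : E → F}
    (hG : AEStronglyMeasurable G (μ.restrict s)) (p : ENNReal) :
    eLpNorm (G ∘ homothety x t) p (μ.restrict s) ≤
      ENNReal.ofReal |(t ^ finrank ℝ E)⁻¹| ^ (1 / p).toReal * eLpNorm G p (μ.restrict s) := by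
  have hle := map_homothety_restrict_le (μ := μ) ht hs hmaps
  have hc : ENNReal.ofReal |(t ^ finrank ℝ E)⁻¹| ≠ 0 := by simp [ht]
  rw [← eLpNorm_map_measure (hG.mono_ac ((Measure.absolutelyContinuous_of_le hle).trans
      (Measure.AbsolutelyContinuous.rfl.smul_left _)))
      (homothety_continuous x t).aemeasurable, ← smul_eq_mul,
    ← eLpNorm_smul_measure_of_ne_zero hc]
  exact eLpNorm_mono_measure G hle

theorem lintegral_rpow_homothety_ratio_lt_top {d : ℕ} {p : ENNReal} (hp : d < p) :
    ∫⁻ t in Ioc (0 : ℝ) 1, ENNReal.ofReal |(t ^ d)⁻¹| ^ (1 / p).toReal < ⊤ := by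
  have hexp : -1 < -(d * (1 / p).toReal) := by
    have hlt : (d : ENNReal) * (1 / p) < 1 := by
      rw [mul_one_div]
      exact ENNReal.div_lt_of_lt_mul' (by simpa using hp)
    have := ENNReal.toReal_strict_mono ENNReal.one_ne_top hlt
    simpa using this
  have hint := intervalIntegral.intervalIntegrable_rpow' (a := 0) (b := 1) hexp
  rw [intervalIntegrable_iff_integrableOn_Ioc_of_le zero_le_one] at hint
  refine lt_of_eq_of_lt (setLIntegral_congr_fun measurableSet_Ioc fun t ht => ?_)
    hint.lintegral_lt_top
  have hpos : 0 < (t ^ d)⁻¹ := inv_pos.2 (pow_pos ht.1 d)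
  change ENNReal.ofReal |(t ^ d)⁻¹| ^ (1 / p).toReal = ENNReal.ofReal (t ^ _)
  rw [abs_of_pos hpos, ENNReal.ofReal_rpow_of_pos hpos, Real.inv_rpow (pow_pos ht.1 d).le,
    ← Real.rpow_natCast, ← Real.rpow_mul ht.1.le, Real.rpow_neg ht.1.le]

theorem lintegral_lintegral_enorm_homothety_le {s : Set E} (hs : Convex ℝ s)
    (hsm : MeasurableSet s) {G : E → F} (hG : ContinuousOn G s) {x : E} (hx : x ∈ s)
    {p : ENNReal} (hp : 1 ≤ p) :
    ∫⁻ y in s, (∫⁻ t in Ioc (0 : ℝ) 1, ‖G (homothety x t y)‖ₑ) ∂μ ≤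
      (∫⁻ t in Ioc (0 : ℝ) 1, ENNReal.ofReal |(t ^ finrank ℝ E)⁻¹| ^ (1 / p).toReal) *
        (eLpNorm G p (μ.restrict s) * μ s ^ (1 - 1 / p.toReal)) := by
  have := FiniteDimensional.proper ℝ E
  have hmaps : ∀ t ∈ Ioc (0 : ℝ) 1, MapsTo (homothety x t) s s := fun t ht y hy =>
    homothety_eq_lineMap x t y ▸ hs.lineMap_mem hx hy (Ioc_subset_Icc_self ht)
  have hjoint : ContinuousOn (fun z : E × ℝ => G (homothety x z.2 z.1)) (s ×ˢ Ioc 0 1) := by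
    refine hG.comp (Continuous.continuousOn ?_) fun z hz => hmaps z.2 hz.2 hz.1
    simp only [homothety_apply]
    fun_prop
  have hslice : ∀ t ∈ Ioc (0 : ℝ) 1, ∫⁻ y in s, ‖G (homothety x t y)‖ₑ ∂μ ≤
      ENNReal.ofReal |(t ^ finrank ℝ E)⁻¹| ^ (1 / p).toReal *
        (eLpNorm G p (μ.restrict s) * μ s ^ (1 - 1 / p.toReal)) := fun t ht => by
    have hmeas : AEStronglyMeasurable (G ∘ homothety x t) (μ.restrict s) :=
      (hG.comp (homothety_continuous x t).continuousOn (hmaps t ht)).aestronglyMeasurable hsm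
    calc ∫⁻ y in s, ‖G (homothety x t y)‖ₑ ∂μ
        = eLpNorm (G ∘ homothety x t) 1 (μ.restrict s) := eLpNorm_one_eq_lintegral_enorm.symm
      _ ≤ eLpNorm (G ∘ homothety x t) p (μ.restrict s) * μ s ^ (1 - 1 / p.toReal) := by
          simpa using eLpNorm_le_eLpNorm_mul_rpow_measure_univ hp hmeas
      _ ≤ _ := by
          rw [← mul_assoc]
          gcongr
          exact eLpNorm_comp_homothety_le ht.1.ne' hsm (hmaps t ht) (hG.aestronglyMeasurable hsm) p
  rw [lintegral_lintegral_swap]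
  · exact (setLIntegral_mono' measurableSet_Ioc hslice).trans
      (lintegral_mul_const'' _ (by fun_prop)).le
  · rw [Measure.prod_restrict]
    exact hjoint.enorm.aemeasurable (hsm.prod measurableSet_Ioc)

/-- Average the fundamental theorem of calculus along the segments from `x` over the ball. -/
theorem enorm_mul_measure_ball_le [NormedSpace ℝ F] [CompleteSpace F] {p : ENNReal} (hp : 1 ≤ p)
    {x₀ : E} {r : ℝ} {g : E → F} (hg : ∀ z ∈ ball x₀ r, DifferentiableAt ℝ g z)
    (hg' : ContinuousOn (fderiv ℝ g) (ball x₀ r)) {x : E} (hx : x ∈ ball x₀ r) :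
    ‖g x‖ₑ * μ (ball x₀ r) ≤
      eLpNorm g p (μ.restrict (ball x₀ r)) * μ (ball x₀ r) ^ (1 - 1 / p.toReal) +
        ENNReal.ofReal (2 * r) *
          ((∫⁻ t in Ioc (0 : ℝ) 1, ENNReal.ofReal |(t ^ finrank ℝ E)⁻¹| ^ (1 / p).toReal) *
            (eLpNorm (fderiv ℝ g) p (μ.restrict (ball x₀ r)) *
              μ (ball x₀ r) ^ (1 - 1 / p.toReal))) := by
  have := FiniteDimensional.proper ℝ E
  set B := ball x₀ r
  have hgc : ContinuousOn g B := fun z hz => (hg z hz).continuousAt.continuousWithinAt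
  have hpt : ∀ y ∈ B, ‖g x‖ₑ ≤ ‖g y‖ₑ + ENNReal.ofReal (2 * r) *
      ∫⁻ t in Ioc (0 : ℝ) 1, ‖fderiv ℝ g (homothety x t y)‖ₑ := fun y hy => by
    have hdist : ‖y - x‖ₑ ≤ ENNReal.ofReal (2 * r) := by
      rw [← ofReal_norm, ← dist_eq_norm]
      exact ENNReal.ofReal_le_ofReal (by
        linarith [dist_triangle_right y x x₀, mem_ball.1 hx, mem_ball.1 hy])
    calc ‖g x‖ₑ = ‖g y - (g y - g x)‖ₑ := by rw [sub_sub_cancel]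
      _ ≤ ‖g y‖ₑ + ‖g y - g x‖ₑ := enorm_sub_le
      _ ≤ _ := by
          gcongr
          exact (enorm_sub_le_mul_lintegral_enorm_fderiv (convex_ball x₀ r) hg hg' hx hy).trans
            (by gcongr)
  calc ‖g x‖ₑ * μ B = ∫⁻ _ in B, ‖g x‖ₑ ∂μ := (setLIntegral_const _ _).symm
    _ ≤ ∫⁻ y in B, (‖g y‖ₑ + ENNReal.ofReal (2 * r) *
          ∫⁻ t in Ioc (0 : ℝ) 1, ‖fderiv ℝ g (homothety x t y)‖ₑ) ∂μ :=
        setLIntegral_mono' measurableSet_ball hpt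
    _ = eLpNorm g 1 (μ.restrict B) + ENNReal.ofReal (2 * r) *
          ∫⁻ y in B, (∫⁻ t in Ioc (0 : ℝ) 1, ‖fderiv ℝ g (homothety x t y)‖ₑ) ∂μ := by
        rw [lintegral_add_left' (hgc.enorm.aemeasurable measurableSet_ball),
          lintegral_const_mul' _ _ ENNReal.ofReal_ne_top, eLpNorm_one_eq_lintegral_enorm]
    _ ≤ _ := by
        refine add_le_add ?_ ?_
        · simpa using eLpNorm_le_eLpNorm_mul_rpow_measure_univ hp
            (hgc.aestronglyMeasurable (μ := μ) measurableSet_ball)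
        · gcongr
          exact lintegral_lintegral_enorm_homothety_le (convex_ball x₀ r) measurableSet_ball
            hg' hx hp

theorem exists_norm_le_of_eLpNorm_le [NormedSpace ℝ F] [CompleteSpace F] (μ : Measure E)
    [μ.IsAddHaarMeasure] {p : ENNReal} (hp : 1 ≤ p) (hdim : finrank ℝ E < p) (x₀ : E) (r : ℝ)
    {N : ENNReal} (hN : N ≠ ⊤) :
    ∃ C : ℝ, ∀ g : E → F, (∀ z ∈ ball x₀ r, DifferentiableAt ℝ g z) →
      ContinuousOn (fderiv ℝ g) (ball x₀ r) →
      eLpNorm g p (μ.restrict (ball x₀ r)) ≤ N →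
      eLpNorm (fderiv ℝ g) p (μ.restrict (ball x₀ r)) ≤ N →
      ∀ x ∈ ball x₀ r, ‖g x‖ ≤ C := by
  have := FiniteDimensional.proper ℝ E
  set B := ball x₀ r
  have hBtop : μ B ≠ ⊤ := measure_ball_lt_top.ne
  set J := ∫⁻ t in Ioc (0 : ℝ) 1, ENNReal.ofReal |(t ^ finrank ℝ E)⁻¹| ^ (1 / p).toReal
  have hJ : J ≠ ⊤ := (lintegral_rpow_homothety_ratio_lt_top hdim).ne
  set K := N * μ B ^ (1 - 1 / p.toReal)
  have hK : K ≠ ⊤ := by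
    have hexp : 1 / p.toReal ≤ 1 := by
      simpa using ENNReal.toReal_mono ENNReal.one_ne_top (ENNReal.inv_le_one.2 hp)
    exact ENNReal.mul_ne_top hN (ENNReal.rpow_ne_top_of_nonneg (sub_nonneg.2 hexp) hBtop)
  refine ⟨((K + ENNReal.ofReal (2 * r) * (J * K)) / μ B).toReal,
    fun g hg hg' hgN hg'N x hx => ?_⟩
  have hB0 : μ B ≠ 0 := (isOpen_ball.measure_pos μ ⟨x, hx⟩).ne'
  have hbound : ‖g x‖ₑ ≤ (K + ENNReal.ofReal (2 * r) * (J * K)) / μ B :=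
    (ENNReal.le_div_iff_mul_le (.inl hB0) (.inl hBtop)).2
      ((enorm_mul_measure_ball_le hp hg hg' hx).trans (by
        gcongr
        exacts [mul_le_mul' hgN le_rfl, mul_le_mul' hg'N le_rfl]))
  rw [← toReal_enorm]
  refine ENNReal.toReal_mono (ENNReal.div_ne_top (ENNReal.add_ne_top.2 ⟨hK, ?_⟩) hB0) hbound
  exact ENNReal.mul_ne_top ENNReal.ofReal_ne_top (ENNReal.mul_ne_top hJ hK)

end Morrey

/-! ### From `W^{2,p}` to `C¹` -/

section SobolevEmbedding

variable {n : ℕ}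

theorem sum_smul_apply_single {F : Type*} [NormedAddCommGroup F] [NormedSpace ℝ F]
    (L : (Fin n → ℝ) →L[ℝ] F) (v : Fin n → ℝ) : ∑ i, v i • L (Pi.single i 1) = L v := by
  conv_rhs => rw [← Finset.univ_sum_single v, map_sum]
  exact Finset.sum_congr rfl fun i _ => by rw [← map_smul, ← Pi.single_smul, smul_eq_mul, mul_one]

theorem norm_le_mul_of_apply_single_le {F : Type*} [NormedAddCommGroup F] [NormedSpace ℝ F]
    {L : (Fin n → ℝ) →L[ℝ] F} {c : ℝ} (hc : 0 ≤ c) (hL : ∀ i, ‖L (Pi.single i 1)‖ ≤ c) :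
    ‖L‖ ≤ n * c := by
  refine L.opNorm_le_bound (by positivity) fun v => ?_
  calc ‖L v‖ = ‖∑ i, v i • L (Pi.single i 1)‖ := by rw [sum_smul_apply_single]
    _ ≤ ∑ _i : Fin n, ‖v‖ * c := norm_sum_le_of_le _ fun i _ => by
        rw [norm_smul]
        exact mul_le_mul (norm_le_pi_norm v i) (hL i) (norm_nonneg _) (norm_nonneg _)
    _ = n * c * ‖v‖ := by
        rw [Finset.sum_const, Finset.card_univ, Fintype.card_fin, nsmul_eq_mul]
        ring

theorem norm_apply_single_le {F : Type*} [NormedAddCommGroup F] [NormedSpace ℝ F]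
    (L : (Fin n → ℝ) →L[ℝ] F) (i : Fin n) : ‖L (Pi.single i 1)‖ ≤ ‖L‖ := by
  simpa [Pi.norm_single] using L.le_opNorm (Pi.single i 1)

theorem differentiableAt_fderiv_of_contDiffAt_two {E F : Type*} [NormedAddCommGroup E]
    [NormedSpace ℝ E] [NormedAddCommGroup F] [NormedSpace ℝ F] {w : E → F} {x : E}
    (hw : ContDiffAt ℝ 2 w x) : DifferentiableAt ℝ (fderiv ℝ w) x :=
  (hw.fderiv_right (m := 1) (by norm_num)).differentiableAt one_ne_zero

theorem hess_apply {w : (Fin n → ℝ) → ℝ} {x : Fin n → ℝ}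
    (hw : DifferentiableAt ℝ (fderiv ℝ w) x) (i j : Fin n) :
    hess w x i j = fderiv ℝ (fderiv ℝ w) x (Pi.single i 1) (Pi.single j 1) := by
  have h := (hw.hasFDerivAt.clm_apply
    (hasFDerivAt_const (Pi.single j 1 : Fin n → ℝ) x)).fderiv
  change fderiv ℝ (fun y => fderiv ℝ w y (Pi.single j 1)) x (Pi.single i 1) = _
  rw [h]
  simp

theorem vnorm_nonneg (v : Fin n → ℝ) : 0 ≤ vnorm v := Real.sqrt_nonneg _

theorem matNorm_nonneg (A : Matrix (Fin n) (Fin n) ℝ) : 0 ≤ matNorm A := norm_nonneg _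

theorem abs_apply_le_vnorm (v : Fin n → ℝ) (i : Fin n) : |v i| ≤ vnorm v := by
  rw [vnorm, ← Real.sqrt_sq_eq_abs]
  exact Real.sqrt_le_sqrt (Finset.single_le_sum (f := fun i => v i ^ 2)
    (fun _ _ => sq_nonneg _) (Finset.mem_univ i))

theorem abs_apply_le_matNorm (A : Matrix (Fin n) (Fin n) ℝ) (i j : Fin n) :
    |A i j| ≤ matNorm A := by
  set T := LinearMap.toContinuousLinearMap (Matrix.toEuclideanLin A)
  have hentry : T (EuclideanSpace.single j (1 : ℝ)) i = A i j := by
    simp [T, Matrix.toLpLin_apply]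
  calc |A i j| = ‖T (EuclideanSpace.single j (1 : ℝ)) i‖ := by rw [hentry, Real.norm_eq_abs]
    _ ≤ ‖T (EuclideanSpace.single j (1 : ℝ))‖ := PiLp.norm_apply_le _ i
    _ ≤ ‖T‖ := by simpa using T.le_opNorm (EuclideanSpace.single j (1 : ℝ))

theorem continuous_matNorm : Continuous (matNorm (n := n)) :=
  (LinearMap.continuous_of_finiteDimensional (LinearMap.toContinuousLinearMap.toLinearMap ∘ₗ
    (Matrix.toEuclideanLin (𝕜 := ℝ) (m := Fin n) (n := Fin n)).toLinearMap)).norm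

theorem norm_fderiv_le_vnorm_grad (w : (Fin n → ℝ) → ℝ) (x : Fin n → ℝ) :
    ‖fderiv ℝ w x‖ ≤ n * vnorm (grad w x) :=
  norm_le_mul_of_apply_single_le (vnorm_nonneg _) fun i => abs_apply_le_vnorm (grad w x) i

theorem norm_fderiv_fderiv_le_matNorm_hess {w : (Fin n → ℝ) → ℝ} {x : Fin n → ℝ}
    (hw : DifferentiableAt ℝ (fderiv ℝ w) x) :
    ‖fderiv ℝ (fderiv ℝ w) x‖ ≤ n * (n * matNorm (hess w x)) :=
  norm_le_mul_of_apply_single_le (mul_nonneg n.cast_nonneg (matNorm_nonneg _)) fun i =>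
    norm_le_mul_of_apply_single_le (matNorm_nonneg _) fun j => by
      simpa only [hess_apply hw, Real.norm_eq_abs] using abs_apply_le_matNorm (hess w x) i j

/-- The integrand of `W2pNorm`. -/
noncomputable def w2pDensity (p : ℝ) (w : (Fin n → ℝ) → ℝ) (x : Fin n → ℝ) : ℝ :=
  |w x| ^ p + vnorm (grad w x) ^ p + matNorm (hess w x) ^ p

section Density

variable (p : ℝ) (w : (Fin n → ℝ) → ℝ) (x : Fin n → ℝ)

theorem abs_rpow_nonneg : 0 ≤ |w x| ^ p := by positivity

theorem vnorm_grad_rpow_nonneg : 0 ≤ vnorm (grad w x) ^ p :=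
  Real.rpow_nonneg (vnorm_nonneg _) p

theorem matNorm_hess_rpow_nonneg : 0 ≤ matNorm (hess w x) ^ p :=
  Real.rpow_nonneg (matNorm_nonneg _) p

theorem abs_rpow_le_w2pDensity : |w x| ^ p ≤ w2pDensity p w x := by
  unfold w2pDensity
  linarith [vnorm_grad_rpow_nonneg p w x, matNorm_hess_rpow_nonneg p w x]

theorem vnorm_grad_rpow_le_w2pDensity : vnorm (grad w x) ^ p ≤ w2pDensity p w x := by
  unfold w2pDensity
  linarith [abs_rpow_nonneg p w x, matNorm_hess_rpow_nonneg p w x]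

theorem matNorm_hess_rpow_le_w2pDensity : matNorm (hess w x) ^ p ≤ w2pDensity p w x := by
  unfold w2pDensity
  linarith [abs_rpow_nonneg p w x, vnorm_grad_rpow_nonneg p w x]

end Density

theorem eLpNorm_le_of_rpow_le {α F : Type*} [MeasurableSpace α] {μ : Measure α}
    [NormedAddCommGroup F] {G : α → F} {b Φ : α → ℝ} {p c M : ℝ} (hp : 0 < p) (hc : 0 ≤ c)
    (hb : 0 ≤ b) (hint : Integrable Φ μ) (hM : (∫ x, Φ x ∂μ) ^ (1 / p) ≤ M)
    (hG : ∀ᵐ x ∂μ, ‖G x‖ ≤ c * b x) (hbΦ : ∀ x, b x ^ p ≤ Φ x) :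
    eLpNorm G (ENNReal.ofReal p) μ ≤ ENNReal.ofReal (c * M) := by
  have hΦ : 0 ≤ Φ := fun x => (Real.rpow_nonneg (hb x) p).trans (hbΦ x)
  have hI : 0 ≤ ∫ x, Φ x ∂μ := integral_nonneg hΦ
  have hlint : ∫⁻ x, ‖G x‖ₑ ^ p ∂μ ≤ ENNReal.ofReal (c ^ p * ∫ x, Φ x ∂μ) := by
    rw [← integral_const_mul, ofReal_integral_eq_lintegral_ofReal (hint.const_mul _)
      (.of_forall fun x => mul_nonneg (Real.rpow_nonneg hc p) (hΦ x))]
    refine lintegral_mono_ae (hG.mono fun x hx => ?_)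
    rw [← ofReal_norm, ENNReal.ofReal_rpow_of_nonneg (norm_nonneg _) hp.le]
    refine ENNReal.ofReal_le_ofReal ?_
    calc ‖G x‖ ^ p ≤ (c * b x) ^ p := by gcongr
      _ = c ^ p * b x ^ p := Real.mul_rpow hc (hb x)
      _ ≤ c ^ p * Φ x := by gcongr; exact hbΦ x
  rw [eLpNorm_eq_lintegral_rpow_enorm_toReal (by simpa using hp) ENNReal.ofReal_ne_top,
    ENNReal.toReal_ofReal hp.le]
  calc (∫⁻ x, ‖G x‖ₑ ^ p ∂μ) ^ (1 / p)
      ≤ ENNReal.ofReal (c ^ p * ∫ x, Φ x ∂μ) ^ (1 / p) := by gcongr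
    _ = ENNReal.ofReal (c * (∫ x, Φ x ∂μ) ^ (1 / p)) := by
        rw [ENNReal.ofReal_rpow_of_nonneg (by positivity) (by positivity),
          Real.mul_rpow (by positivity) hI, ← Real.rpow_mul hc, mul_one_div_cancel hp.ne',
          Real.rpow_one]
    _ ≤ ENNReal.ofReal (c * M) := ENNReal.ofReal_le_ofReal (by gcongr)

variable {Ω B : Set (Fin n → ℝ)} {w : (Fin n → ℝ) → ℝ} {p M : ℝ}

theorem differentiableAt_fderiv_of_contDiffOn_two (hΩ : IsOpen Ω) (hw : ContDiffOn ℝ 2 w Ω)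
    {x : Fin n → ℝ} (hx : x ∈ Ω) : DifferentiableAt ℝ (fderiv ℝ w) x :=
  differentiableAt_fderiv_of_contDiffAt_two (hw.contDiffAt (hΩ.mem_nhds hx))

theorem continuousOn_fderiv_fderiv (hΩ : IsOpen Ω) (hw : ContDiffOn ℝ 2 w Ω) :
    ContinuousOn (fderiv ℝ (fderiv ℝ w)) Ω :=
  (hw.fderiv_of_isOpen hΩ (m := 1) (by norm_num)).continuousOn_fderiv_of_isOpen hΩ le_rfl

theorem continuousOn_hess (hΩ : IsOpen Ω) (hw : ContDiffOn ℝ 2 w Ω) : ContinuousOn (hess w) Ω :=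
  continuousOn_pi.2 fun i => continuousOn_pi.2 fun j =>
    (((continuousOn_fderiv_fderiv hΩ hw).clm_apply continuousOn_const).clm_apply
      continuousOn_const).congr fun _ hx =>
        hess_apply (differentiableAt_fderiv_of_contDiffOn_two hΩ hw hx) i j

theorem integrableOn_w2pDensity (hp : 0 ≤ p) (hΩ : IsOpen Ω) (hB : Bornology.IsBounded B)
    (hcl : closure B ⊆ Ω) (hw : ContDiffOn ℝ 2 w Ω) : IntegrableOn (w2pDensity p w) B := by
  have hgrad : ContinuousOn (grad w) Ω := continuousOn_pi.2 fun i =>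
    (hw.continuousOn_fderiv_of_isOpen hΩ one_le_two).clm_apply continuousOn_const
  have hvnorm : ContinuousOn (fun x => vnorm (grad w x)) Ω :=
    (continuousOn_finsetSum _ fun i _ => (continuousOn_pi.1 hgrad i).pow 2).sqrt
  have hmat := continuous_matNorm.comp_continuousOn (continuousOn_hess hΩ hw)
  have hcont : ContinuousOn (w2pDensity p w) Ω :=
    ((hw.continuousOn.abs.rpow_const fun _ _ => .inr hp).add
      (hvnorm.rpow_const fun _ _ => .inr hp)).add (hmat.rpow_const fun _ _ => .inr hp)
  exact ((hcont.mono hcl).integrableOn_compact hB.isCompact_closure).mono_set subset_closure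

theorem eLpNorm_le_of_W2pNorm_le (hp : 0 < p) (hΩ : IsOpen Ω) (hBm : MeasurableSet B)
    (hB : Bornology.IsBounded B) (hcl : closure B ⊆ Ω) (hw : ContDiffOn ℝ 2 w Ω)
    (hM : W2pNorm p w B ≤ M) {c : ℝ} (hc : 1 ≤ c) (hnc : n ≤ c) (hnnc : n * n ≤ c) :
    eLpNorm w (ENNReal.ofReal p) (volume.restrict B) ≤ ENNReal.ofReal (c * M) ∧
      eLpNorm (fderiv ℝ w) (ENNReal.ofReal p) (volume.restrict B) ≤ ENNReal.ofReal (c * M) ∧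
      eLpNorm (fderiv ℝ (fderiv ℝ w)) (ENNReal.ofReal p) (volume.restrict B) ≤
        ENNReal.ofReal (c * M) := by
  have hc0 : 0 ≤ c := zero_le_one.trans hc
  have hint := integrableOn_w2pDensity hp.le hΩ hB hcl hw
  refine ⟨?_, ?_, ?_⟩
  · exact eLpNorm_le_of_rpow_le hp hc0 (fun x => abs_nonneg (w x)) hint hM
      (.of_forall fun x => le_mul_of_one_le_left (abs_nonneg _) hc) (abs_rpow_le_w2pDensity p w)
  · refine eLpNorm_le_of_rpow_le (b := fun x => vnorm (grad w x)) hp hc0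
      (fun x => vnorm_nonneg _) hint hM
      (.of_forall fun x => ?_) (vnorm_grad_rpow_le_w2pDensity p w)
    exact (norm_fderiv_le_vnorm_grad w x).trans
      (mul_le_mul_of_nonneg_right hnc (vnorm_nonneg _))
  · refine eLpNorm_le_of_rpow_le (G := fderiv ℝ (fderiv ℝ w))
      (b := fun x => matNorm (hess w x)) hp hc0
      (fun x => matNorm_nonneg _) hint hM
      (ae_restrict_of_forall_mem hBm fun x hx => ?_) (matNorm_hess_rpow_le_w2pDensity p w)
    refine (norm_fderiv_fderiv_le_matNorm_hess (differentiableAt_fderiv_of_contDiffOn_two hΩ hw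
      (hcl (subset_closure hx)))).trans ?_
    rw [← mul_assoc]
    exact mul_le_mul_of_nonneg_right hnnc (matNorm_nonneg _)

theorem exists_abs_le_norm_fderiv_le_of_W2pNorm_le (hp : 1 ≤ p) (hnp : n < p) (hΩ : IsOpen Ω)
    {x₀ : Fin n → ℝ} {r : ℝ} (hcl : closure (ball x₀ r) ⊆ Ω) (M : ℝ) :
    ∃ C : ℝ, ∀ w : (Fin n → ℝ) → ℝ, ContDiffOn ℝ 2 w Ω → W2pNorm p w (ball x₀ r) ≤ M →
      ∀ x ∈ ball x₀ r, |w x| ≤ C ∧ ‖fderiv ℝ w x‖ ≤ C := by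
  have hp0 : 0 < p := by linarith
  have hq : 1 ≤ ENNReal.ofReal p := by simpa using hp
  have hdim : (Module.finrank ℝ (Fin n → ℝ) : ENNReal) < ENNReal.ofReal p := by
    rw [Module.finrank_fin_fun, ← ENNReal.ofReal_natCast]
    exact (ENNReal.ofReal_lt_ofReal_iff hp0).2 hnp
  set c : ℝ := n * n + 1
  have hc : 1 ≤ c := le_add_of_nonneg_left (mul_self_nonneg _)
  have hnc : n ≤ c := by nlinarith [sq_nonneg ((n : ℝ) - 1)]
  obtain ⟨C₀, hC₀⟩ := exists_norm_le_of_eLpNorm_le (F := ℝ) volume hq hdim x₀ r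
    (N := ENNReal.ofReal (c * M)) ENNReal.ofReal_ne_top
  obtain ⟨C₁, hC₁⟩ := exists_norm_le_of_eLpNorm_le (F := (Fin n → ℝ) →L[ℝ] ℝ) volume hq hdim x₀ r
    (N := ENNReal.ofReal (c * M)) ENNReal.ofReal_ne_top
  refine ⟨max C₀ C₁, fun w hw hM x hx => ?_⟩
  obtain ⟨h₀, h₁, h₂⟩ := eLpNorm_le_of_W2pNorm_le hp0 hΩ measurableSet_ball isBounded_ball hcl hw hM
    hc hnc (le_add_of_nonneg_right zero_le_one)
  have hball : ball x₀ r ⊆ Ω := subset_closure.trans hcl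
  have hc₁ : ContinuousOn (fderiv ℝ w) (ball x₀ r) :=
    (hw.continuousOn_fderiv_of_isOpen hΩ one_le_two).mono hball
  exact ⟨(hC₀ w (fun z hz => (hw.differentiableOn two_ne_zero).differentiableAt
      (hΩ.mem_nhds (hball hz))) hc₁ h₀ h₁ x hx).trans (le_max_left _ _),
    (hC₁ _ (fun z hz => differentiableAt_fderiv_of_contDiffOn_two hΩ hw (hball hz))
      ((continuousOn_fderiv_fderiv hΩ hw).mono hball) h₁ h₂ x hx).trans (le_max_right _ _)⟩

/-- `c ≤ u ≤ C` and `|∇u| ≤ C` on `U`. -/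
structure HasC1Bounds (c C : ℝ) (u : (Fin n → ℝ) → ℝ) (U : Set (Fin n → ℝ)) : Prop where
  le_apply : ∀ z ∈ U, c ≤ u z
  apply_le : ∀ z ∈ U, u z ≤ C
  norm_fderiv_le : ∀ z ∈ U, ‖fderiv ℝ u z‖ ≤ C

theorem exists_c1_bounds_of_W2pNorm_log_le (hp : 1 ≤ p) (hnp : n < p) (hΩ : IsOpen Ω)
    {x₀ : Fin n → ℝ} {r : ℝ} (hcl : closure (ball x₀ r) ⊆ Ω) (M : ℝ) :
    ∃ c C : ℝ, 0 < c ∧ 0 < C ∧ ∀ u : (Fin n → ℝ) → ℝ, ContDiffOn ℝ 2 u Ω → (∀ x ∈ Ω, 0 < u x) →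
      W2pNorm p (fun x => Real.log (u x)) (ball x₀ r) ≤ M → HasC1Bounds c C u (ball x₀ r) := by
  obtain ⟨K, hK⟩ := exists_abs_le_norm_fderiv_le_of_W2pNorm_le hp hnp hΩ hcl M
  refine ⟨Real.exp (-K), Real.exp K * (1 + |K|), Real.exp_pos _, by positivity,
    fun u hu hpos hM => ?_⟩
  suffices hbounds : ∀ x ∈ ball x₀ r, Real.exp (-K) ≤ u x ∧ u x ≤ Real.exp K * (1 + |K|) ∧
      ‖fderiv ℝ u x‖ ≤ Real.exp K * (1 + |K|) from
    ⟨fun x hx => (hbounds x hx).1, fun x hx => (hbounds x hx).2.1, fun x hx => (hbounds x hx).2.2⟩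
  intro x hx
  have hxΩ : x ∈ Ω := hcl (subset_closure hx)
  obtain ⟨hlog, hdlog⟩ := hK _ (hu.log fun z hz => (hpos z hz).ne') hM x hx
  have hlow : Real.exp (-K) ≤ u x :=
    (Real.le_log_iff_exp_le (hpos x hxΩ)).1 (abs_le.1 hlog).1
  have hupp : u x ≤ Real.exp K := (Real.log_le_iff_le_exp (hpos x hxΩ)).1 (abs_le.1 hlog).2
  have hdu : fderiv ℝ u x = u x • fderiv ℝ (fun z => Real.log (u z)) x := by
    have hd : DifferentiableAt ℝ u x :=
      (hu.differentiableOn two_ne_zero).differentiableAt (hΩ.mem_nhds hxΩ)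
    rw [(hd.hasFDerivAt.log (hpos x hxΩ).ne').fderiv, smul_inv_smul₀ (hpos x hxΩ).ne']
  refine ⟨hlow, hupp.trans (le_mul_of_one_le_right (Real.exp_pos _).le
    (le_add_of_nonneg_right (abs_nonneg K))), ?_⟩
  rw [hdu, norm_smul, Real.norm_of_nonneg (hpos x hxΩ).le]
  exact mul_le_mul hupp (hdlog.trans ((le_abs_self K).trans (le_add_of_nonneg_left zero_le_one)))
    (norm_nonneg _) (Real.exp_pos _).le

end SobolevEmbedding

/-! ### Second derivatives at a maximum -/

section SecondDerivativeTest

theorem second_deriv_nonpos_of_isLocalMax {F F' : ℝ → ℝ} {F'' a : ℝ}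
    (hF : ∀ᶠ t in nhds a, HasDerivAt F (F' t) t) (hF' : HasDerivAt F' F'' a)
    (hmax : IsLocalMax F a) : F'' ≤ 0 := by
  by_contra! hpos
  have hderiv : deriv F =ᶠ[nhds a] F' := hF.mono fun t ht => ht.deriv
  have hmin : IsLocalMin F a := isLocalMin_of_deriv_deriv_pos
    (by rwa [hderiv.deriv_eq, hF'.deriv]) hmax.deriv_eq_zero hF.self_of_nhds.continuousAt
  have hconst : F =ᶠ[nhds a] fun _ => F a := by
    filter_upwards [hmax, hmin] with t hle hge using le_antisymm hle hge
  have hzero : F'' = 0 := by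
    rw [← hF'.deriv, ← hderiv.deriv_eq, hconst.deriv.deriv_eq]
    simp
  exact hpos.ne' hzero

theorem deriv_and_second_deriv_of_isLocalMax_sq_mul {ζ ζ' φ φ' : ℝ → ℝ} {ζ'' φ'' a : ℝ}
    (hζ : ∀ᶠ t in nhds a, HasDerivAt ζ (ζ' t) t) (hζ' : HasDerivAt ζ' ζ'' a)
    (hφ : ∀ᶠ t in nhds a, HasDerivAt φ (φ' t) t) (hφ' : HasDerivAt φ' φ'' a) (ha : ζ a ≠ 0)
    (hmax : IsLocalMax (fun t => ζ t ^ 2 * φ t) a) :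
    φ' a = -2 * ζ' a * φ a / ζ a ∧
      φ'' ≤ φ a * (6 * ζ' a ^ 2 / ζ a ^ 2 - 2 * ζ'' / ζ a) := by
  have hF : ∀ᶠ t in nhds a, HasDerivAt (fun t => ζ t ^ 2 * φ t)
      (2 * ζ t * ζ' t * φ t + ζ t ^ 2 * φ' t) t := by
    filter_upwards [hζ, hφ] with t hζt hφt
    exact ((hζt.pow 2).mul hφt).congr_deriv (by simp)
  have hF' := (((hζ.self_of_nhds.const_mul 2).mul hζ').mul hφ.self_of_nhds).add
    ((hζ.self_of_nhds.pow 2).mul hφ')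
  have hfirst : φ' a = -2 * ζ' a * φ a / ζ a := by
    have h0 := hmax.hasDerivAt_eq_zero hF.self_of_nhds
    rw [eq_div_iff ha]
    refine mul_left_cancel₀ ha ?_
    linear_combination h0
  have hsecond := second_deriv_nonpos_of_isLocalMax hF hF' hmax
  refine ⟨hfirst, sub_nonpos.1 (nonpos_of_mul_nonpos_right ?_ (by positivity : 0 < ζ a ^ 2))⟩
  refine le_of_eq_of_le ?_ hsecond
  rw [hfirst]
  simp only [Pi.mul_apply, Pi.pow_apply]
  field_simp
  ring

variable {E F : Type*} [NormedAddCommGroup E] [NormedSpace ℝ E] [NormedAddCommGroup F]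
  [NormedSpace ℝ F]

theorem hasDerivAt_comp_add_smul {g : E → F} {x e : E} {t : ℝ}
    (hg : DifferentiableAt ℝ g (x + t • e)) :
    HasDerivAt (fun t : ℝ => g (x + t • e)) (fderiv ℝ g (x + t • e) e) t := by
  have hline : HasDerivAt (fun t : ℝ => x + t • e) e t := by
    simpa using ((hasDerivAt_id t).smul_const e).const_add x
  exact hg.hasFDerivAt.comp_hasDerivAt t hline

theorem hasDerivAt_fderiv_comp_add_smul {g : E → F} {x e : E} {t : ℝ}
    (hg : DifferentiableAt ℝ (fderiv ℝ g) (x + t • e)) :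
    HasDerivAt (fun t : ℝ => fderiv ℝ g (x + t • e) e)
      (fderiv ℝ (fderiv ℝ g) (x + t • e) e e) t := by
  simpa using (hasDerivAt_comp_add_smul hg).clm_apply (hasDerivAt_const t e)

theorem fderiv_and_fderiv_fderiv_of_isLocalMax_sq_mul {ζ w : E → ℝ} {x : E}
    (hζ : ContDiffAt ℝ 2 ζ x) (hw : ContDiffAt ℝ 2 w x) (hx : ζ x ≠ 0)
    (hmax : IsLocalMax (fun z => ζ z ^ 2 * w z) x) (e : E) :
    fderiv ℝ w x e = -2 * fderiv ℝ ζ x e * w x / ζ x ∧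
      fderiv ℝ (fderiv ℝ w) x e e ≤ w x * (6 * fderiv ℝ ζ x e ^ 2 / ζ x ^ 2 -
        2 * fderiv ℝ (fderiv ℝ ζ) x e e / ζ x) := by
  have hline : Filter.Tendsto (fun t : ℝ => x + t • e) (nhds 0) (nhds x) :=
    Continuous.tendsto' (by fun_prop) 0 x (by simp)
  have hderiv : ∀ {g : E → ℝ}, ContDiffAt ℝ 2 g x → ∀ᶠ t in nhds (0 : ℝ),
      HasDerivAt (fun t : ℝ => g (x + t • e)) (fderiv ℝ g (x + t • e) e) t := fun hg => by
    filter_upwards [hline.eventually (hg.eventually (by simp))] with t ht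
    exact hasDerivAt_comp_add_smul (ht.differentiableAt two_ne_zero)
  have hderiv₂ : ∀ {g : E → ℝ}, ContDiffAt ℝ 2 g x → HasDerivAt
      (fun t : ℝ => fderiv ℝ g (x + t • e) e) (fderiv ℝ (fderiv ℝ g) x e e) 0 := fun {g} hg => by
    have hd : DifferentiableAt ℝ (fderiv ℝ g) (x + (0 : ℝ) • e) := by
      simpa using differentiableAt_fderiv_of_contDiffAt_two hg
    simpa using hasDerivAt_fderiv_comp_add_smul hd
  have hmax_line : IsLocalMax (fun t : ℝ => ζ (x + t • e) ^ 2 * w (x + t • e)) 0 := by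
    filter_upwards [hline.eventually hmax] with t ht
    simpa using ht
  simpa using deriv_and_second_deriv_of_isLocalMax_sq_mul (hderiv hζ) (hderiv₂ hζ) (hderiv hw)
    (hderiv₂ hw) (by simpa using hx) hmax_line

end SecondDerivativeTest

/-! ### Taylor expansions, uniformly on compact sets -/

section Taylor

variable {E F : Type*} [NormedAddCommGroup E] [NormedSpace ℝ E] [NormedAddCommGroup F]
  [NormedSpace ℝ F]

theorem exists_forall_norm_sub_sub_fderiv_le [ProperSpace E] {g : E → F} {K Ω : Set E}
    (hK : IsCompact K) (hΩ : IsOpen Ω) (hKΩ : K ⊆ Ω) (hg : ContDiffOn ℝ 1 g Ω) {ε : ℝ}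
    (hε : 0 < ε) :
    ∃ δ > 0, ∀ x ∈ K, ∀ v, ‖v‖ ≤ δ →
      x + v ∈ Ω ∧ ‖g (x + v) - g x - fderiv ℝ g x v‖ ≤ ε * ‖v‖ := by
  obtain ⟨δ₁, hδ₁, hthick⟩ := hK.exists_cthickening_subset_open hΩ hKΩ
  have hcont : UniformContinuousOn (fderiv ℝ g) (cthickening δ₁ K) :=
    hK.cthickening.uniformContinuousOn_of_continuous
      ((hg.continuousOn_fderiv_of_isOpen hΩ le_rfl).mono hthick)
  obtain ⟨δ₂, hδ₂, hclose⟩ := Metric.uniformContinuousOn_iff_le.1 hcont ε hε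
  refine ⟨min δ₁ δ₂, lt_min hδ₁ hδ₂, fun x hx v hv => ?_⟩
  have hball : closedBall x ‖v‖ ⊆ cthickening δ₁ K := fun z hz =>
    mem_cthickening_of_dist_le z x δ₁ K hx
      ((mem_closedBall.1 hz).trans (hv.trans (min_le_left _ _)))
  have hxmem : x ∈ closedBall x ‖v‖ := mem_closedBall_self (norm_nonneg v)
  have hvmem : x + v ∈ closedBall x ‖v‖ := by simp
  refine ⟨hthick (hball hvmem), ?_⟩
  have hdiff : ∀ z ∈ closedBall x ‖v‖, DifferentiableAt ℝ g z := fun z hz =>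
    (hg.differentiableOn one_ne_zero).differentiableAt (hΩ.mem_nhds (hthick (hball hz)))
  have hbound : ∀ z ∈ closedBall x ‖v‖, ‖fderiv ℝ g z - fderiv ℝ g x‖ ≤ ε := fun z hz => by
    rw [← dist_eq_norm]
    exact hclose z (hball hz) x (hball hxmem)
      ((mem_closedBall.1 hz).trans (hv.trans (min_le_right _ _)))
  simpa using (convex_closedBall x ‖v‖).norm_image_sub_le_of_norm_fderiv_le' hdiff hbound
    hxmem hvmem

theorem norm_sub_taylor_two_le {g : E → F} {x v : E} {ε : ℝ} (hε : 0 ≤ ε)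
    (hg : ∀ t ∈ Icc (0 : ℝ) 1, DifferentiableAt ℝ g (x + t • v))
    (hg' : ∀ t ∈ Icc (0 : ℝ) 1, ‖fderiv ℝ g (x + t • v) - fderiv ℝ g x -
      fderiv ℝ (fderiv ℝ g) x (t • v)‖ ≤ ε * ‖t • v‖) :
    ‖g (x + v) - g x - fderiv ℝ g x v - (1 / 2 : ℝ) • fderiv ℝ (fderiv ℝ g) x v v‖
      ≤ ε * ‖v‖ ^ 2 := by
  set D := fderiv ℝ g x v
  set H := fderiv ℝ (fderiv ℝ g) x v v
  have hderiv : ∀ t ∈ Icc (0 : ℝ) 1, HasDerivWithinAt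
      (fun t : ℝ => g (x + t • v) - t • D - (t ^ 2 / 2) • H)
      (fderiv ℝ g (x + t • v) v - D - t • H) (Icc 0 1) t := fun t ht => by
    have h := ((hasDerivAt_comp_add_smul (hg t ht)).sub ((hasDerivAt_id t).smul_const D)).sub
      (((hasDerivAt_pow 2 t).div_const 2).smul_const H)
    exact (h.congr_deriv (by simp)).hasDerivWithinAt
  have hbound : ∀ t ∈ Ico (0 : ℝ) 1, ‖fderiv ℝ g (x + t • v) v - D - t • H‖ ≤ ε * ‖v‖ ^ 2 :=
    fun t ht => by
      have htv : ‖t • v‖ ≤ ‖v‖ := by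
        rw [norm_smul, Real.norm_eq_abs, abs_of_nonneg ht.1]
        exact mul_le_of_le_one_left (norm_nonneg v) ht.2.le
      calc ‖fderiv ℝ g (x + t • v) v - D - t • H‖
          = ‖(fderiv ℝ g (x + t • v) - fderiv ℝ g x - fderiv ℝ (fderiv ℝ g) x (t • v)) v‖ := by
            simp [D, H]
        _ ≤ ε * ‖t • v‖ * ‖v‖ :=
            ContinuousLinearMap.le_of_opNorm_le _ (hg' t (Ico_subset_Icc_self ht)) v
        _ ≤ ε * ‖v‖ * ‖v‖ := by gcongr
        _ = ε * ‖v‖ ^ 2 := by ring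
  have h := norm_image_sub_le_of_norm_deriv_le_segment_01' hderiv hbound
  refine le_of_eq_of_le (congrArg norm ?_) h
  simp
  abel

theorem exists_forall_norm_sub_taylor_two_le [ProperSpace E] {g : E → F} {K Ω : Set E}
    (hK : IsCompact K) (hΩ : IsOpen Ω) (hKΩ : K ⊆ Ω) (hg : ContDiffOn ℝ 2 g Ω) {ε : ℝ}
    (hε : 0 < ε) :
    ∃ δ > 0, ∀ x ∈ K, ∀ v, ‖v‖ ≤ δ → x + v ∈ Ω ∧
      ‖fderiv ℝ g (x + v) - fderiv ℝ g x - fderiv ℝ (fderiv ℝ g) x v‖ ≤ ε * ‖v‖ ∧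
      ‖g (x + v) - g x - fderiv ℝ g x v - (1 / 2 : ℝ) • fderiv ℝ (fderiv ℝ g) x v v‖
        ≤ ε * ‖v‖ ^ 2 := by
  obtain ⟨δ, hδ, htaylor⟩ := exists_forall_norm_sub_sub_fderiv_le hK hΩ hKΩ
    (hg.fderiv_of_isOpen hΩ (m := 1) (by norm_num)) hε
  refine ⟨δ, hδ, fun x hx v hv => ⟨(htaylor x hx v hv).1, (htaylor x hx v hv).2, ?_⟩⟩
  have hsmul : ∀ t ∈ Icc (0 : ℝ) 1, ‖t • v‖ ≤ δ := fun t ht => by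
    rw [norm_smul, Real.norm_eq_abs, abs_of_nonneg ht.1]
    exact (mul_le_of_le_one_left (norm_nonneg v) ht.2).trans hv
  exact norm_sub_taylor_two_le hε.le
    (fun t ht => (hg.differentiableOn two_ne_zero).differentiableAt
      (hΩ.mem_nhds (htaylor x hx _ (hsmul t ht)).1))
    fun t ht => (htaylor x hx _ (hsmul t ht)).2

theorem C11On.exists_norm_sub_sub_fderiv_le {f : E → F} {V K : Set E} (hf : C11On f V)
    (hV : IsOpen V) (hK : IsCompact K) (hconv : Convex ℝ K) (hKV : K ⊆ V) :
    ∃ L, 0 ≤ L ∧ ∀ z ∈ K, ‖fderiv ℝ f z‖ ≤ L ∧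
      ∀ z' ∈ K, ‖f z' - f z - fderiv ℝ f z (z' - z)‖ ≤ L * ‖z' - z‖ ^ 2 := by
  obtain ⟨hf₁, hlip⟩ := hf
  obtain ⟨L, hL⟩ := hK.exists_bound_of_continuousOn
    ((hf₁.continuousOn_fderiv_of_isOpen hV le_rfl).mono hKV)
  have hlocal : LocallyLipschitzOn K (fderivWithin ℝ f V) := fun z hz => by
    obtain ⟨c, t, ht, hc⟩ := hlip z (hKV hz)
    exact ⟨c, t, nhdsWithin_mono _ hKV ht, hc⟩
  obtain ⟨c, hc⟩ := hlocal.exists_lipschitzOnWith_of_compact hK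
  have hdist : ∀ y ∈ K, ∀ z ∈ K, ‖fderiv ℝ f y - fderiv ℝ f z‖ ≤ c * ‖y - z‖ :=
    fun y hy z hz => by
      simpa only [dist_eq_norm, fderivWithin_of_isOpen hV (hKV hy),
        fderivWithin_of_isOpen hV (hKV hz)] using hc.dist_le_mul y hy z hz
  refine ⟨max L c, c.coe_nonneg.trans (le_max_right _ _), fun z hz =>
    ⟨(hL z hz).trans (le_max_left _ _), fun z' hz' => ?_⟩⟩
  have hseg : segment ℝ z z' ⊆ K := hconv.segment_subset hz hz'
  have hbound : ∀ y ∈ segment ℝ z z', ‖fderiv ℝ f y - fderiv ℝ f z‖ ≤ c * ‖z' - z‖ :=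
    fun y hy => (hdist y (hseg hy) z hz).trans (by gcongr; exact norm_sub_le_of_mem_segment hy)
  calc ‖f z' - f z - fderiv ℝ f z (z' - z)‖ ≤ c * ‖z' - z‖ * ‖z' - z‖ :=
        (convex_segment z z').norm_image_sub_le_of_norm_fderiv_le'
          (fun y hy => (hf₁.differentiableOn one_ne_zero).differentiableAt
            (hV.mem_nhds (hKV (hseg hy)))) hbound (left_mem_segment ℝ z z')
          (right_mem_segment ℝ z z')
    _ = c * ‖z' - z‖ ^ 2 := by ring
    _ ≤ max L c * ‖z' - z‖ ^ 2 := by gcongr; exact le_max_right _ _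

end Taylor

/-! ### The discrete Laplacian -/

section DiscreteLaplacian

variable {n : ℕ}

/-- The coordinate directions `e_i` and `-e_i`. -/
noncomputable def signedBasis : Fin n × Bool → (Fin n → ℝ)
  | (i, true) => Pi.single i 1
  | (i, false) => -Pi.single i 1

theorem norm_signedBasis (m : Fin n × Bool) : ‖signedBasis m‖ = 1 := by
  rcases m with ⟨i, _ | _⟩ <;> simp [signedBasis, Pi.norm_single]

theorem sum_signedBasis : ∑ m, signedBasis (n := n) m = 0 := by
  simp [Fintype.sum_prod_type, signedBasis]

theorem sum_bilin_signedBasis (L : (Fin n → ℝ) →L[ℝ] (Fin n → ℝ) →L[ℝ] ℝ) :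
    ∑ m, L (signedBasis m) (signedBasis m) =
      2 * ∑ i, L (Pi.single i 1) (Pi.single i 1) := by
  simp [Fintype.sum_prod_type, signedBasis, Finset.mul_sum, two_mul]

theorem sum_sum_vecMul_signedBasis_sq (A : Matrix (Fin n) (Fin n) ℝ) :
    ∑ m, ∑ i, (signedBasis m ᵥ* A) i ^ 2 = 2 * ∑ l, ∑ i, A l i ^ 2 := by
  simp [Fintype.sum_prod_type, signedBasis, Finset.mul_sum, two_mul, Matrix.neg_vecMul,
    Finset.sum_add_distrib]

/-- The discrete Laplacian `h⁻² ∑ᵢ (g(x + h eᵢ) + g(x - h eᵢ) - 2 g(x))`, which is the sum over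
`i` of the second difference quotients `ddq i h g x` when `g` is real valued. -/
noncomputable def discreteLapl {G : Type*} [AddCommGroup G] [Module ℝ G] (h : ℝ)
    (g : (Fin n → ℝ) → G) (x : Fin n → ℝ) : G :=
  (h ^ 2)⁻¹ • ∑ m, (g (x + h • signedBasis m) - g x)

section Algebra

variable {G G' : Type*} [AddCommGroup G] [Module ℝ G] [AddCommGroup G'] [Module ℝ G']

theorem map_discreteLapl (L : G →ₗ[ℝ] G') (h : ℝ) (g : (Fin n → ℝ) → G) (x : Fin n → ℝ) :
    L (discreteLapl h g x) = discreteLapl h (fun z => L (g z)) x := by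
  simp [discreteLapl]

theorem discreteLapl_add (h : ℝ) (g₁ g₂ : (Fin n → ℝ) → G) (x : Fin n → ℝ) :
    discreteLapl h (fun z => g₁ z + g₂ z) x = discreteLapl h g₁ x + discreteLapl h g₂ x := by
  simp only [discreteLapl, add_sub_add_comm, Finset.sum_add_distrib, smul_add]

theorem discreteLapl_le_discreteLapl {h : ℝ} {g₁ g₂ : (Fin n → ℝ) → ℝ} {x : Fin n → ℝ}
    (hle : ∀ m, g₁ (x + h • signedBasis m) - g₁ x ≤ g₂ (x + h • signedBasis m) - g₂ x) :
    discreteLapl h g₁ x ≤ discreteLapl h g₂ x :=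
  mul_le_mul_of_nonneg_left (Finset.sum_le_sum fun m _ => hle m) (by positivity)

theorem discreteLapl_id (h : ℝ) (x : Fin n → ℝ) : discreteLapl h (fun z => z) x = 0 := by
  simp [discreteLapl, ← Finset.smul_sum, sum_signedBasis]

end Algebra

section Calculus

variable {F : Type*} [NormedAddCommGroup F] [NormedSpace ℝ F] {h : ℝ}
  {g : (Fin n → ℝ) → F} {x : Fin n → ℝ}

theorem continuousOn_discreteLapl {s U : Set (Fin n → ℝ)} (hg : ContinuousOn g U) (hs : s ⊆ U)
    (hsh : ∀ z ∈ s, ∀ m, z + h • signedBasis m ∈ U) : ContinuousOn (discreteLapl h g) s := by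
  unfold discreteLapl
  exact (continuousOn_finsetSum _ fun m _ =>
    (hg.comp (by fun_prop) fun z hz => hsh z hz m).sub (hg.mono hs)).const_smul _

theorem hasFDerivAt_discreteLapl (hx : DifferentiableAt ℝ g x)
    (hxm : ∀ m, DifferentiableAt ℝ g (x + h • signedBasis m)) :
    HasFDerivAt (discreteLapl h g) (discreteLapl h (fderiv ℝ g) x) x :=
  (HasFDerivAt.fun_sum fun m _ =>
    ((hasFDerivAt_comp_add_right _).2 (hxm m).hasFDerivAt).sub hx.hasFDerivAt).const_smul _

variable (hx : ContDiffAt ℝ 2 g x) (hxm : ∀ m, ContDiffAt ℝ 2 g (x + h • signedBasis m))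

include hx hxm

theorem contDiffAt_discreteLapl : ContDiffAt ℝ 2 (discreteLapl h g) x := by
  unfold discreteLapl
  exact (ContDiffAt.sum fun m _ =>
    ((hxm m).comp x (by fun_prop)).sub hx).const_smul _

theorem fderiv_fderiv_discreteLapl :
    fderiv ℝ (fderiv ℝ (discreteLapl h g)) x = discreteLapl h (fderiv ℝ (fderiv ℝ g)) x := by
  have hshift : ∀ m, ∀ᶠ z in nhds x, ContDiffAt ℝ 2 g (z + h • signedBasis m) := fun m =>
    (Continuous.tendsto (by fun_prop) x).eventually ((hxm m).eventually (by simp))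
  have heq : fderiv ℝ (discreteLapl h g) =ᶠ[nhds x] discreteLapl h (fderiv ℝ g) := by
    filter_upwards [hx.eventually (by simp), Filter.eventually_all.2 hshift] with z hz hzm
    exact (hasFDerivAt_discreteLapl (hz.differentiableAt two_ne_zero)
      fun m => (hzm m).differentiableAt two_ne_zero).fderiv
  rw [heq.fderiv_eq]
  exact (hasFDerivAt_discreteLapl (differentiableAt_fderiv_of_contDiffAt_two hx)
    fun m => differentiableAt_fderiv_of_contDiffAt_two (hxm m)).fderiv

end Calculus

section Real

variable {u : (Fin n → ℝ) → ℝ} {x : Fin n → ℝ}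

theorem pd_discreteLapl {h : ℝ} (hx : DifferentiableAt ℝ u x)
    (hxm : ∀ m, DifferentiableAt ℝ u (x + h • signedBasis m)) (i : Fin n) :
    pd i (discreteLapl h u) x = discreteLapl h (pd i u) x := by
  rw [pd, (hasFDerivAt_discreteLapl hx hxm).fderiv]
  exact map_discreteLapl (ContinuousLinearMap.apply ℝ ℝ (Pi.single i 1)).toLinearMap _ _ _

theorem lapl_eq_sum_fderiv_fderiv (hu : DifferentiableAt ℝ (fderiv ℝ u) x) :
    lapl u x = ∑ i, fderiv ℝ (fderiv ℝ u) x (Pi.single i 1) (Pi.single i 1) :=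
  Finset.sum_congr rfl fun i _ => hess_apply hu i i

theorem abs_discreteLapl_sub_lapl_le {h ε : ℝ} (hh : 0 < h)
    (hu : DifferentiableAt ℝ (fderiv ℝ u) x)
    (htaylor : ∀ v, ‖v‖ ≤ h → |u (x + v) - u x - fderiv ℝ u x v -
      (1 / 2 : ℝ) * fderiv ℝ (fderiv ℝ u) x v v| ≤ ε * ‖v‖ ^ 2) :
    |discreteLapl h u x - lapl u x| ≤ 2 * n * ε := by
  set r : Fin n × Bool → ℝ := fun m => u (x + h • signedBasis m) - u x -
    fderiv ℝ u x (h • signedBasis m) -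
    (1 / 2 : ℝ) * fderiv ℝ (fderiv ℝ u) x (h • signedBasis m) (h • signedBasis m)
  have hnorm : ∀ m : Fin n × Bool, ‖h • signedBasis m‖ = h := fun m => by
    rw [norm_smul, norm_signedBasis, mul_one, Real.norm_eq_abs, abs_of_pos hh]
  have hsplit : discreteLapl h u x - lapl u x = (h ^ 2)⁻¹ * ∑ m, r m := by
    have hfirst : ∑ m : Fin n × Bool, fderiv ℝ u x (h • signedBasis m) = 0 := by
      simp only [map_smul, ← Finset.smul_sum, ← map_sum, sum_signedBasis, map_zero, smul_zero]
    have hsecond : ∑ m : Fin n × Bool, fderiv ℝ (fderiv ℝ u) x (h • signedBasis m)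
        (h • signedBasis m) = h ^ 2 * (2 * lapl u x) := by
      simp only [map_smul, _root_.smul_apply, smul_eq_mul, ← Finset.mul_sum,
        sum_bilin_signedBasis, lapl_eq_sum_fderiv_fderiv hu]
      ring
    simp only [r, discreteLapl, Finset.sum_sub_distrib, ← Finset.mul_sum, hfirst, hsecond,
      smul_eq_mul]
    field_simp
    ring
  rw [hsplit, abs_mul, abs_of_nonneg (by positivity), inv_mul_le_iff₀ (by positivity)]
  calc |∑ m, r m| ≤ ∑ m : Fin n × Bool, ε * h ^ 2 :=
        (Finset.abs_sum_le_sum_abs _ _).trans (Finset.sum_le_sum fun m _ => by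
          simpa only [hnorm] using htaylor _ (hnorm m).le)
    _ = h ^ 2 * (2 * n * ε) := by
        rw [Finset.sum_const, Finset.card_univ, Fintype.card_prod, Fintype.card_fin,
          Fintype.card_bool, nsmul_eq_mul]
        push_cast
        ring

theorem hess_discreteLapl {h : ℝ} (hx : ContDiffAt ℝ 2 u x)
    (hxm : ∀ m, ContDiffAt ℝ 2 u (x + h • signedBasis m)) :
    hess (discreteLapl h u) x = discreteLapl h (hess u) x := by
  ext i j
  rw [hess_apply (differentiableAt_fderiv_of_contDiffAt_two (contDiffAt_discreteLapl hx hxm)),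
    fderiv_fderiv_discreteLapl hx hxm]
  simp only [discreteLapl, _root_.smul_apply, _root_.sum_apply,
    _root_.sub_apply, Matrix.smul_apply, Matrix.sum_apply, Matrix.sub_apply,
    hess_apply (differentiableAt_fderiv_of_contDiffAt_two hx),
    hess_apply (differentiableAt_fderiv_of_contDiffAt_two (hxm _))]

end Real

end DiscreteLaplacian

/-! ### Hessian matrices and the cutoff function -/

section HessianMatrix

variable {n : ℕ}

theorem normSq_eq_dotProduct (v : Fin n → ℝ) : normSq v = v ⬝ᵥ v := by
  simp only [normSq, dotProduct, sq]

theorem normSq_nonneg (v : Fin n → ℝ) : 0 ≤ normSq v :=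
  Finset.sum_nonneg fun _ _ => sq_nonneg _

theorem sq_apply_le_normSq (v : Fin n → ℝ) (i : Fin n) : v i ^ 2 ≤ normSq v :=
  Finset.single_le_sum (f := fun i => v i ^ 2) (fun _ _ => sq_nonneg _) (Finset.mem_univ i)

theorem normSq_le_of_abs_apply_le {v : Fin n → ℝ} {C : ℝ} (hv : ∀ i, |v i| ≤ C) :
    normSq v ≤ n * C ^ 2 := by
  calc normSq v ≤ ∑ _i : Fin n, C ^ 2 :=
        Finset.sum_le_sum fun i _ => sq_le_sq.2 ((hv i).trans (le_abs_self C))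
    _ = n * C ^ 2 := by simp

theorem matNorm_le_of_abs_apply_le {A : Matrix (Fin n) (Fin n) ℝ} {c : ℝ} (hc : 0 ≤ c)
    (hA : ∀ i j, |A i j| ≤ c) : matNorm A ≤ n * (n * c) := by
  refine ContinuousLinearMap.opNorm_le_bound _ (by positivity) fun v => ?_
  set y := LinearMap.toContinuousLinearMap (Matrix.toEuclideanLin A) v
  have hy : ∀ i, ‖y i‖ ≤ n * c * ‖v‖ := fun i => by
    have hyi : y i = ∑ j, A i j * v j := by
      simp [y, Matrix.toLpLin_apply, Matrix.mulVec, dotProduct]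
    calc ‖y i‖ ≤ ∑ _j : Fin n, c * ‖v‖ := by
          rw [hyi]
          refine norm_sum_le_of_le _ fun j _ => ?_
          rw [norm_mul]
          exact mul_le_mul (hA i j) (PiLp.norm_apply_le v j) (norm_nonneg _) hc
      _ = n * c * ‖v‖ := by simp [mul_assoc]
  calc ‖y‖ = ‖∑ i, y i • EuclideanSpace.basisFun (Fin n) ℝ i‖ := by
        conv_lhs => rw [← (EuclideanSpace.basisFun (Fin n) ℝ).sum_repr y]
        rfl
    _ ≤ ∑ _i : Fin n, n * c * ‖v‖ := norm_sum_le_of_le _ fun i _ => by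
        simpa [norm_smul] using hy i
    _ = n * (n * c) * ‖v‖ := by simp [mul_assoc]

variable {w : (Fin n → ℝ) → ℝ} {x : Fin n → ℝ}

theorem vecMul_hess_apply (hw : DifferentiableAt ℝ (fderiv ℝ w) x) (v : Fin n → ℝ) (j : Fin n) :
    (v ᵥ* hess w x) j = fderiv ℝ (fderiv ℝ w) x v (Pi.single j 1) := by
  rw [← sum_smul_apply_single (fderiv ℝ (fderiv ℝ w) x) v]
  simp [Matrix.vecMul, dotProduct, hess_apply hw]

theorem dotProduct_hess_mulVec (hw : DifferentiableAt ℝ (fderiv ℝ w) x) (e : Fin n → ℝ) :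
    e ⬝ᵥ hess w x *ᵥ e = fderiv ℝ (fderiv ℝ w) x e e := by
  rw [dotProduct_mulVec, ← sum_smul_apply_single (fderiv ℝ (fderiv ℝ w) x e) e]
  simp [dotProduct, vecMul_hess_apply hw, mul_comm]

theorem isHermitian_hess (hw : ContDiffAt ℝ 2 w x) : (hess w x).IsHermitian :=
  Matrix.IsHermitian.ext fun i j => by
    simp only [hess_apply (differentiableAt_fderiv_of_contDiffAt_two hw), star_trivial]
    exact hw.isSymmSndFDerivAt (by simp) _ _

theorem trace_hess : (hess w x).trace = lapl w x := rfl

theorem lapl_sq_le : lapl w x ^ 2 ≤ n * ∑ l, ∑ i, hess w x l i ^ 2 := by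
  calc lapl w x ^ 2 = (∑ l, hess w x l l) ^ 2 := rfl
    _ ≤ n * ∑ l, hess w x l l ^ 2 := by
        simpa only [Finset.card_univ, Fintype.card_fin] using
          sq_sum_le_card_mul_sum_sq (s := Finset.univ) (f := fun l => hess w x l l)
    _ ≤ n * ∑ l, ∑ i, hess w x l i ^ 2 := by
        gcongr with l
        exact Finset.single_le_sum (f := fun i => hess w x l i ^ 2) (fun _ _ => sq_nonneg _)
          (Finset.mem_univ l)

/-- The cutoff function `ρ² - |x - y|²`, positive exactly on the Euclidean ball of radius `ρ`
around `y`. -/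
noncomputable def cutoff (ρ : ℝ) (y x : Fin n → ℝ) : ℝ := ρ ^ 2 - normSq (x - y)

variable {ρ : ℝ} {y : Fin n → ℝ}

theorem contDiff_cutoff : ContDiff ℝ 2 (cutoff ρ y) := by
  unfold cutoff normSq
  exact contDiff_const.sub (ContDiff.sum fun i _ =>
    (((contDiff_apply ℝ ℝ i).sub contDiff_const)).pow 2)

theorem hasFDerivAt_cutoff (x : Fin n → ℝ) : HasFDerivAt (cutoff ρ y)
    (-∑ i, (2 * (x i - y i)) • ContinuousLinearMap.proj (R := ℝ) (φ := fun _ => ℝ) i) x := by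
  unfold cutoff normSq
  refine HasFDerivAt.const_sub (HasFDerivAt.fun_sum fun i _ => ?_) _
  simpa using ((hasFDerivAt_apply i x).sub_const (y i)).pow 2

theorem fderiv_cutoff_apply (x e : Fin n → ℝ) :
    fderiv ℝ (cutoff ρ y) x e = -2 * ((x - y) ⬝ᵥ e) := by
  simp [(hasFDerivAt_cutoff x).fderiv, dotProduct, Finset.mul_sum, mul_assoc]

theorem fderiv_fderiv_cutoff_apply (x e : Fin n → ℝ) :
    fderiv ℝ (fderiv ℝ (cutoff ρ y)) x e e = -2 * (e ⬝ᵥ e) := by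
  have hderiv := ((differentiableAt_fderiv_of_contDiffAt_two
    (contDiff_cutoff (ρ := ρ) (y := y)).contDiffAt).hasFDerivAt (x := x)).clm_apply
      (hasFDerivAt_const e x)
  have hlin : HasFDerivAt (fun z => fderiv ℝ (cutoff ρ y) z e)
      (-∑ i, (2 * e i) • ContinuousLinearMap.proj (R := ℝ) (φ := fun _ => ℝ) i) x := by
    simp only [fderiv_cutoff_apply, dotProduct, Finset.mul_sum, ← Finset.sum_neg_distrib]
    refine HasFDerivAt.fun_sum fun i _ => ?_
    refine ((((hasFDerivAt_apply i x).sub_const (y i)).mul_const (e i)).const_mul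
      (-2)).congr_fderiv ?_
    ext v
    simp only [_root_.smul_apply, _root_.neg_apply, smul_eq_mul,
      ContinuousLinearMap.proj_apply]
    ring
  have h := congrArg (fun L => L e) (hderiv.unique hlin)
  simpa [dotProduct, Finset.mul_sum, mul_assoc] using h

theorem normSq_sub_lt_of_cutoff_pos (hx : 0 < cutoff ρ y x) : normSq (x - y) < ρ ^ 2 := by
  unfold cutoff at hx
  linarith

theorem abs_pd_le_of_isLocalMax_cutoff_sq_mul (hρ : 0 ≤ ρ) (hw : ContDiffAt ℝ 2 w x)
    (hx : 0 < cutoff ρ y x) (hwx : 0 ≤ w x)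
    (hmax : IsLocalMax (fun z => cutoff ρ y z ^ 2 * w z) x) (i : Fin n) :
    |pd i w x| ≤ 4 * ρ * w x / cutoff ρ y x := by
  have hcoord : |x i - y i| ≤ ρ := abs_le_of_sq_le_sq
    ((sq_apply_le_normSq (x - y) i).trans (normSq_sub_lt_of_cutoff_pos hx).le) hρ
  rw [pd, (fderiv_and_fderiv_fderiv_of_isLocalMax_sq_mul contDiff_cutoff.contDiffAt hw hx.ne'
    hmax _).1, fderiv_cutoff_apply, dotProduct_single, abs_div, abs_of_pos hx, abs_mul,
    abs_of_nonneg hwx]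
  gcongr
  calc |-2 * (-2 * ((x - y) i * 1))| = 4 * |x i - y i| := by
        rw [Pi.sub_apply, show -2 * (-2 * ((x i - y i) * 1)) = 4 * (x i - y i) by ring, abs_mul,
          abs_of_pos (by norm_num)]
    _ ≤ 4 * ρ := by gcongr

theorem dotProduct_hess_mulVec_le_of_isLocalMax_cutoff_sq_mul (hw : ContDiffAt ℝ 2 w x)
    (hx : 0 < cutoff ρ y x) (hwx : 0 ≤ w x)
    (hmax : IsLocalMax (fun z => cutoff ρ y z ^ 2 * w z) x) (e : Fin n → ℝ) :
    e ⬝ᵥ hess w x *ᵥ e ≤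
      w x * (24 * ρ ^ 2 / cutoff ρ y x ^ 2 + 4 / cutoff ρ y x) * (e ⬝ᵥ e) := by
  have hcauchy : ((x - y) ⬝ᵥ e) ^ 2 ≤ ρ ^ 2 * (e ⬝ᵥ e) := by
    calc ((x - y) ⬝ᵥ e) ^ 2 ≤ normSq (x - y) * normSq e :=
          Finset.sum_mul_sq_le_sq_mul_sq _ _ _
      _ ≤ ρ ^ 2 * (e ⬝ᵥ e) := by
          rw [← normSq_eq_dotProduct]
          gcongr
          · exact normSq_nonneg e
          · exact (normSq_sub_lt_of_cutoff_pos hx).le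
  rw [dotProduct_hess_mulVec (differentiableAt_fderiv_of_contDiffAt_two hw), mul_assoc]
  refine (fderiv_and_fderiv_fderiv_of_isLocalMax_sq_mul contDiff_cutoff.contDiffAt hw hx.ne'
    hmax e).2.trans ?_
  rw [fderiv_cutoff_apply, fderiv_fderiv_cutoff_apply]
  gcongr
  calc 6 * (-2 * ((x - y) ⬝ᵥ e)) ^ 2 / cutoff ρ y x ^ 2 - 2 * (-2 * (e ⬝ᵥ e)) / cutoff ρ y x
      = 24 * ((x - y) ⬝ᵥ e) ^ 2 / cutoff ρ y x ^ 2 + 4 * (e ⬝ᵥ e) / cutoff ρ y x := by ring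
    _ ≤ 24 * (ρ ^ 2 * (e ⬝ᵥ e)) / cutoff ρ y x ^ 2 + 4 * (e ⬝ᵥ e) / cutoff ρ y x := by gcongr
    _ = (24 * ρ ^ 2 / cutoff ρ y x ^ 2 + 4 / cutoff ρ y x) * (e ⬝ᵥ e) := by ring

end HessianMatrix

/-! ### Discrete Laplacians of functions of the `1`-jet -/

section Jet

variable {n : ℕ} {U : Set (Fin n → ℝ)} {u : (Fin n → ℝ) → ℝ} {x : Fin n → ℝ} {c C h : ℝ}

theorem HasC1Bounds.abs_pd_le (hb : HasC1Bounds c C u U) (hx : x ∈ U) (i : Fin n) :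
    |pd i u x| ≤ C :=
  (norm_apply_single_le (fderiv ℝ u x) i).trans (hb.norm_fderiv_le x hx)

theorem HasC1Bounds.normSq_grad_le (hb : HasC1Bounds c C u U) (hx : x ∈ U) :
    normSq (grad u x) ≤ n * C ^ 2 :=
  normSq_le_of_abs_apply_le fun i => hb.abs_pd_le hx i

/-- The step `h` resolves `u` at `x`: the difference quotients of `u` and `∇u` in the coordinate
directions and the discrete Laplacian of `u` are controlled by the derivatives of `u`. -/
structure IsGoodStep (U : Set (Fin n → ℝ)) (h C : ℝ) (u : (Fin n → ℝ) → ℝ) (x : Fin n → ℝ) :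
    Prop where
  shift_mem : ∀ m, x + h • signedBasis m ∈ U
  abs_shift_sub_le : ∀ m, |u (x + h • signedBasis m) - u x| ≤ h * C
  abs_pd_shift_sub_le : ∀ m i,
    |pd i u (x + h • signedBasis m) - pd i u x - h * (signedBasis m ᵥ* hess u x) i| ≤ h
  abs_discreteLapl_sub_lapl_le : |discreteLapl h u x - lapl u x| ≤ 1

theorem norm_smul_signedBasis (hh : 0 ≤ h) (m : Fin n × Bool) : ‖h • signedBasis m‖ = h := by
  rw [norm_smul, norm_signedBasis, mul_one, Real.norm_of_nonneg hh]

theorem exists_isGoodStep {K : Set (Fin n → ℝ)} (hU : IsOpen U) (hconv : Convex ℝ U)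
    (hK : IsCompact K) (hKU : K ⊆ U) (hu : ContDiffOn ℝ 2 u U) (hb : HasC1Bounds c C u U) :
    ∃ h > 0, ∀ x ∈ K, IsGoodStep U h C u x := by
  obtain ⟨h, hh, htaylor⟩ := exists_forall_norm_sub_taylor_two_le hK hU hKU hu
    (ε := 1 / (2 * n + 1)) (by positivity)
  refine ⟨h, hh, fun x hx => ?_⟩
  have hdiff := differentiableAt_fderiv_of_contDiffOn_two hU hu (hKU hx)
  have hmem : ∀ m, x + h • signedBasis m ∈ U := fun m =>
    (htaylor x hx _ (norm_smul_signedBasis hh.le m).le).1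
  refine ⟨hmem, fun m => ?_, fun m i => ?_, ?_⟩
  · have hmvt := hconv.norm_image_sub_le_of_norm_fderiv_le
      (fun z hz => (hu.differentiableOn two_ne_zero).differentiableAt (hU.mem_nhds hz))
      hb.norm_fderiv_le (hKU hx) (hmem m)
    rwa [add_sub_cancel_left, norm_smul_signedBasis hh.le, mul_comm] at hmvt
  · set L := fderiv ℝ u (x + h • signedBasis m) - fderiv ℝ u x -
      fderiv ℝ (fderiv ℝ u) x (h • signedBasis m) with hL
    calc |pd i u (x + h • signedBasis m) - pd i u x - h * (signedBasis m ᵥ* hess u x) i|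
        = ‖L (Pi.single i 1)‖ := by
          simp [hL, pd, vecMul_hess_apply hdiff]
      _ ≤ ‖L‖ := norm_apply_single_le L i
      _ ≤ 1 / (2 * n + 1) * h := by
          simpa only [norm_smul_signedBasis hh.le] using
            (htaylor x hx _ (norm_smul_signedBasis hh.le m).le).2.1
      _ ≤ h := mul_le_of_le_one_left hh.le (by
          rw [div_le_one (by positivity)]
          linarith [n.cast_nonneg (α := ℝ)])
  · refine (abs_discreteLapl_sub_lapl_le hh hdiff fun v hv =>
      (htaylor x hx v hv).2.2).trans ?_
    rw [mul_one_div, div_le_one (by positivity)]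
    linarith

/-- The scalar `|∇u|² / (2u)` in the conformal Hessian. -/
noncomputable def gradQuot (u : (Fin n → ℝ) → ℝ) (x : Fin n → ℝ) : ℝ :=
  normSq (grad u x) / (2 * u x)

/-- The exact second order remainder of the convex function `(s, a) ↦ a² / (2s)`. -/
theorem sq_div_two_mul_sub {a a' s s' : ℝ} (hs : s ≠ 0) (hs' : s' ≠ 0) :
    a' ^ 2 / (2 * s') - a ^ 2 / (2 * s) =
      a * (a' - a) / s - a ^ 2 * (s' - s) / (2 * s ^ 2) +
        (a' - a - (s' - s) * a / s) ^ 2 / (2 * s') := by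
  field_simp
  ring

theorem le_sq_sub_div {a a' s s' H : ℝ} (hc : 0 < c) (hs : c ≤ s) (ha : |a| ≤ C) (hh : 0 ≤ h)
    (hds : |s' - s| ≤ h * C) (hda : |a' - a - h * H| ≤ h) :
    h ^ 2 * (H ^ 2 / 2 - (1 + C ^ 2 / c) ^ 2) ≤ (a' - a - (s' - s) * a / s) ^ 2 := by
  set r := (a' - a - h * H) - (s' - s) * a / s with hr
  have hC : 0 ≤ C := (abs_nonneg a).trans ha
  have habs : |r| ≤ h * (1 + C ^ 2 / c) := by
    calc |r| ≤ |a' - a - h * H| + |(s' - s) * a / s| := abs_sub _ _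
      _ ≤ h + h * C * C / c := by
          rw [abs_div, abs_mul, abs_of_pos (hc.trans_le hs)]
          gcongr
      _ = h * (1 + C ^ 2 / c) := by ring
  have hsq : r ^ 2 ≤ (h * (1 + C ^ 2 / c)) ^ 2 := sq_le_sq.2 (habs.trans (le_abs_self _))
  rw [show a' - a - (s' - s) * a / s = h * H + r by rw [hr]; ring]
  nlinarith [sq_nonneg (h * H + 2 * r)]

theorem le_gradQuot_shift_sub (hc : 0 < c) (hb : HasC1Bounds c C u U) (hx : x ∈ U) (hh : 0 ≤ h)
    (hstep : IsGoodStep U h C u x) (m : Fin n × Bool) :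
    (∑ i, pd i u x * (pd i u (x + h • signedBasis m) - pd i u x)) / u x -
        normSq (grad u x) * (u (x + h • signedBasis m) - u x) / (2 * u x ^ 2) +
        h ^ 2 / (2 * C) * ((∑ i, (signedBasis m ᵥ* hess u x) i ^ 2) / 2 -
          n * (1 + C ^ 2 / c) ^ 2) ≤
      gradQuot u (x + h • signedBasis m) - gradQuot u x := by
  set x' := x + h • signedBasis m
  have hx' : x' ∈ U := hstep.shift_mem m
  have hu : 0 < u x := hc.trans_le (hb.le_apply x hx)
  have hu' : 0 < u x' := hc.trans_le (hb.le_apply x' hx')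
  have hC : 0 < C := hu.trans_le (hb.apply_le x hx)
  have hcoord : ∀ i, pd i u x * (pd i u x' - pd i u x) / u x -
      pd i u x ^ 2 * (u x' - u x) / (2 * u x ^ 2) + h ^ 2 / (2 * C) *
        ((signedBasis m ᵥ* hess u x) i ^ 2 / 2 - (1 + C ^ 2 / c) ^ 2) ≤
      pd i u x' ^ 2 / (2 * u x') - pd i u x ^ 2 / (2 * u x) := fun i => by
    rw [sq_div_two_mul_sub hu.ne' hu'.ne', add_le_add_iff_left]
    have hrem := le_sq_sub_div hc (hb.le_apply x hx) (hb.abs_pd_le hx i) hh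
      (hstep.abs_shift_sub_le m) (hstep.abs_pd_shift_sub_le m i)
    calc h ^ 2 / (2 * C) * ((signedBasis m ᵥ* hess u x) i ^ 2 / 2 - (1 + C ^ 2 / c) ^ 2)
        = h ^ 2 * ((signedBasis m ᵥ* hess u x) i ^ 2 / 2 - (1 + C ^ 2 / c) ^ 2) / (2 * C) := by
          ring
      _ ≤ (pd i u x' - pd i u x - (u x' - u x) * pd i u x / u x) ^ 2 / (2 * C) := by gcongr
      _ ≤ (pd i u x' - pd i u x - (u x' - u x) * pd i u x / u x) ^ 2 / (2 * u x') := by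
          gcongr
          exact hb.apply_le x' hx'
  have hsum := Finset.sum_le_sum fun i (_ : i ∈ Finset.univ) => hcoord i
  simp only [Finset.sum_add_distrib, Finset.sum_sub_distrib, ← Finset.sum_div, ← Finset.sum_mul,
    ← Finset.mul_sum] at hsum
  simpa [gradQuot, normSq, grad] using hsum

theorem sum_shift_sub (hh : h ≠ 0) (g : (Fin n → ℝ) → ℝ) (x : Fin n → ℝ) :
    ∑ m, (g (x + h • signedBasis m) - g x) = h ^ 2 * discreteLapl h g x :=
  (mul_inv_cancel_left₀ (pow_ne_zero 2 hh) _).symm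

theorem le_discreteLapl_gradQuot (hc : 0 < c) (hb : HasC1Bounds c C u U) (hx : x ∈ U)
    (hh : 0 < h) (hstep : IsGoodStep U h C u x) :
    (∑ i, pd i u x * discreteLapl h (pd i u) x) / u x -
        normSq (grad u x) * discreteLapl h u x / (2 * u x ^ 2) +
        ((∑ l, ∑ i, hess u x l i ^ 2) / (2 * C) - n ^ 2 * (1 + C ^ 2 / c) ^ 2 / C) ≤
      discreteLapl h (gradQuot u) x := by
  have hsum := Finset.sum_le_sum fun m (_ : m ∈ Finset.univ) =>
    le_gradQuot_shift_sub hc hb hx hh.le hstep m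
  have hgrad : ∑ m, ∑ i, pd i u x * (pd i u (x + h • signedBasis m) - pd i u x) =
      h ^ 2 * ∑ i, pd i u x * discreteLapl h (pd i u) x := by
    rw [Finset.sum_comm, Finset.mul_sum]
    refine Finset.sum_congr rfl fun i _ => ?_
    rw [← Finset.mul_sum, sum_shift_sub hh.ne']
    ring
  rw [Finset.sum_add_distrib, Finset.sum_sub_distrib, ← Finset.sum_div, hgrad, ← Finset.sum_div,
    ← Finset.mul_sum, sum_shift_sub hh.ne', ← Finset.mul_sum, Finset.sum_sub_distrib,
    ← Finset.sum_div, sum_sum_vecMul_signedBasis_sq, sum_shift_sub hh.ne'] at hsum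
  refine le_of_mul_le_mul_left (le_of_eq_of_le ?_ hsum) (sq_pos_of_pos hh)
  simp only [Finset.sum_const, Finset.card_univ, Fintype.card_prod, Fintype.card_fin,
    Fintype.card_bool, nsmul_eq_mul, Nat.cast_mul, Nat.cast_ofNat]
  ring

/-- The `1`-jet of `u`, the argument of the right-hand side `f(x, u, ∇u)`. -/
noncomputable def jet (u : (Fin n → ℝ) → ℝ) (x : Fin n → ℝ) : (Fin n → ℝ) × ℝ × (Fin n → ℝ) :=
  (x, u x, grad u x)

theorem norm_jet_shift_sub_sq_le (hh : 0 ≤ h) (hstep : IsGoodStep U h C u x)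
    (m : Fin n × Bool) :
    ‖jet u (x + h • signedBasis m) - jet u x‖ ^ 2 ≤
      h ^ 2 * (2 + C ^ 2 + 2 * ∑ i, (signedBasis m ᵥ* hess u x) i ^ 2) := by
  set N := ∑ i, (signedBasis m ᵥ* hess u x) i ^ 2
  have hN₀ : 0 ≤ N := normSq_nonneg _
  refine (Real.le_sqrt (norm_nonneg _) (by positivity)).1 ?_
  simp only [jet, Prod.mk_sub_mk, Prod.norm_mk, max_le_iff]
  refine ⟨Real.le_sqrt_of_sq_le ?_, Real.le_sqrt_of_sq_le ?_,
    (pi_norm_le_iff_of_nonneg (Real.sqrt_nonneg _)).2 fun i => Real.le_sqrt_of_sq_le ?_⟩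
  · rw [add_sub_cancel_left, norm_smul_signedBasis hh]
    exact le_mul_of_one_le_right (sq_nonneg h) (by nlinarith)
  · calc ‖u (x + h • signedBasis m) - u x‖ ^ 2 ≤ (h * C) ^ 2 := by
          gcongr
          exact hstep.abs_shift_sub_le m
      _ = h ^ 2 * C ^ 2 := mul_pow _ _ _
      _ ≤ h ^ 2 * (2 + C ^ 2 + 2 * N) := by gcongr; linarith
  · set a := pd i u (x + h • signedBasis m) - pd i u x
    set H := (signedBasis m ᵥ* hess u x) i
    have hrem : (a - h * H) ^ 2 ≤ h ^ 2 :=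
      sq_le_sq.2 ((hstep.abs_pd_shift_sub_le m i).trans (le_abs_self h))
    have hH : H ^ 2 ≤ N := sq_apply_le_normSq (signedBasis m ᵥ* hess u x) i
    calc ‖grad u (x + h • signedBasis m) i - grad u x i‖ ^ 2 = a ^ 2 := by
          rw [Real.norm_eq_abs, sq_abs]
          rfl
      _ ≤ h ^ 2 * (2 + 2 * H ^ 2) := by nlinarith [sq_nonneg (a - h * H - h * H)]
      _ ≤ h ^ 2 * (2 + C ^ 2 + 2 * N) := by gcongr; nlinarith

theorem norm_discreteLapl_jet_le {g : ℝ} (hg₀ : 0 ≤ g)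
    (hg : ∀ i, |discreteLapl h (pd i u) x| ≤ g) :
    ‖discreteLapl h (jet u) x‖ ≤ |discreteLapl h u x| + g := by
  have hfst : (discreteLapl h (jet u) x).1 = 0 :=
    (map_discreteLapl (LinearMap.fst ℝ _ _) h (jet u) x).trans (discreteLapl_id h x)
  have hsnd : (discreteLapl h (jet u) x).2.1 = discreteLapl h u x :=
    map_discreteLapl (LinearMap.fst ℝ ℝ (Fin n → ℝ) ∘ₗ LinearMap.snd ℝ (Fin n → ℝ) _) h (jet u) x
  have htrd : ∀ i, (discreteLapl h (jet u) x).2.2 i = discreteLapl h (pd i u) x := fun i =>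
    map_discreteLapl (LinearMap.proj i ∘ₗ LinearMap.snd ℝ _ _ ∘ₗ LinearMap.snd ℝ _ _) h (jet u) x
  simp only [Prod.norm_def, max_le_iff]
  refine ⟨?_, ?_, (pi_norm_le_iff_of_nonneg (by positivity)).2 fun i => ?_⟩
  · rw [hfst, norm_zero]
    positivity
  · rw [hsnd, Real.norm_eq_abs]
    exact le_add_of_nonneg_right hg₀
  · rw [htrd, Real.norm_eq_abs]
    exact (hg i).trans (le_add_of_nonneg_left (abs_nonneg _))

/-- Bounds for `f` and its first derivative on `K`, together with a quadratic bound for its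
first order Taylor remainder. -/
structure HasC11Bounds {E : Type*} [NormedAddCommGroup E] [NormedSpace ℝ E] (f₀ f₁ L : ℝ)
    (f : E → ℝ) (K : Set E) : Prop where
  le_apply : ∀ z ∈ K, f₀ ≤ f z
  apply_le : ∀ z ∈ K, f z ≤ f₁
  norm_fderiv_le : ∀ z ∈ K, ‖fderiv ℝ f z‖ ≤ L
  norm_sub_sub_fderiv_le : ∀ z ∈ K, ∀ z' ∈ K,
    ‖f z' - f z - fderiv ℝ f z (z' - z)‖ ≤ L * ‖z' - z‖ ^ 2

theorem C11On.exists_hasC11Bounds {E : Type*} [NormedAddCommGroup E] [NormedSpace ℝ E]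
    {f : E → ℝ} {V K : Set E} (hf : C11On f V) (hV : IsOpen V) (hpos : ∀ z ∈ V, 0 < f z)
    (hK : IsCompact K) (hconv : Convex ℝ K) (hKV : K ⊆ V) :
    ∃ f₀ f₁ L, 0 < f₀ ∧ 0 ≤ L ∧ HasC11Bounds f₀ f₁ L f K := by
  have hcont : ContinuousOn f K := hf.1.continuousOn.mono hKV
  obtain ⟨f₀, hf₀, hle⟩ : ∃ f₀ > 0, ∀ z ∈ K, f₀ ≤ f z :=
    hK.exists_forall_le' hcont fun z hz => hpos z (hKV hz)
  obtain ⟨f₁, hf₁⟩ := hK.bddAbove_image hcont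
  obtain ⟨L, hL, htaylor⟩ := hf.exists_norm_sub_sub_fderiv_le hV hK hconv hKV
  exact ⟨f₀, f₁, L, hf₀, hL, hle, fun z hz => hf₁ (mem_image_of_mem f hz),
    fun z hz => (htaylor z hz).1, fun z hz => (htaylor z hz).2⟩

theorem le_discreteLapl_comp_jet {f : (Fin n → ℝ) × ℝ × (Fin n → ℝ) → ℝ} {f₀ f₁ L g : ℝ}
    {K : Set ((Fin n → ℝ) × ℝ × (Fin n → ℝ))} (hL : 0 ≤ L) (hf : HasC11Bounds f₀ f₁ L f K)
    (hjet : MapsTo (jet u) U K) (hx : x ∈ U) (hh : 0 < h) (hstep : IsGoodStep U h C u x)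
    (hg₀ : 0 ≤ g) (hg : ∀ i, |discreteLapl h (pd i u) x| ≤ g) :
    -(L * (|discreteLapl h u x| + g)) -
        L * (2 * n * (2 + C ^ 2) + 4 * ∑ l, ∑ i, hess u x l i ^ 2) ≤
      discreteLapl h (fun z => f (jet u z)) x := by
  set D := fderiv ℝ f (jet u x)
  have hlinear : -(L * (|discreteLapl h u x| + g)) ≤ discreteLapl h (fun z => D (jet u z)) x := by
    refine le_of_le_of_eq ?_ (map_discreteLapl D.toLinearMap h (jet u) x)
    refine (abs_le.1 ((D.le_of_opNorm_le (hf.norm_fderiv_le _ (hjet hx)) _).trans ?_)).1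
    gcongr
    exact norm_discreteLapl_jet_le hg₀ hg
  have hshift : ∀ m, D (jet u (x + h • signedBasis m)) - D (jet u x) - L * (h ^ 2 *
      (2 + C ^ 2 + 2 * ∑ i, (signedBasis m ᵥ* hess u x) i ^ 2)) ≤
      f (jet u (x + h • signedBasis m)) - f (jet u x) := fun m => by
    have htaylor := (abs_le.1 (hf.norm_sub_sub_fderiv_le _ (hjet hx) _
      (hjet (hstep.shift_mem m)))).1
    have hsq := mul_le_mul_of_nonneg_left (norm_jet_shift_sub_sq_le hh.le hstep m) hL
    rw [map_sub] at htaylor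
    linarith
  have hsum := Finset.sum_le_sum fun m (_ : m ∈ Finset.univ) => hshift m
  rw [Finset.sum_sub_distrib, sum_shift_sub hh.ne' fun z => D (jet u z), ← Finset.mul_sum,
    ← Finset.mul_sum, Finset.sum_add_distrib, ← Finset.mul_sum, sum_sum_vecMul_signedBasis_sq,
    sum_shift_sub hh.ne' fun z => f (jet u z)] at hsum
  simp only [Finset.sum_const, Finset.card_univ, Fintype.card_prod, Fintype.card_fin,
    Fintype.card_bool, nsmul_eq_mul, Nat.cast_mul, Nat.cast_ofNat] at hsum
  refine (sub_le_sub_right hlinear _).trans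
    (le_of_mul_le_mul_left (le_of_eq_of_le ?_ hsum) (sq_pos_of_pos hh))
  ring

end Jet

/-! ### The differenced equation -/

section DifferencedEquation

variable {n k : ℕ} {U : Set (Fin n → ℝ)} {u : (Fin n → ℝ) → ℝ} {x : Fin n → ℝ} {h : ℝ}

/-- The matrix `A_u = ∇²u - |∇u|² / (2u) I`. -/
noncomputable def conformalHess (u : (Fin n → ℝ) → ℝ) (x : Fin n → ℝ) :
    Matrix (Fin n) (Fin n) ℝ :=
  hess u x - gradQuot u x • (1 : Matrix (Fin n) (Fin n) ℝ)

/-- The positive `σ_k`-Yamabe equation at a point: `σ_k(A_u) = f(x, u, ∇u)^k` and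
`λ(A_u) ∈ Γ_k^+`. -/
def IsYamabeSolutionAt (k : ℕ) (f : (Fin n → ℝ) × ℝ × (Fin n → ℝ) → ℝ) (u : (Fin n → ℝ) → ℝ)
    (x : Fin n → ℝ) : Prop :=
  esymmMat k (conformalHess u x) = f (jet u x) ^ k ∧ GammaPlus k (conformalHess u x)

theorem isHermitian_conformalHess (hu : ContDiffAt ℝ 2 u x) : (conformalHess u x).IsHermitian :=
  (isHermitian_hess hu).sub (Matrix.isHermitian_one.smul (IsSelfAdjoint.all _))

theorem trace_conformalHess : (conformalHess u x).trace = lapl u x - n * gradQuot u x := by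
  simp [conformalHess, Matrix.trace_sub, Matrix.trace_smul, trace_hess, mul_comm]

theorem discreteLapl_hess : discreteLapl h (hess u) x =
    discreteLapl h (conformalHess u) x + discreteLapl h (gradQuot u) x • 1 := by
  have hscalar : discreteLapl h (gradQuot u) x • (1 : Matrix (Fin n) (Fin n) ℝ) =
      discreteLapl h (fun z => gradQuot u z • 1) x :=
    map_discreteLapl (LinearMap.toSpanSingleton ℝ _ (1 : Matrix (Fin n) (Fin n) ℝ)) h (gradQuot u) x
  rw [hscalar, ← discreteLapl_add]
  simp [conformalHess]

/-- Gårding's inequality replaces the concavity of `σ_{k+1}^{1/(k+1)}`: the linearisation at `x`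
dominates every difference quotient of the equation. -/
theorem mul_discreteLapl_le_trace_newtonT_mul (hk : k + 1 ≤ n)
    {A : (Fin n → ℝ) → Matrix (Fin n) (Fin n) ℝ} {F : (Fin n → ℝ) → ℝ}
    (hA : ∀ z ∈ U, (A z).IsHermitian) (hG : ∀ z ∈ U, GammaPlus (k + 1) (A z))
    (hF : ∀ z ∈ U, 0 < F z) (heq : ∀ z ∈ U, esymmMat (k + 1) (A z) = F z ^ (k + 1))
    (hx : x ∈ U) (hshift : ∀ m, x + h • signedBasis m ∈ U) :
    ((k : ℝ) + 1) * F x ^ k * discreteLapl h F x ≤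
      (newtonT k (A x) * discreteLapl h A x).trace := by
  have hleft := map_discreteLapl (LinearMap.mulLeft ℝ (((k : ℝ) + 1) * F x ^ k)) h F x
  have hright := map_discreteLapl
    (Matrix.traceLinearMap (Fin n) ℝ ℝ ∘ₗ LinearMap.mulLeft ℝ (newtonT k (A x))) h A x
  refine hleft.trans_le (le_of_le_of_eq (discreteLapl_le_discreteLapl fun m => ?_) hright.symm)
  have hgarding := garding_trace_newtonT_mul hk (hA x hx) (hG x hx) (hA _ (hshift m))
    (hG _ (hshift m)) (hF x hx) (hF _ (hshift m)).le (heq x hx) (heq _ (hshift m))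
  have hself : (newtonT k (A x) * A x).trace = ((k : ℝ) + 1) * F x ^ k * F x := by
    rw [trace_newtonT_mul_self (hA x hx) hk, heq x hx]
    ring
  exact sub_le_sub hgarding hself.le

variable {f : (Fin n → ℝ) × ℝ × (Fin n → ℝ) → ℝ}

theorem discreteLapl_rhs_add_discreteLapl_gradQuot_le (hk : k + 1 ≤ n) (hU : IsOpen U)
    (hu : ContDiffOn ℝ 2 u U) (hsol : ∀ z ∈ U, IsYamabeSolutionAt (k + 1) f u z)
    (hf : ∀ z ∈ U, 0 < f (jet u z)) (hx : x ∈ U) (hshift : ∀ m, x + h • signedBasis m ∈ U)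
    {b : ℝ} (hb : ∀ e, e ⬝ᵥ hess (discreteLapl h u) x *ᵥ e ≤ b * (e ⬝ᵥ e)) :
    ((k : ℝ) + 1) * f (jet u x) ^ k * discreteLapl h (fun z => f (jet u z)) x +
        (newtonT k (conformalHess u x)).trace * discreteLapl h (gradQuot u) x ≤
      b * (newtonT k (conformalHess u x)).trace := by
  set T := newtonT k (conformalHess u x)
  have hu2 : ∀ z ∈ U, ContDiffAt ℝ 2 u z := fun z hz => hu.contDiffAt (hU.mem_nhds hz)
  calc ((k : ℝ) + 1) * f (jet u x) ^ k * discreteLapl h (fun z => f (jet u z)) x +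
        T.trace * discreteLapl h (gradQuot u) x
      ≤ (T * discreteLapl h (conformalHess u) x).trace +
        T.trace * discreteLapl h (gradQuot u) x := by
        gcongr
        exact mul_discreteLapl_le_trace_newtonT_mul hk
          (fun z hz => isHermitian_conformalHess (hu2 z hz)) (fun z hz => (hsol z hz).2) hf
          (fun z hz => (hsol z hz).1) hx hshift
    _ = (T * hess (discreteLapl h u) x).trace := by
        rw [hess_discreteLapl (hu2 x hx) fun m => hu2 _ (hshift m), discreteLapl_hess, mul_add,
          Matrix.trace_add, Matrix.mul_smul, mul_one, Matrix.trace_smul, smul_eq_mul, mul_comm]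
    _ ≤ b * T.trace := trace_mul_le_of_posSemidef (posSemidef_newtonT
        (isHermitian_conformalHess (hu2 x hx)) hk (hsol x hx).2) hb

variable {c C f₀ f₁ L g b : ℝ}

theorem sub_le_discreteLapl_gradQuot (hc : 0 < c) (hb : HasC1Bounds c C u U)
    (hx : x ∈ U) (hh : 0 < h) (hstep : IsGoodStep U h C u x) (hg₀ : 0 ≤ g)
    (hg : ∀ i, |discreteLapl h (pd i u) x| ≤ g) :
    (∑ l, ∑ i, hess u x l i ^ 2) / (2 * C) - (n * C / c * g +
        n * C ^ 2 / (2 * c ^ 2) * |discreteLapl h u x| + n ^ 2 * (1 + C ^ 2 / c) ^ 2 / C) ≤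
      discreteLapl h (gradQuot u) x := by
  have hcu := hb.le_apply x hx
  have hu : 0 < u x := hc.trans_le hcu
  have hC : 0 < C := hu.trans_le (hb.apply_le x hx)
  have hfirst : |(∑ i, pd i u x * discreteLapl h (pd i u) x) / u x| ≤ n * C / c * g := by
    calc |(∑ i, pd i u x * discreteLapl h (pd i u) x) / u x|
        ≤ (∑ _i : Fin n, C * g) / c := by
          rw [abs_div, abs_of_pos hu]
          gcongr
          refine (Finset.abs_sum_le_sum_abs _ _).trans (Finset.sum_le_sum fun i _ => ?_)
          rw [abs_mul]
          exact mul_le_mul (hb.abs_pd_le hx i) (hg i) (abs_nonneg _) hC.le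
      _ = n * C / c * g := by
          simp only [Finset.sum_const, Finset.card_univ, Fintype.card_fin, nsmul_eq_mul]
          ring
  have hsecond : normSq (grad u x) * discreteLapl h u x / (2 * u x ^ 2) ≤
      n * C ^ 2 / (2 * c ^ 2) * |discreteLapl h u x| := by
    calc normSq (grad u x) * discreteLapl h u x / (2 * u x ^ 2)
        = normSq (grad u x) / (2 * u x ^ 2) * discreteLapl h u x := by ring
      _ ≤ normSq (grad u x) / (2 * u x ^ 2) * |discreteLapl h u x| :=
          mul_le_mul_of_nonneg_left (le_abs_self _)
            (div_nonneg (normSq_nonneg _) (by positivity))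
      _ ≤ n * C ^ 2 / (2 * c ^ 2) * |discreteLapl h u x| := by
          gcongr
          exact hb.normSq_grad_le hx
  have hmain := le_discreteLapl_gradQuot hc hb hx hh hstep
  linarith [(abs_le.1 hfirst).1]

/-- Once `τ` is large compared with `κ`, the good term `τ S / (2C)` absorbs the bad term
`4 κ L S`. -/
theorem le_of_mul_sub_add_mul_sub_le {κ τ S E G : ℝ} (hC : 0 < C) (hL : 0 ≤ L) (hS : 0 ≤ S)
    (hG : 0 ≤ G) (hκ : 0 < κ) (hτ : κ * (1 + 16 * C * L) ≤ τ)
    (h : κ * (-G - 4 * L * S) + τ * (S / (2 * C) - E) ≤ b * τ) : S ≤ 4 * C * (b + E + G) := by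
  have hCL : 0 ≤ C * L := mul_nonneg hC.le hL
  have hκτ : κ ≤ τ := (le_mul_of_one_le_right hκ.le (by linarith)).trans hτ
  have hlower : κ * G ≤ τ * G := mul_le_mul_of_nonneg_right hκτ hG
  have habsorb : κ * (4 * L * S) ≤ τ * (S / (4 * C)) := by
    rw [mul_div_assoc', le_div_iff₀ (by positivity)]
    calc κ * (4 * L * S) * (4 * C) = κ * (16 * C * L) * S := by ring
      _ ≤ τ * S := by
          gcongr
          linarith
  have hhalf : S / (2 * C) = S / (4 * C) + S / (4 * C) := by ring
  rw [hhalf] at h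
  refine (div_le_iff₀' (by positivity)).1 (le_of_mul_le_mul_left ?_ (hκ.trans_le hκτ))
  linarith

theorem sum_hess_sq_le {K : Set ((Fin n → ℝ) × ℝ × (Fin n → ℝ))} (hk : k + 1 ≤ n)
    (hU : IsOpen U) (hu : ContDiffOn ℝ 2 u U)
    (hsol : ∀ z ∈ U, IsYamabeSolutionAt (k + 1) f u z) (hf₀ : 0 < f₀) (hL : 0 ≤ L)
    (hf : HasC11Bounds f₀ f₁ L f K) (hjet : MapsTo (jet u) U K) (hc : 0 < c)
    (hC1 : HasC1Bounds c C u U) (hx : x ∈ U) (hh : 0 < h) (hstep : IsGoodStep U h C u x)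
    (hg₀ : 0 ≤ g) (hg : ∀ i, |discreteLapl h (pd i u) x| ≤ g)
    (hb : ∀ e, e ⬝ᵥ hess (discreteLapl h u) x *ᵥ e ≤ b * (e ⬝ᵥ e))
    (htrace : ((k : ℝ) + 1) * f₁ ^ k * (1 + 16 * C * L) ≤ (newtonT k (conformalHess u x)).trace) :
    ∑ l, ∑ i, hess u x l i ^ 2 ≤ 4 * C * (b + (n * C / c + L) * g +
      (n * C ^ 2 / (2 * c ^ 2) + L) * |discreteLapl h u x| +
      (n ^ 2 * (1 + C ^ 2 / c) ^ 2 / C + L * (2 * n * (2 + C ^ 2)))) := by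
  set τ := (newtonT k (conformalHess u x)).trace
  set κ := ((k : ℝ) + 1) * f (jet u x) ^ k with hκ
  have hC : 0 < C := (hc.trans_le (hC1.le_apply x hx)).trans_le (hC1.apply_le x hx)
  have hpos : ∀ z ∈ U, 0 < f (jet u z) := fun z hz => hf₀.trans_le (hf.le_apply _ (hjet hz))
  have hκ₀ : 0 < κ := mul_pos (by positivity) (pow_pos (hpos x hx) k)
  have hτ₀ : 0 ≤ τ := (posSemidef_newtonT (isHermitian_conformalHess
    (hu.contDiffAt (hU.mem_nhds hx))) hk (hsol x hx).2).trace_nonneg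
  have hτ : κ * (1 + 16 * C * L) ≤ τ := by
    refine le_trans ?_ htrace
    rw [hκ]
    gcongr
    · exact (hpos x hx).le
    · exact hf.apply_le _ (hjet hx)
  have hrhs := mul_le_mul_of_nonneg_left
    (le_discreteLapl_comp_jet hL hf hjet hx hh hstep hg₀ hg) hκ₀.le
  have hquot := mul_le_mul_of_nonneg_left
    (sub_le_discreteLapl_gradQuot hc hC1 hx hh hstep hg₀ hg) hτ₀
  have hmain := discreteLapl_rhs_add_discreteLapl_gradQuot_le hk hU hu hsol hpos hx
    hstep.shift_mem hb
  set S := ∑ l, ∑ i, hess u x l i ^ 2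
  set v := |discreteLapl h u x|
  have hS : 0 ≤ S := Finset.sum_nonneg fun l _ => Finset.sum_nonneg fun i _ => sq_nonneg _
  have habsorb := le_of_mul_sub_add_mul_sub_le hC hL hS
    (E := n * C / c * g + n * C ^ 2 / (2 * c ^ 2) * v + n ^ 2 * (1 + C ^ 2 / c) ^ 2 / C)
    (G := L * (v + g) + L * (2 * n * (2 + C ^ 2))) (by positivity) hκ₀ hτ
    ((le_of_eq (by ring)).trans ((add_le_add hrhs hquot).trans hmain))
  refine habsorb.trans_eq ?_
  ring

end DifferencedEquation

/-! ### The interior estimate -/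

section InteriorEstimate

variable {n k : ℕ} {U : Set (Fin n → ℝ)} {u : (Fin n → ℝ) → ℝ} {x y : Fin n → ℝ}
  {c C f₀ f₁ L ρ h : ℝ} {f : (Fin n → ℝ) × ℝ × (Fin n → ℝ) → ℝ}
  {K : Set ((Fin n → ℝ) × ℝ × (Fin n → ℝ))}

theorem HasC1Bounds.gradQuot_le (hc : 0 < c) (hb : HasC1Bounds c C u U) (hx : x ∈ U) :
    gradQuot u x ≤ n * C ^ 2 / (2 * c) := by
  unfold gradQuot
  gcongr
  exacts [hb.normSq_grad_le hx, hb.le_apply x hx]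

theorem gradQuot_nonneg (hu : 0 ≤ u x) : 0 ≤ gradQuot u x :=
  div_nonneg (normSq_nonneg _) (by positivity)

theorem HasC1Bounds.mapsTo_jet (hb : HasC1Bounds c C u U) :
    MapsTo (jet u) U (U ×ˢ (Icc c C ×ˢ closedBall 0 C)) := fun x hx => by
  refine ⟨hx, ⟨hb.le_apply x hx, hb.apply_le x hx⟩, mem_closedBall_zero_iff.2 ?_⟩
  exact (pi_norm_le_iff_of_nonneg ((norm_nonneg _).trans (hb.norm_fderiv_le x hx))).2
    (hb.abs_pd_le hx)

theorem HasC1Bounds.matNorm_hess_le (hn : 2 ≤ n) (hc : 0 < c) (hb : HasC1Bounds c C u U)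
    (hx : x ∈ U) (hu : ContDiffAt ℝ 2 u x) (hG : GammaPlus 2 (conformalHess u x)) {T : ℝ}
    (hT : lapl u x ≤ T) : matNorm (hess u x) ≤ n * (n * (T + n * C ^ 2 / (2 * c))) := by
  have hpos : 0 < u x := hc.trans_le (hb.le_apply x hx)
  have hquot₀ : 0 ≤ gradQuot u x := gradQuot_nonneg hpos.le
  have hentry : ∀ i j, |hess u x i j| ≤ T + n * C ^ 2 / (2 * c) := fun i j => by
    have hsplit : hess u x i j =
        conformalHess u x i j + gradQuot u x * (1 : Matrix (Fin n) (Fin n) ℝ) i j := by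
      simp [conformalHess]
    have hone : |(1 : Matrix (Fin n) (Fin n) ℝ) i j| ≤ 1 := by
      rw [Matrix.one_apply]
      split_ifs <;> simp
    calc |hess u x i j| ≤ |conformalHess u x i j| +
          |gradQuot u x * (1 : Matrix (Fin n) (Fin n) ℝ) i j| := hsplit ▸ abs_add_le _ _
      _ ≤ (conformalHess u x).trace + gradQuot u x := by
          rw [abs_mul, abs_of_nonneg hquot₀]
          exact add_le_add (abs_apply_le_trace (isHermitian_conformalHess hu) hn hG i j)
            (mul_le_of_le_one_right hquot₀ hone)
      _ ≤ T + n * C ^ 2 / (2 * c) := by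
          refine add_le_add ?_ (hb.gradQuot_le hc hx)
          rw [trace_conformalHess]
          exact (sub_le_self _ (by positivity)).trans hT
  let i₀ : Fin n := ⟨0, by omega⟩
  exact matNorm_le_of_abs_apply_le ((abs_nonneg _).trans (hentry i₀ i₀)) hentry

theorem le_trace_newtonT_of_le_trace {A : Matrix (Fin n) (Fin n) ℝ} (hA : A.IsHermitian)
    (hk : k + 2 ≤ n) (hG : GammaPlus (k + 2) A) {s N : ℝ} (hs : 0 < s)
    (hσ : s ≤ esymmMat (k + 2) A) (htrace : N ^ (k + 1) / s ^ k ≤ A.trace) :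
    N ≤ (newtonT (k + 1) A).trace := by
  have hT : 0 ≤ (newtonT (k + 1) A).trace := (posSemidef_newtonT hA hk hG).trace_nonneg
  have htr : 0 < A.trace := by
    rw [trace_eq_esymmMat_one hA (by omega)]
    exact hG 1 le_rfl (by omega)
  refine le_of_pow_le_pow_left₀ k.succ_ne_zero hT ?_
  calc N ^ (k + 1) ≤ A.trace * s ^ k := (div_le_iff₀ (by positivity)).1 htrace
    _ ≤ A.trace * esymmMat (k + 2) A ^ k := by gcongr
    _ ≤ (newtonT (k + 1) A).trace ^ (k + 1) := trace_mul_pow_le_trace_newtonT_pow hA hk hG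

/-- The bounds on the derivatives of `v` at a maximum of `η² v` turn the bound for `S = |∇²u|²`
into a quadratic inequality for `η² v`. -/
theorem sq_mul_le_of_sq_le_mul_add {a b₁ b₂ b₃ m η v S : ℝ} (ha : 0 ≤ a) (hb₁ : 0 ≤ b₁)
    (hb₂ : 0 ≤ b₂) (hb₃ : 0 ≤ b₃) (hm : 0 ≤ m) (hρ : 0 ≤ ρ) (hη : 0 < η) (hηρ : η ≤ ρ ^ 2)
    (hv : 0 ≤ v) (hvS : v ^ 2 ≤ m * S + 2)
    (hS : S ≤ a * (v * (24 * ρ ^ 2 / η ^ 2 + 4 / η) + b₁ * (4 * ρ * v / η) + b₂ * v + b₃)) :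
    η ^ 2 * v ≤ m * a * (28 * ρ ^ 2 + 4 * b₁ * ρ ^ 3 + b₂ * ρ ^ 4) +
      (m * a * b₃ * ρ ^ 8 + 2 * ρ ^ 8) + 1 := by
  set α := m * a * (28 * ρ ^ 2 + 4 * b₁ * ρ ^ 3 + b₂ * ρ ^ 4) with hα
  set β := m * a * b₃ * ρ ^ 8 + 2 * ρ ^ 8 with hβ
  have hη4 : η ^ 4 ≤ ρ ^ 8 := (pow_le_pow_left₀ hη.le hηρ 4).trans_eq (by ring)
  have hquadratic : (η ^ 2 * v) ^ 2 ≤ α * (η ^ 2 * v) + β := by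
    calc (η ^ 2 * v) ^ 2 = η ^ 4 * v ^ 2 := by ring
      _ ≤ η ^ 4 * (m * (a * (v * (24 * ρ ^ 2 / η ^ 2 + 4 / η) + b₁ * (4 * ρ * v / η) + b₂ * v +
            b₃)) + 2) := by
          gcongr
          exact hvS.trans (by gcongr)
      _ = m * a * (24 * ρ ^ 2 + 4 * η + 4 * b₁ * ρ * η + b₂ * η ^ 2) * (η ^ 2 * v) +
            (m * a * b₃ * η ^ 4 + 2 * η ^ 4) := by
          field_simp
          ring
      _ ≤ m * a * (24 * ρ ^ 2 + 4 * ρ ^ 2 + 4 * b₁ * ρ * ρ ^ 2 + b₂ * (ρ ^ 2) ^ 2) *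
            (η ^ 2 * v) + (m * a * b₃ * ρ ^ 8 + 2 * ρ ^ 8) := by gcongr
      _ = α * (η ^ 2 * v) + β := by
          rw [hα, hβ]
          ring
  have hα₀ : 0 ≤ α := by positivity
  have hβ₀ : 0 ≤ β := by positivity
  by_contra! hlt
  nlinarith

theorem cutoff_le_sq : cutoff ρ y x ≤ ρ ^ 2 :=
  sub_le_self _ (normSq_nonneg _)

theorem cutoff_self : cutoff ρ y y = ρ ^ 2 := by
  simp [cutoff, normSq]

theorem mem_closedBall_of_cutoff_nonneg (hρ : 0 ≤ ρ) (hx : 0 ≤ cutoff ρ y x) :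
    x ∈ closedBall y ρ := by
  rw [mem_closedBall_iff_norm, pi_norm_le_iff_of_nonneg hρ]
  exact fun i => abs_le_of_sq_le_sq ((sq_apply_le_normSq (x - y) i).trans (sub_nonneg.1 hx)) hρ

theorem pow_four_mul_le_of_forall_isLocalMax {w : (Fin n → ℝ) → ℝ} {B : ℝ} (hρ : 0 ≤ ρ)
    (hB : 0 ≤ B) (hw : ContinuousOn w (closedBall y ρ))
    (hmax : ∀ x ∈ closedBall y ρ, 0 < cutoff ρ y x →
      IsLocalMax (fun z => cutoff ρ y z ^ 2 * w z) x → cutoff ρ y x ^ 2 * w x ≤ B) :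
    ρ ^ 4 * w y ≤ B := by
  set D := {z | 0 ≤ cutoff ρ y z}
  have hDball : D ⊆ closedBall y ρ := fun z hz => mem_closedBall_of_cutoff_nonneg hρ hz
  have hcont : Continuous (cutoff ρ y) := contDiff_cutoff.continuous
  have hDcompact : IsCompact D :=
    (isCompact_closedBall y ρ).of_isClosed_subset (isClosed_le continuous_const hcont) hDball
  have hy : 0 ≤ cutoff ρ y y := by
    rw [cutoff_self]
    positivity
  obtain ⟨x, hxD, hx⟩ := hDcompact.exists_isMaxOn ⟨y, hy⟩
    ((hcont.pow 2).continuousOn.mul (hw.mono hDball))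
  have hnonneg : 0 ≤ cutoff ρ y x := hxD
  calc ρ ^ 4 * w y = cutoff ρ y y ^ 2 * w y := by
        rw [cutoff_self]
        ring
    _ ≤ cutoff ρ y x ^ 2 * w x := hx hy
    _ ≤ B := by
        obtain hzero | hpos := hnonneg.eq_or_lt
        · simpa [← hzero] using hB
        · exact hmax x (hDball hxD) hpos (hx.isLocalMax
            (Filter.mem_of_superset ((isOpen_lt continuous_const hcont).mem_nhds hpos)
              fun z (hz : 0 < cutoff ρ y z) => hz.le))

theorem sum_hess_sq_le_of_isLocalMax (hk : k + 1 ≤ n)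
    (hU : IsOpen U) (hu : ContDiffOn ℝ 2 u U)
    (hsol : ∀ z ∈ U, IsYamabeSolutionAt (k + 1) f u z) (hf₀ : 0 < f₀) (hL : 0 ≤ L)
    (hf : HasC11Bounds f₀ f₁ L f K) (hjet : MapsTo (jet u) U K) (hc : 0 < c)
    (hC1 : HasC1Bounds c C u U) (hx : x ∈ U) (hh : 0 < h) (hstep : IsGoodStep U h C u x)
    (hρ : 0 ≤ ρ) (hη : 0 < cutoff ρ y x) (hv : 0 ≤ discreteLapl h u x)
    (hmax : IsLocalMax (fun z => cutoff ρ y z ^ 2 * discreteLapl h u z) x)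
    (htrace : ((k : ℝ) + 1) * f₁ ^ k * (1 + 16 * C * L) ≤ (newtonT k (conformalHess u x)).trace) :
    ∑ l, ∑ i, hess u x l i ^ 2 ≤ 4 * C *
      (discreteLapl h u x * (24 * ρ ^ 2 / cutoff ρ y x ^ 2 + 4 / cutoff ρ y x) +
      (n * C / c + L) * (4 * ρ * discreteLapl h u x / cutoff ρ y x) +
      (n * C ^ 2 / (2 * c ^ 2) + L) * discreteLapl h u x +
      (n ^ 2 * (1 + C ^ 2 / c) ^ 2 / C + L * (2 * n * (2 + C ^ 2)))) := by
  have hu2 : ∀ z ∈ U, ContDiffAt ℝ 2 u z := fun z hz => hu.contDiffAt (hU.mem_nhds hz)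
  have hw : ContDiffAt ℝ 2 (discreteLapl h u) x :=
    contDiffAt_discreteLapl (hu2 x hx) fun m => hu2 _ (hstep.shift_mem m)
  have hgrad : ∀ i, |discreteLapl h (pd i u) x| ≤
      4 * ρ * discreteLapl h u x / cutoff ρ y x := fun i => by
    rw [← pd_discreteLapl ((hu2 x hx).differentiableAt two_ne_zero)
      fun m => (hu2 _ (hstep.shift_mem m)).differentiableAt two_ne_zero]
    exact abs_pd_le_of_isLocalMax_cutoff_sq_mul hρ hw hη hv hmax i
  have hmain := sum_hess_sq_le hk hU hu hsol hf₀ hL hf hjet hc hC1 hx hh hstep (by positivity)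
    hgrad (dotProduct_hess_mulVec_le_of_isLocalMax_cutoff_sq_mul hw hη hv hmax) htrace
  rwa [abs_of_nonneg hv] at hmain

theorem discreteLapl_sq_le (hstep : IsGoodStep U h C u x) :
    discreteLapl h u x ^ 2 ≤ 2 * n * (∑ l, ∑ i, hess u x l i ^ 2) + 2 := by
  have happrox := sq_le_one_iff_abs_le_one _ |>.2 hstep.abs_discreteLapl_sub_lapl_le
  have hlapl : lapl u x ^ 2 ≤ n * ∑ l, ∑ i, hess u x l i ^ 2 := lapl_sq_le
  nlinarith [sq_nonneg (discreteLapl h u x - 2 * lapl u x)]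

/-- At the maximum either the trace of the Newton tensor is large, and the quadratic term wins,
or `tr A_u`, and with it the Laplacian, is bounded to begin with. -/
theorem exists_cutoff_sq_mul_discreteLapl_le (hk : k + 2 ≤ n) (hU : IsOpen U) (hρ : 0 ≤ ρ)
    (hc : 0 < c) (hC : 0 < C) (hf₀ : 0 < f₀) (hL : 0 ≤ L) (hf : HasC11Bounds f₀ f₁ L f K) :
    ∃ B, 0 ≤ B ∧ ∀ u, ContDiffOn ℝ 2 u U → HasC1Bounds c C u U → MapsTo (jet u) U K →
      (∀ z ∈ U, IsYamabeSolutionAt (k + 2) f u z) → ∀ h > 0, ∀ x ∈ U, IsGoodStep U h C u x →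
      ∀ y, 0 < cutoff ρ y x → IsLocalMax (fun z => cutoff ρ y z ^ 2 * discreteLapl h u z) x →
      cutoff ρ y x ^ 2 * discreteLapl h u x ≤ B := by
  set N := (((k + 1 : ℕ) : ℝ) + 1) * f₁ ^ (k + 1) * (1 + 16 * C * L)
  set Λ := N ^ (k + 1) / (f₀ ^ (k + 2)) ^ k
  set a := 4 * C
  set b₁ := n * C / c + L
  set b₂ := n * C ^ 2 / (2 * c ^ 2) + L
  set b₃ := n ^ 2 * (1 + C ^ 2 / c) ^ 2 / C + L * (2 * n * (2 + C ^ 2))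
  set B₁ := 2 * n * a * (28 * ρ ^ 2 + 4 * b₁ * ρ ^ 3 + b₂ * ρ ^ 4) +
    (2 * n * a * b₃ * ρ ^ 8 + 2 * ρ ^ 8) + 1
  set B₂ := Λ + n * (n * C ^ 2 / (2 * c)) + 1
  have hB₁ : 0 ≤ B₁ := by positivity
  refine ⟨max B₁ (ρ ^ 4 * |B₂|), le_max_of_le_left hB₁,
    fun u hu hC1 hjet hsol h hh x hx hstep y hη hmax => ?_⟩
  have hherm := isHermitian_conformalHess (hu.contDiffAt (hU.mem_nhds hx))
  obtain hv | hv := lt_or_ge (discreteLapl h u x) 0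
  · exact le_max_of_le_left ((mul_nonpos_of_nonneg_of_nonpos (sq_nonneg _) hv.le).trans hB₁)
  obtain htrace | htrace := le_total Λ (conformalHess u x).trace
  · have hσ : f₀ ^ (k + 2) ≤ esymmMat (k + 2) (conformalHess u x) := by
      rw [(hsol x hx).1]
      gcongr
      exact hf.le_apply _ (hjet hx)
    have hN : N ≤ (newtonT (k + 1) (conformalHess u x)).trace :=
      le_trace_newtonT_of_le_trace hherm hk (hsol x hx).2 (by positivity) hσ htrace
    exact le_max_of_le_left (sq_mul_le_of_sq_le_mul_add (by positivity) (by positivity)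
      (by positivity) (by positivity) (by positivity) hρ hη cutoff_le_sq hv
      (discreteLapl_sq_le hstep) (sum_hess_sq_le_of_isLocalMax hk hU hu hsol hf₀ hL hf hjet hc
        hC1 hx hh hstep hρ hη hv hmax hN))
  · have hlapl : discreteLapl h u x ≤ B₂ := by
      have hquot := mul_le_mul_of_nonneg_left (hC1.gradQuot_le hc hx) (n.cast_nonneg (α := ℝ))
      rw [trace_conformalHess] at htrace
      linarith [(abs_le.1 hstep.abs_discreteLapl_sub_lapl_le).2]
    refine le_max_of_le_right ?_
    calc cutoff ρ y x ^ 2 * discreteLapl h u x ≤ (ρ ^ 2) ^ 2 * |B₂| := by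
          gcongr
          exacts [cutoff_le_sq, hlapl.trans (le_abs_self _)]
      _ = ρ ^ 4 * |B₂| := by ring

theorem exists_lapl_le (hk : k + 2 ≤ n) (hU : IsOpen U) (hconv : Convex ℝ U) (hρ : 0 < ρ)
    (hc : 0 < c) (hC : 0 < C) (hf₀ : 0 < f₀) (hL : 0 ≤ L) (hf : HasC11Bounds f₀ f₁ L f K) :
    ∃ T, ∀ u, ContDiffOn ℝ 2 u U → HasC1Bounds c C u U → MapsTo (jet u) U K →
      (∀ z ∈ U, IsYamabeSolutionAt (k + 2) f u z) → ∀ y, closedBall y ρ ⊆ U → lapl u y ≤ T := by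
  obtain ⟨B, hB, hle⟩ := exists_cutoff_sq_mul_discreteLapl_le hk hU hρ.le hc hC hf₀ hL hf
  refine ⟨B / ρ ^ 4 + 1, fun u hu hC1 hjet hsol y hball => ?_⟩
  obtain ⟨h, hh, hstep⟩ := exists_isGoodStep hU hconv (isCompact_closedBall y ρ) hball hu hC1
  have hcont : ContinuousOn (discreteLapl h u) (closedBall y ρ) :=
    continuousOn_discreteLapl hu.continuousOn hball fun z hz => (hstep z hz).shift_mem
  have hmax := pow_four_mul_le_of_forall_isLocalMax hρ.le hB hcont fun x hx =>
    hle u hu hC1 hjet hsol h hh x (hball hx) (hstep x hx) y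
  have hdiscrete : discreteLapl h u y ≤ B / ρ ^ 4 := (le_div_iff₀' (by positivity)).2 hmax
  linarith [(abs_le.1 (hstep y (mem_closedBall_self hρ.le)).abs_discreteLapl_sub_lapl_le).1]

end InteriorEstimate

theorem interior_hessian_estimate_positive_sigmak_yamabe_general
    {n : ℕ} (k : ℕ) (hk2 : 2 ≤ k) (hkn : k ≤ n)
    (Ω : Set (Fin n → ℝ)) (hΩ : IsOpen Ω) (p : ℝ) (hp : n < p)
    (f : ((Fin n → ℝ) × ℝ × (Fin n → ℝ)) → ℝ)
    (hfpos : ∀ y ∈ Ω ×ˢ ((Ioi (0 : ℝ)) ×ˢ (univ : Set (Fin n → ℝ))), 0 < f y)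
    (hf : C11On f (Ω ×ˢ ((Ioi (0 : ℝ)) ×ˢ (univ : Set (Fin n → ℝ)))))
    (x₀ : Fin n → ℝ) (R : ℝ) (hR : 0 < R) (hball : closure (ball x₀ (2 * R)) ⊆ Ω) (M : ℝ) :
    ∃ C : ℝ, ∀ u : (Fin n → ℝ) → ℝ, ContDiffOn ℝ 2 u Ω → (∀ x ∈ Ω, 0 < u x) →
      (∀ x ∈ Ω, IsYamabeSolutionAt k f u x) →
      W2pNorm p (fun x => Real.log (u x)) (ball x₀ (2 * R)) ≤ M →
      ∀ x ∈ ball x₀ R, matNorm (hess u x) ≤ C := by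
  obtain ⟨k, rfl⟩ := Nat.exists_eq_add_of_le' hk2
  have hp₁ : 1 ≤ p := le_trans (by exact_mod_cast show 1 ≤ n by omega) hp.le
  obtain ⟨c, C, hc, hC, hbounds⟩ := exists_c1_bounds_of_W2pNorm_log_le hp₁ hp hΩ hball M
  obtain ⟨f₀, f₁, L, hf₀, hL, hfbounds⟩ := hf.exists_hasC11Bounds
    (K := closedBall x₀ (2 * R) ×ˢ (Icc c C ×ˢ closedBall 0 C))
    (hΩ.prod (isOpen_Ioi.prod isOpen_univ)) hfpos
    ((isCompact_closedBall _ _).prod (isCompact_Icc.prod (isCompact_closedBall _ _)))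
    ((convex_closedBall _ _).prod ((convex_Icc _ _).prod (convex_closedBall _ _)))
    (prod_mono (by rwa [← closure_ball x₀ (by positivity)])
      (prod_mono (fun _ hs => hc.trans_le hs.1) (subset_univ _)))
  obtain ⟨T, hT⟩ := exists_lapl_le hkn isOpen_ball (convex_ball x₀ (2 * R)) (half_pos hR) hc hC
    hf₀ hL hfbounds
  have hsub : ball x₀ (2 * R) ⊆ Ω := subset_closure.trans hball
  refine ⟨n * (n * (T + n * C ^ 2 / (2 * c))), fun u hu hpos hsol hM x hx => ?_⟩
  have hC1 : HasC1Bounds c C u (ball x₀ (2 * R)) := hbounds u hu hpos hM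
  have hxU : closedBall x (R / 2) ⊆ ball x₀ (2 * R) := closedBall_subset_ball' (by
    linarith [mem_ball.1 hx])
  have hx₂ : x ∈ ball x₀ (2 * R) := hxU (mem_closedBall_self (by positivity))
  exact hC1.matNorm_hess_le (by omega) hc hx₂ (hu.contDiffAt (hΩ.mem_nhds (hsub hx₂)))
    (fun j hj hj2 => (hsol x (hsub hx₂)).2 j hj (by omega))
    (hT u (hu.mono hsub) hC1 (hC1.mapsTo_jet.mono_right
      (prod_mono ball_subset_closedBall le_rfl)) (fun z hz => hsol z (hsub hz)) x hxU)

/-- Interior Hessian estimate for the positive `σ_k`-Yamabe equation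
(a priori form of Theorem 1.1). -/
theorem interior_hessian_estimate_positive_sigmak_yamabe
    {n : ℕ} (hn : 3 ≤ n) (k : ℕ) (hk2 : 2 ≤ k) (hkn : k ≤ n)
    (Ω : Set (Fin n → ℝ)) (hΩ : IsOpen Ω)
    (p : ℝ) (hp : (k * n : ℝ) / 2 < p)
    (f : ((Fin n → ℝ) × ℝ × (Fin n → ℝ)) → ℝ)
    (hfpos : ∀ y ∈ Ω ×ˢ ((Ioi (0 : ℝ)) ×ˢ (univ : Set (Fin n → ℝ))), 0 < f y)
    (hf : C11On f (Ω ×ˢ ((Ioi (0 : ℝ)) ×ˢ (univ : Set (Fin n → ℝ)))))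
    (x₀ : Fin n → ℝ) (R : ℝ) (hR : 0 < R)
    (hball : closure (ball x₀ (2 * R)) ⊆ Ω)
    (M : ℝ) (hM : 0 < M) :
    ∃ C : ℝ, ∀ u : (Fin n → ℝ) → ℝ,
      ContDiffOn ℝ 2 u Ω →
      (∀ x ∈ Ω, 0 < u x) →
      (∀ x ∈ Ω,
        esymmMat k (hess u x -
            (normSq (grad u x) / (2 * u x)) • (1 : Matrix (Fin n) (Fin n) ℝ))
          = f (x, u x, grad u x) ^ k ∧
        GammaPlus k (hess u x -
            (normSq (grad u x) / (2 * u x)) • (1 : Matrix (Fin n) (Fin n) ℝ))) →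
      W2pNorm p (fun x => Real.log (u x)) (ball x₀ (2 * R)) ≤ M →
      ∀ x ∈ ball x₀ R, matNorm (hess u x) ≤ C := by
  have hnp : (n : ℝ) < p := lt_of_le_of_lt (by
    rw [le_div_iff₀ two_pos, mul_comm]
    gcongr
    exact_mod_cast hk2) hp
  exact interior_hessian_estimate_positive_sigmak_yamabe_general k hk2 hkn Ω hΩ p hnp f hfpos hf
    x₀ R hR hball M
end

section
/- Divergence formula for the linearised operator (Lemma 3.1, identity (15)). Let Ω ⊆ ℝⁿ be a domain with n ≥ 3, let u ∈ C³(Ω), let H : Ω×ℝ×ℝⁿ → Sym_n(ℝ) be C¹, and let 2 ≤ k ≤ n. Then at every point of Ω and for every index j, Σ_i ∂_i(F[u]^{ij}) = Σ_{p=1}^{k−1} (−1)^{p+1} Σ_{a,b,c} T_{k−p−1}(A_H[u])_{ab} · (∂_a((H[u])_{cb}) − ∂_c((H[u])_{ab})) · ((A_H[u])^{p−1})_{cj}, where ∂_i denotes the i-th partial derivative of the indicated composite function of x and (A_H[u])^{p−1} is the (p−1)-st matrix power. -/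
open MeasureTheory Metric Set Matrix

/-!
The coefficients of `adj (X - A)` are, up to sign, the Newton tensors of `A`, since both satisfy the
recursion read off from `adj (X - A) * (X - A) = χ_A`. Jacobi's formula for the determinant
therefore gives `dσ_{m+1}(A) = tr (T_m(A) dA)`. Inserting this into `T_{m+1} = σ_{m+1} I - T_m A`
shows that the divergence `d_m` of `T_m` satisfies `d_{m+1} = c_m - d_m A`, where `c_m` pairs `T_m`
with the curl of the rows of the field `A`; unrolling this produces the alternating sum of powers of
`A`. When `A = ∇²u - h`, the rows of `∇²u` are gradients, so only `h` contributes to the curl.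
-/

open Polynomial Topology

section MatrixAdjugate

variable {ι R : Type*} [Fintype ι] [DecidableEq ι] [CommRing R]

lemma sum_adjugate_mul_eq_det_updateRow (A : Matrix ι ι R) (i : ι) (b : ι → R) :
    ∑ j, A.adjugate j i * b j = (A.updateRow i b).det := by
  rw [← cramer_transpose_apply, cramer_eq_adjugate_mulVec, ← adjugate_transpose]
  rfl

/-- The adjugate of the characteristic matrix `X - A`, regarded as a polynomial with matrix
coefficients. Its coefficients are, up to sign, the Newton tensors of `A`. -/
noncomputable def charAdjugate (A : Matrix ι ι R) : (Matrix ι ι R)[X] :=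
  matPolyEquiv A.charmatrix.adjugate

lemma charAdjugate_mul_X_sub_C (A : Matrix ι ι R) :
    charAdjugate A * (X - C A) = A.charpoly.map (algebraMap R (Matrix ι ι R)) := by
  rw [charAdjugate, ← matPolyEquiv_charmatrix, ← map_mul, adjugate_mul, matPolyEquiv_smul_one,
    charpoly]

lemma charAdjugate_coeff_eq (A : Matrix ι ι R) (k : ℕ) :
    (charAdjugate A).coeff k =
      A.charpoly.coeff (k + 1) • (1 : Matrix ι ι R) + (charAdjugate A).coeff (k + 1) * A := by
  have h := congrArg (fun p => p.coeff (k + 1)) (charAdjugate_mul_X_sub_C A)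
  simp only [coeff_mul_X_sub_C, coeff_map, Algebra.algebraMap_eq_smul_one] at h
  exact sub_eq_iff_eq_add.mp h

lemma degree_charAdjugate_lt (A : Matrix ι ι R) : (charAdjugate A).degree < Fintype.card ι := by
  nontriviality Matrix ι ι R
  have : Nontrivial R := (algebraMap R (Matrix ι ι R)).domain_nontrivial
  have hdeg : (charAdjugate A).degree + 1 ≤ Fintype.card ι := by
    rw [← degree_X_sub_C A, ← (monic_X_sub_C A).degree_mul, charAdjugate_mul_X_sub_C,
      ← A.charpoly_degree_eq_dim]
    exact degree_map_le
  cases h : (charAdjugate A).degree with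
  | bot => exact WithBot.bot_lt_coe _
  | coe d =>
    rw [h] at hdeg
    exact WithBot.coe_lt_coe.mpr (WithBot.coe_le_coe.mp hdeg)

lemma charAdjugate_coeff_eq_zero (A : Matrix ι ι R) {k : ℕ} (hk : Fintype.card ι ≤ k) :
    (charAdjugate A).coeff k = 0 :=
  (degree_lt_iff_coeff_zero _ _).mp (degree_charAdjugate_lt A) k hk

lemma adjugate_scalar_sub_apply (A : Matrix ι ι R) (t : R) (i j : ι) {N : ℕ}
    (hN : Fintype.card ι < N) :
    (scalar ι t - A).adjugate i j =
      ∑ k ∈ Finset.range N, t ^ k * (charAdjugate A).coeff k i j := by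
  have hmap : (evalRingHom t).mapMatrix A.charmatrix = scalar ι t - A := by
    ext a b
    by_cases h : a = b <;> simp [h]
  have hdeg : (A.charmatrix.adjugate i j).natDegree ≤ Fintype.card ι := by
    refine natDegree_le_iff_coeff_eq_zero.mpr fun k hk => ?_
    rw [← matPolyEquiv_coeff_apply]
    exact congrFun₂ (charAdjugate_coeff_eq_zero A hk.le) i j
  calc (scalar ι t - A).adjugate i j = (A.charmatrix.adjugate i j).eval t := by
        rw [← hmap, ← RingHom.map_adjugate]
        rfl
    _ = ∑ k ∈ Finset.range N, t ^ k * (charAdjugate A).coeff k i j := by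
        simp [eval_eq_sum_range' (hdeg.trans_lt hN), charAdjugate, mul_comm]

end MatrixAdjugate

section MatrixCalculus

variable {𝕜 E ι : Type*} [NontriviallyNormedField 𝕜] [NormedAddCommGroup E] [NormedSpace 𝕜 E]
  [Fintype ι] {x : E}

lemma differentiableAt_mul_apply {A B : E → Matrix ι ι 𝕜}
    (hA : ∀ i j, DifferentiableAt 𝕜 (fun y => A y i j) x)
    (hB : ∀ i j, DifferentiableAt 𝕜 (fun y => B y i j) x) (i j : ι) :
    DifferentiableAt 𝕜 (fun y => (A y * B y) i j) x := by
  simp only [Matrix.mul_apply]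
  exact .fun_sum fun c _ => (hA i c).fun_mul (hB c j)

variable [DecidableEq ι]

lemma hasFDerivAt_det {A : E → Matrix ι ι 𝕜} {A' : Matrix ι ι (E →L[𝕜] 𝕜)}
    (hA : ∀ i j, HasFDerivAt (fun y => A y i j) (A' i j) x) :
    HasFDerivAt (fun y => (A y).det) (∑ i, ∑ j, (A x).adjugate i j • A' j i) x := by
  let detRow : ContinuousMultilinearMap 𝕜 (fun _ : ι => ι → 𝕜) 𝕜 :=
    { (detRowAlternating : (ι → 𝕜) [⋀^ι]→ₗ[𝕜] 𝕜).toMultilinearMap with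
      cont := Continuous.matrix_det continuous_id }
  have hrow (i : ι) : HasFDerivAt (fun y => A y i) (ContinuousLinearMap.pi (A' i)) x :=
    hasFDerivAt_pi.mpr (hA i)
  refine (HasFDerivAt.multilinear_comp detRow hrow).congr_fderiv ?_
  ext v
  rw [Finset.sum_comm]
  simp only [_root_.sum_apply, _root_.smul_apply, smul_eq_mul, sum_adjugate_mul_eq_det_updateRow]
  rfl

lemma coeff_eq_sum_eval_mul_coeff_basis {K : Type*} [Field K] [DecidableEq K] {p : K[X]}
    {s : Finset K} (hp : p.degree < s.card) (k : ℕ) :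
    p.coeff k = ∑ t ∈ s, p.eval t * (Lagrange.basis s id t).coeff k := by
  conv_lhs => rw [Lagrange.eq_interpolate (injOn_id (s : Set K)) hp]
  simp [Lagrange.interpolate_apply, finsetSum_coeff]

lemma hasFDerivAt_coeff_of_hasFDerivAt_eval {p : E → 𝕜[X]} {p' : ℕ → E →L[𝕜] 𝕜} {N : ℕ}
    (hdeg : ∀ y, (p y).degree < N)
    (hp : ∀ t, HasFDerivAt (fun y => (p y).eval t) (∑ k ∈ Finset.range N, t ^ k • p' k) x)
    {k : ℕ} (hk : k < N) :
    HasFDerivAt (fun y => (p y).coeff k) (p' k) x := by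
  classical
  have : Infinite 𝕜 := NontriviallyNormedField.infinite 𝕜
  obtain ⟨s, rfl⟩ := Infinite.exists_subset_card_eq 𝕜 N
  -- By interpolation a coefficient is a fixed linear combination of values.
  simp only [fun y => coeff_eq_sum_eval_mul_coeff_basis (hdeg y) k]
  refine (HasFDerivAt.fun_sum fun t _ =>
    (hp t).mul_const ((Lagrange.basis s id t).coeff k)).congr_fderiv ?_
  ext v
  let q : 𝕜[X] := ∑ i ∈ Finset.range s.card, monomial i (p' i v)
  have hq_coeff (i : ℕ) : q.coeff i = if i < s.card then p' i v else 0 := by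
    simp [q, finsetSum_coeff, coeff_monomial]
  have hq_degree : q.degree < s.card :=
    (degree_lt_iff_coeff_zero _ _).mpr fun i hi => by rw [hq_coeff, if_neg hi.not_gt]
  have hq_eval (t : 𝕜) : q.eval t = ∑ i ∈ Finset.range s.card, t ^ i * p' i v := by
    simp [q, eval_finsetSum, mul_comm]
  have hinterp := coeff_eq_sum_eval_mul_coeff_basis hq_degree k
  simp only [hq_coeff, if_pos hk, hq_eval] at hinterp
  simp [hinterp, mul_comm]

lemma hasFDerivAt_charpoly_coeff {A : E → Matrix ι ι 𝕜} {A' : Matrix ι ι (E →L[𝕜] 𝕜)}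
    (hA : ∀ i j, HasFDerivAt (fun y => A y i j) (A' i j) x) {k : ℕ} (hk : k ≤ Fintype.card ι) :
    HasFDerivAt (fun y => (A y).charpoly.coeff k)
      (-∑ i, ∑ j, (charAdjugate (A x)).coeff k i j • A' j i) x := by
  refine hasFDerivAt_coeff_of_hasFDerivAt_eval (N := Fintype.card ι + 1)
    (p' := fun k => -∑ i, ∑ j, (charAdjugate (A x)).coeff k i j • A' j i)
    (fun y => ?_) (fun t => ?_) (Nat.lt_succ_of_le hk)
  · rw [charpoly_degree_eq_dim]
    exact_mod_cast Nat.lt_succ_self _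
  · have hentry (i j : ι) : HasFDerivAt (fun y => (scalar ι t - A y) i j) (-A' i j) x :=
      (hA i j).const_sub (scalar ι t i j)
    simp only [eval_charpoly]
    refine (hasFDerivAt_det (A' := -A') hentry).congr_fderiv ?_
    ext v
    simp only [adjugate_scalar_sub_apply (A x) t _ _ (Nat.lt_succ_self _), Matrix.neg_apply,
      smul_neg, _root_.sum_apply, _root_.neg_apply, _root_.smul_apply, smul_eq_mul,
      Finset.sum_neg_distrib, Finset.sum_mul, Finset.mul_sum, mul_assoc]
    rw [Finset.sum_comm (s := Finset.range _)]
    exact congrArg Neg.neg (Finset.sum_congr rfl fun i _ => Finset.sum_comm)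

end MatrixCalculus

section NewtonTensor

variable {n m : ℕ}

lemma charAdjugate_coeff_eq_newtonT (A : Matrix (Fin n) (Fin n) ℝ) (hm : m < n) :
    (charAdjugate A).coeff (n - (m + 1)) = (-1 : ℝ) ^ m • newtonT m A := by
  induction m with
  | zero =>
    have hn : n - (0 + 1) + 1 = n := by omega
    have htop : (charAdjugate A).coeff n = 0 :=
      charAdjugate_coeff_eq_zero A (Fintype.card_fin n).le
    have hlead : A.charpoly.coeff n = 1 := by
      simpa [Monic, leadingCoeff] using A.charpoly_monic
    rw [charAdjugate_coeff_eq, hn, htop, hlead]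
    simp [newtonT]
  | succ m ih =>
    have hn : n - (m + 1 + 1) + 1 = n - (m + 1) := by omega
    have hsign : (-1 : ℝ) ^ (m + 1) * (-1) ^ (m + 1) = 1 := by simp [← mul_pow]
    rw [charAdjugate_coeff_eq, hn, ih (by omega), newtonT, esymmMat, smul_sub, smul_smul,
      ← mul_assoc, hsign, one_mul, Matrix.smul_mul, pow_succ, mul_neg_one, neg_smul, sub_neg_eq_add]

variable {E : Type*} [NormedAddCommGroup E] [NormedSpace ℝ E] {x : E}
  {A : E → Matrix (Fin n) (Fin n) ℝ}

lemma hasFDerivAt_esymmMat {A' : Matrix (Fin n) (Fin n) (E →L[ℝ] ℝ)}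
    (hA : ∀ a b, HasFDerivAt (fun y => A y a b) (A' a b) x) (hm : m < n) :
    HasFDerivAt (fun y => esymmMat (m + 1) (A y))
      (∑ a, ∑ b, newtonT m (A x) a b • A' b a) x := by
  have hk : n - (m + 1) ≤ Fintype.card (Fin n) := by simp
  have hsign : (-1 : ℝ) ^ m * (-1) ^ m = 1 := by simp [← mul_pow]
  refine ((hasFDerivAt_charpoly_coeff hA hk).const_mul ((-1) ^ (m + 1))).congr_fderiv ?_
  simp only [charAdjugate_coeff_eq_newtonT _ hm, Matrix.smul_apply, smul_eq_mul, mul_smul,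
    ← Finset.smul_sum]
  rw [pow_succ, mul_neg_one, neg_smul_neg, smul_smul, hsign, one_smul]

lemma differentiableAt_newtonT (hA : ∀ a b, DifferentiableAt ℝ (fun y => A y a b) x)
    (hm : m ≤ n) (a b : Fin n) : DifferentiableAt ℝ (fun y => newtonT m (A y) a b) x := by
  induction m generalizing a b with
  | zero => exact differentiableAt_const _
  | succ m ih =>
    have hσ := (hasFDerivAt_esymmMat (fun a b => (hA a b).hasFDerivAt) hm).differentiableAt
    exact (hσ.mul_const _).fun_sub (differentiableAt_mul_apply (ih (by omega)) hA a b)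

end NewtonTensor

section PartialDerivative

variable {n : ℕ} {f g : (Fin n → ℝ) → ℝ} {x : Fin n → ℝ}

lemma pd_congr_of_eventuallyEq (h : f =ᶠ[𝓝 x] g) (i : Fin n) : pd i f x = pd i g x := by
  rw [pd, pd, h.fderiv_eq]

lemma pd_sub (hf : DifferentiableAt ℝ f x) (hg : DifferentiableAt ℝ g x) (i : Fin n) :
    pd i (fun y => f y - g y) x = pd i f x - pd i g x := by
  simp [pd, fderiv_fun_sub hf hg]

lemma pd_mul (hf : DifferentiableAt ℝ f x) (hg : DifferentiableAt ℝ g x) (i : Fin n) :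
    pd i (fun y => f y * g y) x = pd i f x * g x + f x * pd i g x := by
  simp [pd, fderiv_fun_mul hf hg, mul_comm, add_comm]

lemma pd_sum {κ : Type*} {s : Finset κ} {f : κ → (Fin n → ℝ) → ℝ}
    (hf : ∀ c ∈ s, DifferentiableAt ℝ (f c) x) (i : Fin n) :
    pd i (fun y => ∑ c ∈ s, f c y) x = ∑ c ∈ s, pd i (f c) x := by
  simp [pd, fderiv_fun_sum hf]

lemma contDiffAt_pd {r s : WithTop ℕ∞} (hf : ContDiffAt ℝ s f x) (h : r + 1 ≤ s) (i : Fin n) :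
    ContDiffAt ℝ r (pd i f) x :=
  (hf.fderiv_right h).clm_apply contDiffAt_const

lemma contDiffAt_grad {r s : WithTop ℕ∞} (hf : ContDiffAt ℝ s f x) (h : r + 1 ≤ s) :
    ContDiffAt ℝ r (grad f) x :=
  contDiffAt_pi.mpr fun i => contDiffAt_pd hf h i

lemma differentiableAt_comp_jet {F : (Fin n → ℝ) × ℝ × (Fin n → ℝ) → ℝ}
    (hf : ContDiffAt ℝ 2 f x) (hF : DifferentiableAt ℝ F (x, f x, grad f x)) :
    DifferentiableAt ℝ (fun y => F (y, f y, grad f y)) x := by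
  have hjet : DifferentiableAt ℝ (fun y => (y, f y, grad f y)) x :=
    differentiableAt_id.prodMk ((hf.differentiableAt two_ne_zero).prodMk
      ((contDiffAt_grad hf (r := 1) le_rfl).differentiableAt one_ne_zero))
  exact hF.comp x hjet

lemma pd_comm (hf : ContDiffAt ℝ 2 f x) (i j : Fin n) : pd i (pd j f) x = pd j (pd i f) x := by
  have hd : DifferentiableAt ℝ (fderiv ℝ f) x :=
    (hf.fderiv_right (m := 1) le_rfl).differentiableAt one_ne_zero
  have hsnd (i j : Fin n) :
      pd i (pd j f) x = fderiv ℝ (fderiv ℝ f) x (Pi.single i 1) (Pi.single j 1) := by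
    change fderiv ℝ (fun y => fderiv ℝ f y (Pi.single j 1)) x (Pi.single i 1) = _
    simp [fderiv_clm_apply hd (differentiableAt_const _)]
  rw [hsnd, hsnd, hf.isSymmSndFDerivAt (by simp)]

lemma differentiableAt_hess (hf : ContDiffAt ℝ 3 f x) (a b : Fin n) :
    DifferentiableAt ℝ (fun y => hess f y a b) x :=
  (contDiffAt_pd (contDiffAt_pd hf (r := 2) (by norm_num) b) (r := 1) (by norm_num)
    a).differentiableAt one_ne_zero

lemma pd_hess_comm (hf : ContDiffAt ℝ 3 f x) (a b c : Fin n) :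
    pd a (fun y => hess f y b c) x = pd c (fun y => hess f y b a) x := by
  have hsymm (c : Fin n) : pd b (pd c f) =ᶠ[𝓝 x] pd c (pd b f) :=
    (hf.eventually (by simp)).mono fun y hy => pd_comm (hy.of_le (by norm_num)) b c
  calc pd a (pd b (pd c f)) x
      = pd a (pd c (pd b f)) x := pd_congr_of_eventuallyEq (hsymm c) a
    _ = pd c (pd a (pd b f)) x := pd_comm (contDiffAt_pd hf (by norm_num) b) a c
    _ = pd c (pd b (pd a f)) x := (pd_congr_of_eventuallyEq (hsymm a) c).symm

end PartialDerivative

lemma eq_sum_vecMul_pow_of_succ_eq_sub {ι R : Type*} [Fintype ι] [DecidableEq ι] [Ring R]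
    (A : Matrix ι ι R) {c d : ℕ → ι → R} (hd0 : d 0 = 0) {m : ℕ}
    (hd : ∀ i < m, d (i + 1) = c i - d i ᵥ* A) :
    d m = ∑ p ∈ Finset.range m, (-1 : R) ^ p • (c (m - 1 - p) ᵥ* A ^ p) := by
  induction m with
  | zero => exact hd0
  | succ m ih =>
    rw [hd m m.lt_succ_self, ih fun i hi => hd i (by omega), Finset.sum_range_succ',
      sub_eq_neg_add, sum_vecMul, ← Finset.sum_neg_distrib]
    congr 1
    · refine Finset.sum_congr rfl fun p _ => ?_
      have hp : m + 1 - 1 - (p + 1) = m - 1 - p := by omega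
      rw [hp, smul_vecMul, vecMul_vecMul, pow_succ, pow_succ, mul_neg_one, neg_smul]
    · simp

section MatrixDivergence

variable {n : ℕ} {A M N : (Fin n → ℝ) → Matrix (Fin n) (Fin n) ℝ} {x : Fin n → ℝ}

/-- The divergence `j ↦ ∑ i, ∂_i M_ij` of a matrix field, taken down the columns. -/
noncomputable def matDiv (M : (Fin n → ℝ) → Matrix (Fin n) (Fin n) ℝ) (x : Fin n → ℝ) : Fin n → ℝ :=
  fun j => ∑ i, pd i (fun y => M y i j) x

/-- The contraction `j ↦ ∑ a b, T_ab (∂_j M_ba - ∂_a M_bj)` of a matrix with the curls of the rows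
of a matrix field. -/
noncomputable def curlContraction (T : Matrix (Fin n) (Fin n) ℝ)
    (M : (Fin n → ℝ) → Matrix (Fin n) (Fin n) ℝ) (x : Fin n → ℝ) : Fin n → ℝ :=
  fun j => ∑ a, ∑ b, T a b * (pd j (fun y => M y b a) x - pd a (fun y => M y b j) x)

lemma matDiv_sub (hM : ∀ a b, DifferentiableAt ℝ (fun y => M y a b) x)
    (hN : ∀ a b, DifferentiableAt ℝ (fun y => N y a b) x) :
    matDiv (fun y => M y - N y) x = matDiv M x - matDiv N x := by
  ext j
  simp [matDiv, pd_sub (hM _ j) (hN _ j)]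

lemma matDiv_smul_one {f : (Fin n → ℝ) → ℝ} (hf : DifferentiableAt ℝ f x) :
    matDiv (fun y => f y • (1 : Matrix (Fin n) (Fin n) ℝ)) x = grad f x := by
  ext j
  simp only [matDiv, Matrix.smul_apply, smul_eq_mul, pd_mul hf (differentiableAt_const _)]
  simp [grad, pd, Matrix.one_apply]

lemma matDiv_mul (hM : ∀ a b, DifferentiableAt ℝ (fun y => M y a b) x)
    (hN : ∀ a b, DifferentiableAt ℝ (fun y => N y a b) x) :
    matDiv (fun y => M y * N y) x =
      matDiv M x ᵥ* N x + fun j => ∑ a, ∑ b, M x a b * pd a (fun y => N y b j) x := by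
  ext j
  simp only [matDiv, Matrix.mul_apply, vecMul, dotProduct, Pi.add_apply, Finset.sum_mul,
    pd_sum fun c _ => (hM _ c).fun_mul (hN c j), pd_mul (hM _ _) (hN _ j),
    Finset.sum_add_distrib]
  rw [Finset.sum_comm]

lemma curlContraction_hess_sub {u : (Fin n → ℝ) → ℝ} {h : (Fin n → ℝ) → Matrix (Fin n) (Fin n) ℝ}
    (T : Matrix (Fin n) (Fin n) ℝ) (hu : ContDiffAt ℝ 3 u x)
    (hh : ∀ a b, DifferentiableAt ℝ (fun y => h y a b) x) :
    curlContraction T (fun y => hess u y - h y) x = -curlContraction T h x := by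
  ext c
  simp only [curlContraction, Matrix.sub_apply, pd_sub (differentiableAt_hess hu _ _) (hh _ _),
    pd_hess_comm hu c _ _, Pi.neg_apply, ← Finset.sum_neg_distrib]
  refine Finset.sum_congr rfl fun a _ => Finset.sum_congr rfl fun b _ => ?_
  ring

lemma neg_curlContraction_of_eventually_isSymm {h : (Fin n → ℝ) → Matrix (Fin n) (Fin n) ℝ}
    (T : Matrix (Fin n) (Fin n) ℝ) (hh : ∀ᶠ y in 𝓝 x, (h y).IsSymm) :
    -curlContraction T h x = fun c =>
      ∑ a, ∑ b, T a b * (pd a (fun y => h y c b) x - pd c (fun y => h y a b) x) := by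
  have hswap (i a b : Fin n) : pd i (fun y => h y a b) x = pd i (fun y => h y b a) x :=
    pd_congr_of_eventuallyEq (hh.mono fun y hy => hy.apply b a) i
  ext c
  simp only [curlContraction, Pi.neg_apply, ← Finset.sum_neg_distrib, ← mul_neg, neg_sub]
  refine Finset.sum_congr rfl fun a _ => Finset.sum_congr rfl fun b _ => ?_
  rw [hswap a b c, hswap c b a]

lemma matDiv_newtonT_succ (hA : ∀ a b, DifferentiableAt ℝ (fun y => A y a b) x) {m : ℕ}
    (hm : m < n) :
    matDiv (fun y => newtonT (m + 1) (A y)) x =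
      curlContraction (newtonT m (A x)) A x - matDiv (fun y => newtonT m (A y)) x ᵥ* A x := by
  have hσ := hasFDerivAt_esymmMat (fun a b => (hA a b).hasFDerivAt) hm
  have hT := differentiableAt_newtonT hA hm.le
  have hgrad : grad (fun y => esymmMat (m + 1) (A y)) x =
      fun j => ∑ a, ∑ b, newtonT m (A x) a b * pd j (fun y => A y b a) x := by
    ext j
    simp [grad, pd, hσ.fderiv]
  have hσI (a b : Fin n) : DifferentiableAt ℝ
      (fun y => (esymmMat (m + 1) (A y) • (1 : Matrix (Fin n) (Fin n) ℝ)) a b) x :=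
    hσ.differentiableAt.mul_const _
  simp only [newtonT]
  rw [matDiv_sub hσI (differentiableAt_mul_apply hT hA),
    matDiv_smul_one hσ.differentiableAt, matDiv_mul hT hA, hgrad, add_comm, ← sub_sub]
  congr 1
  ext j
  simp [curlContraction, mul_sub, Finset.sum_sub_distrib]

lemma matDiv_newtonT (hA : ∀ a b, DifferentiableAt ℝ (fun y => A y a b) x) {m : ℕ}
    (hm : m ≤ n) :
    matDiv (fun y => newtonT m (A y)) x =
      ∑ p ∈ Finset.range m,
        (-1 : ℝ) ^ p • (curlContraction (newtonT (m - 1 - p) (A x)) A x ᵥ* A x ^ p) := by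
  refine eq_sum_vecMul_pow_of_succ_eq_sub (A x) (d := fun m => matDiv (fun y => newtonT m (A y)) x)
    (c := fun m => curlContraction (newtonT m (A x)) A x) ?_
    fun i hi => matDiv_newtonT_succ hA (hi.trans_le hm)
  ext j
  simp [matDiv, newtonT, pd]

end MatrixDivergence

theorem divergence_formula_linearised_operator_general {n k : ℕ} (hk : k ≤ n + 1)
    {u : (Fin n → ℝ) → ℝ} {h : (Fin n → ℝ) → Matrix (Fin n) (Fin n) ℝ} {x : Fin n → ℝ}
    (hu : ContDiffAt ℝ 3 u x) (hh : ∀ a b, DifferentiableAt ℝ (fun y => h y a b) x)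
    (hsymm : ∀ᶠ y in 𝓝 x, (h y).IsSymm) (j : Fin n) :
    ∑ i, pd i (fun y => newtonT (k - 1) (hess u y - h y) i j) x =
      ∑ p ∈ Finset.Icc 1 (k - 1), (-1 : ℝ) ^ (p + 1) *
        ∑ a, ∑ b, ∑ c, newtonT (k - p - 1) (hess u x - h x) a b *
          (pd a (fun y => h y c b) x - pd c (fun y => h y a b) x) *
          ((hess u x - h x) ^ (p - 1)) c j := by
  have hA (a b : Fin n) : DifferentiableAt ℝ (fun y => (hess u y - h y) a b) x :=
    (differentiableAt_hess hu a b).fun_sub (hh a b)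
  have hdiv := congrFun (matDiv_newtonT hA (m := k - 1) (by omega)) j
  simp only [curlContraction_hess_sub _ hu hh, neg_curlContraction_of_eventually_isSymm _ hsymm,
    Finset.sum_apply, Pi.smul_apply, vecMul, dotProduct, smul_eq_mul] at hdiv
  rw [Finset.range_eq_Ico, ← Finset.sum_Ico_add_right_sub_eq 0 (k - 1) 1, zero_add,
    Finset.Ico_add_one_right_eq_Icc] at hdiv
  refine hdiv.trans (Finset.sum_congr rfl fun p hp => ?_)
  have hp1 : 1 ≤ p := (Finset.mem_Icc.mp hp).1
  have hindex : k - 1 - 1 - (p - 1) = k - p - 1 := by omega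
  have hsign : (-1 : ℝ) ^ (p - 1) = (-1) ^ (p + 1) := by
    rw [show p + 1 = p - 1 + 2 by omega, pow_add, neg_one_sq, mul_one]
  rw [hindex, hsign]
  simp only [Finset.sum_mul]
  rw [Finset.sum_comm]
  exact congrArg _ (Finset.sum_congr rfl fun a _ => Finset.sum_comm)

/-- Divergence formula for the linearised operator
(Lemma 3.1, identity (15)). -/
theorem divergence_formula_linearised_operator
    {n : ℕ} (hn : 3 ≤ n) (k : ℕ) (hk2 : 2 ≤ k) (hkn : k ≤ n)
    (Ω : Set (Fin n → ℝ)) (hΩ : IsOpen Ω)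
    (u : (Fin n → ℝ) → ℝ) (hu : ContDiffOn ℝ 3 u Ω)
    (H : ((Fin n → ℝ) × ℝ × (Fin n → ℝ)) → Matrix (Fin n) (Fin n) ℝ)
    (hH : ∀ i j : Fin n,
      ContDiffOn ℝ 1 (fun y => H y i j) (Ω ×ˢ ((univ : Set ℝ) ×ˢ (univ : Set (Fin n → ℝ)))))
    (hHsymm : ∀ y ∈ Ω ×ˢ ((univ : Set ℝ) ×ˢ (univ : Set (Fin n → ℝ))), (H y).IsSymm) :
    ∀ x ∈ Ω, ∀ j : Fin n,
      ∑ i, pd i (fun y => newtonT (k - 1) (hess u y - H (y, u y, grad u y)) i j) x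
        = ∑ p ∈ Finset.Icc 1 (k - 1), (-1 : ℝ) ^ (p + 1) *
            ∑ a, ∑ b, ∑ c,
              newtonT (k - p - 1) (hess u x - H (x, u x, grad u x)) a b *
                (pd a (fun y => H (y, u y, grad u y) c b) x
                  - pd c (fun y => H (y, u y, grad u y) a b) x) *
                ((hess u x - H (x, u x, grad u x)) ^ (p - 1)) c j := by
  intro x hx j
  have hΩx : Ω ∈ 𝓝 x := hΩ.mem_nhds hx
  have hux : ContDiffAt ℝ 3 u x := hu.contDiffAt hΩx
  have hdom : Ω ×ˢ ((univ : Set ℝ) ×ˢ (univ : Set (Fin n → ℝ))) ∈ 𝓝 (x, u x, grad u x) :=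
    prod_mem_nhds hΩx (by simp)
  refine divergence_formula_linearised_operator_general (by omega) hux (fun a b => ?_)
    (Filter.eventually_of_mem hΩx fun y hy => hHsymm _ (by simp [hy])) j
  exact differentiableAt_comp_jet (hux.of_le (by norm_num))
    (((hH a b).contDiffAt hdom).differentiableAt one_ne_zero)
end
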